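/- arXiv:1301.4446 — 2 statements merged into one kernel-verified Lean document; each statement's English description precedes it below -/
import Mathlib

section
/- Let G be a finitely generated Coxeter group. Then Out(G) is residually finite and virtually torsion-free (i.e. Out(G) has a finite-index subgroup containing no nontrivial element of finite order). -/
section Defs

variable (G : Type*) [Group G]

/-- The subgroup of inner automorphisms of `G`. -/
def Inn : Subgroup (MulAut G) := (MulAut.conj : G →* MulAut G).range

instance Inn.normal : (Inn G).Normal := by
  constructor
  intro n hn φ
  obtain ⟨g, rfl⟩ := hn
  refine ⟨φ g, ?_⟩
  ext x
  simp only [MulAut.conj_apply, MulAut.mul_apply, map_mul, map_inv, MulAut.inv_def,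
    MulEquiv.apply_symm_apply]

/-- The outer automorphism group `Out(G) = Aut(G)/Inn(G)`. -/
def Out := MulAut G ⧸ Inn G

instance : Group (Out G) := inferInstanceAs (Group (MulAut G ⧸ Inn G))

/-- The canonical projection `Aut(G) → Out(G)`. -/
def outProj : MulAut G →* Out G := QuotientGroup.mk' (Inn G)

/-- A surjective homomorphism `f : A → B` splits virtually if it admits a section on some
finite-index subgroup of `B`. -/
def SplitsVirtually {A B : Type*} [Group A] [Group B] (f : A →* B) : Prop :=
  ∃ B' : Subgroup B, B'.FiniteIndex ∧ ∃ s : (↥B') →* A, ∀ x : B', f (s x) = (x : B)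

/-- A group is residually finite if every nontrivial element survives in some finite quotient. -/
def ResiduallyFinite (G : Type*) [Group G] : Prop :=
  ∀ g : G, g ≠ 1 → ∃ (F : Type) (_ : Group F) (_ : Finite F) (φ : G →* F), φ g ≠ 1

/-- A group is residually `p` if every nontrivial element survives in some finite `p`-group
quotient. -/
def ResiduallyP (p : ℕ) (G : Type*) [Group G] : Prop :=
  ∀ g : G, g ≠ 1 →
    ∃ (F : Type) (_ : Group F) (_ : Finite F) (φ : G →* F), IsPGroup p F ∧ φ g ≠ 1

/-- A group is virtually residually `p` if some finite-index subgroup is residually `p`. -/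
def VirtuallyResiduallyP (p : ℕ) (G : Type*) [Group G] : Prop :=
  ∃ K : Subgroup G, K.FiniteIndex ∧ ResiduallyP p ↥K

/-- `Aut_{H̲}(G)`: the subgroup of automorphisms of `G` fixing `H` pointwise. -/
def autFix (H : Subgroup G) : Subgroup (MulAut G) where
  carrier := {φ | ∀ h ∈ H, φ h = h}
  one_mem' := fun _ _ => rfl
  mul_mem' := by
    intro a b ha hb h hh
    show a (b h) = h
    rw [hb h hh, ha h hh]
  inv_mem' := by
    intro a ha h hh
    show a⁻¹ h = h
    calc a⁻¹ h = a⁻¹ (a h) := by rw [ha h hh]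
    _ = h := by rw [MulAut.inv_def]; exact a.symm_apply_apply h

/-- `Aut_H(G)`: the subgroup of automorphisms of `G` mapping `H` onto itself. -/
def autSetwise (H : Subgroup G) : Subgroup (MulAut G) where
  carrier := {φ | ∀ g : G, φ g ∈ H ↔ g ∈ H}
  one_mem' := fun _ => Iff.rfl
  mul_mem' := by
    intro a b ha hb g
    show a (b g) ∈ H ↔ g ∈ H
    rw [ha, hb]
  inv_mem' := by
    intro a ha g
    show a⁻¹ g ∈ H ↔ g ∈ H
    have h1 : a (a⁻¹ g) = g := by rw [MulAut.inv_def]; exact a.apply_symm_apply g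
    have := ha (a⁻¹ g)
    rw [h1] at this
    exact this.symm

theorem mem_autSetwise {H : Subgroup G} {φ : MulAut G} :
    φ ∈ autSetwise G H ↔ ∀ g : G, φ g ∈ H ↔ g ∈ H := Iff.rfl

/-- `H` is an Aut-splitting subgroup of `G` if the restriction of `Aut(G) → Out(G)` to
`Aut_{H̲}(G)` has finite kernel and an image of finite index in `Out(G)`. -/
def IsAutSplitting (H : Subgroup G) : Prop :=
  Finite ((outProj G).comp (autFix G H).subtype).ker ∧
    ((autFix G H).map (outProj G)).FiniteIndex

/-- The conjugate `gKg⁻¹` of a subgroup. -/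
def conjSubgroup (g : G) (K : Subgroup G) : Subgroup G :=
  K.map (MulAut.conj g).toMonoidHom

end Defs
section GroupPart

/-- The intersection of the kernels of all homomorphisms to `F`. -/
def charKer (Γ F : Type*) [Group Γ] [Group F] : Subgroup Γ := ⨅ φ : Γ →* F, φ.ker

theorem mem_charKer {Γ F : Type*} [Group Γ] [Group F] {g : Γ} :
    g ∈ charKer Γ F ↔ ∀ φ : Γ →* F, φ g = 1 := by
  simp [charKer, Subgroup.mem_iInf, MonoidHom.mem_ker]

theorem finite_hom (Γ F : Type*) [Group Γ] [Group F] [Group.FG Γ] [Finite F] :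
    Finite (Γ →* F) := by
  obtain ⟨S, hS, hfin⟩ := (Group.fg_iff (G := Γ)).mp inferInstance
  have := hfin.to_subtype
  refine Finite.of_injective (fun (φ : Γ →* F) (s : S) => φ s) ?_
  intro φ ψ h
  refine MonoidHom.eq_of_eqOn_dense hS ?_
  intro x hx
  exact congrFun h ⟨x, hx⟩

instance charKer_normal (Γ F : Type*) [Group Γ] [Group F] : (charKer Γ F).Normal :=
  Subgroup.normal_iInf_normal fun _ => inferInstance

theorem charKer_finiteIndex (Γ F : Type*) [Group Γ] [Group F] [Group.FG Γ] [Finite F] :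
    (charKer Γ F).FiniteIndex := by
  have := finite_hom Γ F
  exact Subgroup.finiteIndex_iInf fun φ => inferInstance

theorem charKer_map {Γ F : Type*} [Group Γ] [Group F] (α : MulAut Γ) {g : Γ}
    (hg : g ∈ charKer Γ F) : α g ∈ charKer Γ F := by
  rw [mem_charKer] at *
  intro φ
  exact hg (φ.comp α.toMonoidHom)

/-- Automorphisms fixing all homomorphisms to `F`. -/
def fixHom (Γ F : Type*) [Group Γ] [Group F] : Subgroup (MulAut Γ) where
  carrier := {α | ∀ (φ : Γ →* F) (g : Γ), φ (α g) = φ g}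
  one_mem' := fun _ _ => rfl
  mul_mem' := by
    intro a b ha hb φ g
    rw [MulAut.mul_apply, ha, hb]
  inv_mem' := by
    intro a ha φ g
    rw [← ha φ (a⁻¹ g), MulAut.apply_inv_self]

theorem mem_fixHom {Γ F : Type*} [Group Γ] [Group F] {α : MulAut Γ} :
    α ∈ fixHom Γ F ↔ ∀ (φ : Γ →* F) (g : Γ), φ (α g) = φ g := Iff.rfl

theorem finiteIndex_of_map {A X : Type*} [Group A] [Finite X] (D : Subgroup A) (f : A → X)
    (h : ∀ a b, f a = f b → a⁻¹ * b ∈ D) : D.FiniteIndex := by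
  have : Finite (A ⧸ D) := by
    refine Finite.of_injective (fun q : A ⧸ D => f q.out) ?_
    intro q r hqr
    have := h _ _ hqr
    rw [← QuotientGroup.eq] at this
    simpa using this
  exact Subgroup.finiteIndex_of_finite_quotient

theorem fixHom_finiteIndex (Γ F : Type*) [Group Γ] [Group F] [Group.FG Γ] [Finite F] :
    (fixHom Γ F).FiniteIndex := by
  have := finite_hom Γ F
  refine finiteIndex_of_map _
    (fun (α : MulAut Γ) (φ : Γ →* F) => φ.comp (α⁻¹ : MulAut Γ).toMonoidHom) ?_
  intro a b hab φ g
  have h1 := DFunLike.congr_fun (congrFun hab φ) (b g)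
  simpa [MulAut.inv_def] using h1

/-- restriction of automorphisms to the characteristic subgroup `charKer`. -/
def resChar (Γ F : Type*) [Group Γ] [Group F] : MulAut Γ →* MulAut (charKer Γ F) where
  toFun α :=
    { toFun := fun k => ⟨α k, charKer_map α k.2⟩
      invFun := fun k => ⟨α⁻¹ k, charKer_map α⁻¹ k.2⟩
      left_inv := fun k => by ext; simp
      right_inv := fun k => by ext; simp
      map_mul' := fun k l => by ext; simp }
  map_one' := by ext; rfl
  map_mul' a b := by ext; rfl

theorem resChar_apply {Γ F : Type*} [Group Γ] [Group F] (α : MulAut Γ) (k : charKer Γ F) :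
    ((resChar Γ F α k : charKer Γ F) : Γ) = α k := rfl

/-- A coprime automorphism of a finite `l`-group that fixes all characters to `ℤ/l` is trivial. -/
theorem coprime_trivial {P : Type*} [Group P] [Finite P] (l p : ℕ) [Fact l.Prime] [Fact p.Prime]
    (hlp : p ≠ l) (hP : IsPGroup l P) (a : MulAut P) (hap : a ^ p = 1)
    (hfix : ∀ (ψ : P →* Multiplicative (ZMod l)) (x : P), ψ (a x) = ψ x) (x : P) : a x = x := by
  let C : Subgroup P :=
    { carrier := {x | a x = x}
      one_mem' := map_one a
      mul_mem' := fun {x y} hx hy => by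
        show a (x * y) = x * y
        rw [map_mul, hx, hy]
      inv_mem' := fun {x} hx => by
        show a x⁻¹ = x⁻¹
        rw [map_inv, hx] }
  by_contra hx
  have hC : C ≠ ⊤ := fun h => hx (show x ∈ C by rw [h]; trivial)
  obtain ⟨M, hM, hCM⟩ := (eq_top_or_exists_le_coatom C).resolve_left hC
  have := hP.isNilpotent
  have hMn : M.Normal :=
    Subgroup.NormalizerCondition.normal_of_coatom M Group.normalizerCondition_of_isNilpotent hM
  have hsimple : IsSimpleGroup (P ⧸ M) := by
    have : Nontrivial (P ⧸ M) := QuotientGroup.nontrivial_iff.mpr hM.1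
    refine ⟨fun H _ => ?_⟩
    have hle : M ≤ H.comap (QuotientGroup.mk' M) := by
      intro m hm
      rw [Subgroup.mem_comap, QuotientGroup.mk'_apply, (QuotientGroup.eq_one_iff m).mpr hm]
      exact H.one_mem
    rcases eq_or_lt_of_le hle with h | h
    · left
      rw [eq_bot_iff]
      intro y hy
      obtain ⟨z, rfl⟩ := QuotientGroup.mk'_surjective M y
      have : z ∈ M := by rw [h]; exact hy
      exact (QuotientGroup.eq_one_iff z).mpr this
    · right
      have := hM.2 _ h
      rw [eq_top_iff]
      intro y _
      obtain ⟨z, rfl⟩ := QuotientGroup.mk'_surjective M y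
      have hz : z ∈ H.comap (QuotientGroup.mk' M) := by rw [this]; trivial
      exact hz
  have hq : IsPGroup l (P ⧸ M) := hP.to_quotient M
  have hcyc : Nat.card (P ⧸ M) = l := by
    have := hq.isNilpotent
    have hsol : Group.IsSolvable (P ⧸ M) := inferInstance
    have hcomm : ∀ a b : P ⧸ M, a * b = b * a := IsSimpleGroup.comm_iff_isSolvable.mpr hsol
    let _ : CommGroup (P ⧸ M) := { (inferInstance : Group (P ⧸ M)) with mul_comm := hcomm }
    have hpr : (Nat.card (P ⧸ M)).Prime := IsSimpleGroup.prime_card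
    obtain ⟨n, hn⟩ := IsPGroup.iff_card.mp hq
    rw [hn] at hpr ⊢
    rw [Nat.Prime.eq_one_of_pow hpr, pow_one]
  have : IsCyclic (P ⧸ M) := isCyclic_of_prime_card hcyc
  let e : P ⧸ M ≃* Multiplicative (ZMod l) := mulEquivOfCyclicCardEq (by simp [hcyc])
  have hinv : ∀ y : P, (QuotientGroup.mk' M) (a y) = QuotientGroup.mk' M y := by
    intro y
    exact e.injective (hfix (e.toMonoidHom.comp (QuotientGroup.mk' M)) y)
  obtain ⟨z, hz⟩ : ∃ z, z ∉ M := by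
    by_contra! h
    exact hM.1 (eq_top_iff.mpr fun z _ => h z)
  -- the coset of z
  let X := {y : P // QuotientGroup.mk' M y = QuotientGroup.mk' M z}
  let A := Subgroup.zpowers a
  have hinvA : ∀ (b : A) (y : P), QuotientGroup.mk' M ((b : MulAut P) y) = QuotientGroup.mk' M y := by
    rintro ⟨b, hb⟩
    obtain ⟨n, rfl⟩ := (Subgroup.mem_zpowers_iff).mp hb
    have : ∀ n : ℕ, ∀ y, QuotientGroup.mk' M ((a ^ n) y) = QuotientGroup.mk' M y := by
      intro n
      induction n with
      | zero => intro y; rfl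
      | succ n ih => intro y; rw [pow_succ, MulAut.mul_apply, ih, hinv]
    intro y
    have hfin : IsOfFinOrder a := isOfFinOrder_iff_pow_eq_one.mpr ⟨p, (Fact.out : p.Prime).pos, hap⟩
    obtain ⟨k, hk⟩ := hfin.mem_powers_iff_mem_zpowers.mpr hb
    have hk' : a ^ k = a ^ n := hk
    show QuotientGroup.mk' M ((a ^ n) y) = _
    rw [← hk', this]
  let _ : MulAction A X :=
    { smul := fun b y => ⟨(b : MulAut P) y.1, (hinvA b y.1).trans y.2⟩
      one_smul := fun y => rfl
      mul_smul := fun b c y => rfl }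
  have hA : IsPGroup p A := by
    rintro ⟨b, hb⟩
    obtain ⟨n, rfl⟩ := (Subgroup.mem_zpowers_iff).mp hb
    refine ⟨1, Subtype.ext ?_⟩
    show (a ^ n) ^ p ^ 1 = 1
    rw [pow_one, ← zpow_natCast, ← zpow_mul, mul_comm, zpow_mul, zpow_natCast, hap, one_zpow]
  have hX : Nat.card X = Nat.card M := by
    refine Nat.card_congr
      { toFun := fun y => ⟨z⁻¹ * y.1, QuotientGroup.eq.mp y.2.symm⟩
        invFun := fun m => ⟨z * m.1, (QuotientGroup.eq.mpr (by simp)).symm⟩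
        left_inv := fun y => by ext; simp
        right_inv := fun y => by ext; simp }
  obtain ⟨n, hn⟩ := IsPGroup.iff_card.mp (hP.to_subgroup M)
  obtain ⟨y, hy⟩ := hA.nonempty_fixed_point_of_prime_not_dvd_card X (by
    rw [hX, hn]
    intro hd
    exact hlp ((Nat.prime_dvd_prime_iff_eq Fact.out Fact.out).mp
      (Nat.Prime.dvd_of_dvd_pow Fact.out hd)))
  have hya : a y.1 = y.1 := congrArg Subtype.val (hy ⟨a, Subgroup.mem_zpowers a⟩)
  have : y.1 ∈ M := hCM hya
  apply hz
  have h2 := y.2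
  rw [QuotientGroup.mk'_apply, (QuotientGroup.eq_one_iff y.1).mpr this] at h2
  exact (QuotientGroup.eq_one_iff z).mp h2.symm

/-- No `p`-torsion in a suitable finite-index subgroup of the automorphism group. -/
theorem no_p_torsion {G F : Type*} [Group G] [Group.FG G] [Group F] [Finite F]
    (l p : ℕ) [Fact l.Prime] [Fact p.Prime] (hlp : p ≠ l)
    (hres : ∀ k ∈ charKer G F, k ≠ 1 → ∃ (P : Type) (_ : Group P) (_ : Finite P),
      IsPGroup l P ∧ ∃ θ : charKer G F →* P, ∀ h : k ∈ charKer G F, θ ⟨k, h⟩ ≠ 1)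
    (α : MulAut G) (h1 : α ∈ fixHom G F)
    (h2 : resChar G F α ∈ fixHom (charKer G F) (Multiplicative (ZMod l)))
    (hα : α ^ p = 1) : α = 1 := by
  have := charKer_finiteIndex G F
  -- α is the identity on K
  have hK : ∀ k ∈ charKer G F, α k = k := by
    intro k hk
    by_contra hne
    obtain ⟨P, _, _, hP, θ, hθ⟩ := hres (α k * k⁻¹)
      (mul_mem (charKer_map α hk) (inv_mem hk)) (by rwa [Ne, mul_inv_eq_one])
    apply hθ (mul_mem (charKer_map α hk) (inv_mem hk))
    let K := charKer G F
    let Q := charKer K P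
    have hQ := charKer_finiteIndex K P
    let β : MulAut K := resChar G F α
    have hβ : Q.map (β : K →* K) = Q := by
      apply le_antisymm
      · rintro _ ⟨x, hx, rfl⟩
        exact charKer_map β hx
      · intro x hx
        exact ⟨β⁻¹ x, charKer_map β⁻¹ hx, MulAut.apply_inv_self _ _ _⟩
    let a : MulAut (K ⧸ Q) := QuotientGroup.congr Q Q β hβ
    have haq : ∀ x : K, a (QuotientGroup.mk' Q x) = QuotientGroup.mk' Q (β x) := fun x => rfl
    have han : ∀ (n : ℕ) (x : K), (a ^ n) (QuotientGroup.mk' Q x) = QuotientGroup.mk' Q ((β ^ n) x) := by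
      intro n
      induction n with
      | zero => intro x; rfl
      | succ n ih => intro x; rw [pow_succ, pow_succ, MulAut.mul_apply, MulAut.mul_apply, haq, ih]
    have hap : a ^ p = 1 := by
      ext x
      obtain ⟨x, rfl⟩ := QuotientGroup.mk'_surjective Q x
      rw [han, ← map_pow, hα, map_one]
      rfl
    have hPQ : IsPGroup l (K ⧸ Q) := by
      obtain ⟨n, hn⟩ := IsPGroup.iff_card.mp hP
      intro x
      obtain ⟨x, rfl⟩ := QuotientGroup.mk'_surjective Q x
      refine ⟨n, ?_⟩
      rw [← map_pow]
      refine (QuotientGroup.eq_one_iff _).mpr (mem_charKer.mpr fun φ => ?_)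
      rw [map_pow, ← hn, pow_card_eq_one']
    have key := coprime_trivial l p hlp hPQ a hap (by
      intro ψ x
      obtain ⟨x, rfl⟩ := QuotientGroup.mk'_surjective Q x
      exact h2 (ψ.comp (QuotientGroup.mk' Q)) x) (QuotientGroup.mk' Q ⟨k, hk⟩)
    rw [haq] at key
    have h3 := mem_charKer.mp (QuotientGroup.eq.mp key.symm) θ
    have h4 : θ (β ⟨k, hk⟩) = θ ⟨k, hk⟩ := by
      rw [map_mul, map_inv, inv_mul_eq_one] at h3
      exact h3.symm
    have h5 : (⟨α k * k⁻¹, mul_mem (charKer_map α hk) (inv_mem hk)⟩ : K) = β ⟨k, hk⟩ * ⟨k, hk⟩⁻¹ := rfl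
    rw [h5, map_mul, map_inv, h4, mul_inv_cancel]
  ext g
  rw [MulAut.one_apply]
  have hc : α g * g⁻¹ ∈ charKer G F := by
    rw [mem_charKer]
    intro φ
    rw [map_mul, map_inv, h1 φ g, mul_inv_cancel]
  set c := α g * g⁻¹ with hcdef
  have hag : α g = c * g := by simp [hcdef]
  have hpow : ∀ n : ℕ, (α ^ n) g = c ^ n * g := by
    intro n
    induction n with
    | zero => simp
    | succ n ih =>
      rw [pow_succ', MulAut.mul_apply, ih, map_mul, map_pow, hK c hc, hag, ← mul_assoc, ← pow_succ]
  have hcp : c ^ p = 1 := by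
    have := hpow p
    rw [hα, MulAut.one_apply] at this
    simpa using this.symm
  by_contra hne
  have hc1 : c ≠ 1 := by
    intro h
    rw [h, one_mul] at hag
    exact hne hag
  obtain ⟨P, _, _, hP, θ, hθ⟩ := hres c hc hc1
  apply hθ hc
  have h6 : (θ ⟨c, hc⟩) ^ p = 1 := by
    rw [← map_pow, ← map_one θ]
    congr 1
    ext
    exact hcp
  obtain ⟨n, hn⟩ := hP (θ ⟨c, hc⟩)
  have hcop : Nat.Coprime p (l ^ n) :=
    Nat.Coprime.pow_right n ((Nat.coprime_primes Fact.out Fact.out).mpr hlp)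
  have := Nat.dvd_gcd (orderOf_dvd_of_pow_eq_one h6) (orderOf_dvd_of_pow_eq_one hn)
  rw [hcop.gcd_eq_one, Nat.dvd_one, orderOf_eq_one_iff] at this
  exact this

end GroupPart
section GroupPart2

theorem residuallyFinite_of_subgroups {A : Type*} [Group A]
    (h : ∀ g : A, g ≠ 1 → ∃ N : Subgroup A, N.FiniteIndex ∧ g ∉ N) : ResiduallyFinite A := by
  intro g hg
  obtain ⟨N, hN, hgN⟩ := h g hg
  have : Finite (A ⧸ N) := inferInstance
  let e := Finite.equivFin (A ⧸ N)
  refine ⟨Equiv.Perm (Fin (Nat.card (A ⧸ N))), inferInstance, inferInstance,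
    e.permCongrHom.toMonoidHom.comp (MulAction.toPermHom A (A ⧸ N)), ?_⟩
  intro h1
  have h2 : MulAction.toPermHom A (A ⧸ N) g = 1 := by
    apply e.permCongrHom.injective
    rw [map_one]
    exact h1
  have h3 := DFunLike.congr_fun h2 (QuotientGroup.mk (1 : A))
  have h4 : (QuotientGroup.mk (g * 1) : A ⧸ N) = QuotientGroup.mk 1 := h3
  rw [mul_one] at h4
  have := QuotientGroup.eq.mp h4
  apply hgN
  simpa using this

open Matrix in
/-- reduction of a matrix representation mod `n` -/
noncomputable def redMod {G : Type*} [Group G] {N : ℕ} (ρ : G →* GL (Fin N) ℤ) (n : ℕ) :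
    G →* GL (Fin N) (ZMod n) :=
  (Matrix.GeneralLinearGroup.map (Int.castRingHom (ZMod n))).comp ρ

theorem redMod_eq_one_iff {G : Type*} [Group G] {N : ℕ} (ρ : G →* Matrix.GeneralLinearGroup (Fin N) ℤ) (n : ℕ)
    (g : G) : redMod ρ n g = 1 ↔
      ∃ X : Matrix (Fin N) (Fin N) ℤ, (ρ g : Matrix (Fin N) (Fin N) ℤ) = 1 + (n : ℤ) • X := by
  have key : redMod ρ n g = 1 ↔
      ((ρ g : Matrix (Fin N) (Fin N) ℤ)).map (Int.castRingHom (ZMod n)) = 1 := by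
    rw [Units.ext_iff]
    rfl
  rw [key]
  constructor
  · intro h
    have hd : ∀ i j, (n : ℤ) ∣ (ρ g : Matrix (Fin N) (Fin N) ℤ) i j - (1 : Matrix (Fin N) (Fin N) ℤ) i j := by
      intro i j
      have := congrFun (congrFun h i) j
      rw [← ZMod.intCast_zmod_eq_zero_iff_dvd] 
      rw [Matrix.map_apply] at this
      push_cast
      rw [sub_eq_zero]
      rw [eq_intCast] at this
      rw [this]
      by_cases hij : i = j <;> simp [Matrix.one_apply, hij]
    choose X hX using hd
    refine ⟨Matrix.of X, ?_⟩
    ext i j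
    have := hX i j
    simp only [Matrix.add_apply, Matrix.smul_apply, Matrix.of_apply, smul_eq_mul]
    linarith
  · rintro ⟨X, hX⟩
    rw [hX]
    ext i j
    rw [Matrix.map_apply, Matrix.add_apply, Matrix.smul_apply, smul_eq_mul]
    by_cases hij : i = j <;> simp [Matrix.one_apply, hij]

theorem redMod_pow {G : Type*} [Group G] {N : ℕ} (ρ : G →* Matrix.GeneralLinearGroup (Fin N) ℤ) (l : ℕ)
    (g : G) (hg : redMod ρ l g = 1) (k : ℕ) : redMod ρ (l ^ (k + 1)) (g ^ l ^ k) = 1 := by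
  induction k with
  | zero =>
    have h1 : l ^ (0 + 1) = l := by simp
    rw [h1]
    simpa using hg
  | succ k ih =>
    rw [redMod_eq_one_iff] at ih ⊢
    obtain ⟨X, hX⟩ := ih
    set c : ℤ := ((l ^ (k + 1) : ℕ) : ℤ) with hc
    -- (1 + cX)^n = 1 + n c X + c^2 Y
    have hpow : ∀ n : ℕ, ∃ Y : Matrix (Fin N) (Fin N) ℤ,
        (1 + c • X) ^ n = 1 + ((n : ℤ) * c) • X + (c * c) • Y := by
      intro n
      induction n with
      | zero => exact ⟨0, by simp⟩
      | succ n ihn =>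
        obtain ⟨Y, hY⟩ := ihn
        refine ⟨(n : ℤ) • (X * X) + Y + c • (Y * X), ?_⟩
        rw [pow_succ, hY]
        simp only [mul_add, add_mul, one_mul, mul_one, smul_mul_assoc, mul_smul_comm, smul_add,
          smul_smul]
        push_cast
        module
    obtain ⟨Y, hY⟩ := hpow l
    refine ⟨X + (l : ℤ) ^ k • Y, ?_⟩
    rw [pow_succ, pow_mul, map_pow, Units.val_pow_eq_pow_val, hX, hY, smul_add, smul_smul, ← add_assoc]
    have e1 : (l : ℤ) * c = ((l ^ (k + 1 + 1) : ℕ) : ℤ) := by rw [hc]; push_cast; ring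
    have e2 : c * c = ((l ^ (k + 1 + 1) : ℕ) : ℤ) * (l : ℤ) ^ k := by rw [hc]; push_cast; ring
    rw [e1, e2]

theorem exists_redMod_ne {G : Type*} [Group G] {N : ℕ} (ρ : G →* Matrix.GeneralLinearGroup (Fin N) ℤ)
    (hρ : Function.Injective ρ) (l : ℕ) (hl : 2 ≤ l) (g : G) (hg : g ≠ 1) :
    ∃ k, redMod ρ (l ^ (k + 1)) g ≠ 1 := by
  by_contra! h
  apply hg
  apply hρ
  rw [map_one]
  ext i j
  have hd : ∀ k, ((l : ℤ) ^ (k + 1)) ∣ ((ρ g : Matrix (Fin N) (Fin N) ℤ) i j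
      - (1 : Matrix (Fin N) (Fin N) ℤ) i j) := by
    intro k
    obtain ⟨X, hX⟩ := (redMod_eq_one_iff ρ _ g).mp (h k)
    rw [hX]
    refine ⟨X i j, ?_⟩
    rw [Matrix.add_apply, Matrix.smul_apply, smul_eq_mul]
    push_cast
    ring
  set d := (ρ g : Matrix (Fin N) (Fin N) ℤ) i j - (1 : Matrix (Fin N) (Fin N) ℤ) i j with hdd
  have hd0 : d = 0 := by
    by_contra hne
    have h1 := Int.natAbs_dvd_natAbs.mpr (hd d.natAbs)
    have h2 := Nat.le_of_dvd (Int.natAbs_pos.mpr hne) h1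
    rw [Int.natAbs_pow, Int.natAbs_natCast] at h2
    have h3 : d.natAbs + 1 < l ^ (d.natAbs + 1) := Nat.lt_pow_self (by omega)
    omega
  have : (ρ g : Matrix (Fin N) (Fin N) ℤ) i j = (1 : Matrix (Fin N) (Fin N) ℤ) i j := by linarith
  simpa using this

/-- `Aut` has a finite-index subgroup without `p`-torsion for all `p ≠ l`. -/
theorem exists_D {G : Type*} [Group G] [Group.FG G] {N : ℕ}
    (ρ : G →* Matrix.GeneralLinearGroup (Fin N) ℤ)
    (hρ : Function.Injective ρ) (l : ℕ) [Fact l.Prime] :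
    ∃ D : Subgroup (MulAut G), D.FiniteIndex ∧
      ∀ p : ℕ, p.Prime → p ≠ l → ∀ α ∈ D, α ^ p = 1 → α = 1 := by
  let F := Matrix.GeneralLinearGroup (Fin N) (ZMod l)
  have := charKer_finiteIndex G F
  have i1 := fixHom_finiteIndex G F
  have i2 := fixHom_finiteIndex (charKer G F) (Multiplicative (ZMod l))
  have i3 : ((fixHom (charKer G F) (Multiplicative (ZMod l))).comap (resChar G F)).FiniteIndex :=
    by
    constructor
    rw [Subgroup.index_comap]
    exact (inferInstance : ((fixHom (charKer G F) (Multiplicative (ZMod l))).subgroupOf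
      (resChar G F).range).FiniteIndex).1
  refine ⟨fixHom G F ⊓ (fixHom (charKer G F) (Multiplicative (ZMod l))).comap (resChar G F),
    inferInstance, ?_⟩
  rintro p hp hpl α ⟨h1, h2⟩ hα
  have : Fact p.Prime := ⟨hp⟩
  refine no_p_torsion l p hpl ?_ α h1 h2 hα
  intro k hk hk1
  obtain ⟨n, hn⟩ := exists_redMod_ne ρ hρ l (Fact.out : l.Prime).two_le k hk1
  have : NeZero (l ^ (n + 1)) := ⟨pow_ne_zero _ (Fact.out : l.Prime).ne_zero⟩
  let θ := (redMod ρ (l ^ (n + 1))).comp (charKer G F).subtype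
  refine ⟨θ.range, inferInstance, inferInstance, ?_, θ.rangeRestrict, ?_⟩
  · rintro ⟨_, x, rfl⟩
    refine ⟨n, Subtype.ext ?_⟩
    show θ x ^ l ^ n = 1
    rw [← map_pow]
    exact redMod_pow ρ l x (mem_charKer.mp x.2 (redMod ρ l)) n
  · intro h h0
    exact hn (congrArg Subtype.val h0)

theorem main_of {G : Type*} [Group G] [Group.FG G] {N : ℕ}
    (ρ : G →* Matrix.GeneralLinearGroup (Fin N) ℤ) (hρ : Function.Injective ρ)
    (H : Subgroup G) [Finite H] (hC : {g : G | ∀ h ∈ H, g * h = h * g}.Finite)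
    (E : Set G) (hE : E.Finite)
    (hconj : ∀ F : Subgroup G, Finite F → ∃ g : G, ∀ f ∈ F, g * f * g⁻¹ ∈ E) :
    ResiduallyFinite (Out G) ∧
      ∃ O : Subgroup (Out G), O.FiniteIndex ∧ ∀ x : O, IsOfFinOrder x → x = 1 := by
  have hfinE := hE.to_subtype
  have : Fact (Nat.Prime 2) := ⟨Nat.prime_two⟩
  have : Fact (Nat.Prime 3) := ⟨Nat.prime_three⟩
  obtain ⟨D2, hD2, hD2t⟩ := exists_D ρ hρ 2
  obtain ⟨D3, hD3, hD3t⟩ := exists_D ρ hρ 3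
  -- torsion-freeness
  have htf : ∀ α ∈ D2 ⊓ D3, IsOfFinOrder α → α = 1 := by
    rintro α ⟨h2, h3⟩ hfo
    by_contra hne
    have ho : orderOf α ≠ 1 := by rwa [Ne, orderOf_eq_one_iff]
    obtain ⟨p, hp, q, hq⟩ := Nat.exists_prime_and_dvd ho
    have hq0 : α ^ q ≠ 1 := by
      intro h
      have h1 := Nat.le_of_dvd (Nat.pos_of_ne_zero (by
        rintro rfl
        rw [mul_zero] at hq
        exact hfo.orderOf_pos.ne' hq)) (orderOf_dvd_of_pow_eq_one h)
      have h2 := hfo.orderOf_pos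
      rw [hq] at h1 h2
      have := hp.two_le
      nlinarith [Nat.pos_of_mul_pos_left h2]
    have hqp : (α ^ q) ^ p = 1 := by
      rw [← pow_mul, mul_comm, ← hq, pow_orderOf_eq_one]
    by_cases hp2 : p = 2
    · exact hq0 (hD3t p hp (by omega) _ (pow_mem h3 q) hqp)
    · exact hq0 (hD2t p hp hp2 _ (pow_mem h2 q) hqp)
  -- finite index
  have hidx : ∀ N : Subgroup (MulAut G), N.FiniteIndex →
      ((autFix G H ⊓ N).map (outProj G)).FiniteIndex := by
    intro N hN
    have h1 : ((autFix G H ⊓ N).map (outProj G) : Subgroup (Out G)).comap (outProj G) |>.FiniteIndex := by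
      have hch : ∀ φ : MulAut G, ∃ g : G, ∀ h : H, g * φ h * g⁻¹ ∈ E := by
        intro φ
        have : Finite (H.map (φ : G →* G)) := by
          have := Set.Finite.image φ (Set.toFinite (H : Set G))
          exact this.to_subtype
        obtain ⟨g, hg⟩ := hconj (H.map (φ : G →* G)) this
        exact ⟨g, fun h => hg _ ⟨h, h.2, rfl⟩⟩
      choose c hc using hch
      have : Finite (MulAut G ⧸ N) := inferInstance
      -- use cosets of N for inner-corrected automorphisms
      refine finiteIndex_of_map _ (X := (H → E) × (MulAut G ⧸ N))
        (fun φ => (fun h => ⟨c φ * φ h * (c φ)⁻¹, hc φ h⟩,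
          QuotientGroup.mk ((MulAut.conj (c φ) * φ)⁻¹)⁻¹)) ?_
      intro a b hab
      rw [Prod.ext_iff] at hab
      obtain ⟨hab1, hab2⟩ := hab
      refine ⟨(MulAut.conj (c a) * a)⁻¹ * (MulAut.conj (c b) * b), ⟨?_, ?_⟩, ?_⟩
      · intro h hh
        have := congrArg Subtype.val (congrFun hab1 ⟨h, hh⟩)
        have h2 : (MulAut.conj (c a) * a) h = (MulAut.conj (c b) * b) h := this
        rw [MulAut.mul_apply, ← h2, MulAut.inv_apply_self]
      · have := QuotientGroup.eq.mp hab2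
        simpa using this
      · have hi : ∀ g : G, outProj G (MulAut.conj g) = 1 := fun g =>
          (QuotientGroup.eq_one_iff _).mpr ⟨g, rfl⟩
        simp [hi]
    have hsurj : Function.Surjective (outProj G) := QuotientGroup.mk'_surjective _
    constructor
    rw [← Subgroup.index_comap_of_surjective _ hsurj]
    exact h1.1
  -- injectivity
  have hinj : ∀ α ∈ autFix G H ⊓ (D2 ⊓ D3), outProj G α = 1 → α = 1 := by
    rintro α ⟨hα, hαD⟩ h1
    apply htf α hαD
    obtain ⟨g, rfl⟩ := (QuotientGroup.eq_one_iff α).mp h1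
    have hgC : g ∈ {g : G | ∀ h ∈ H, g * h = h * g} := by
      intro h hh
      have := hα h hh
      rw [MulAut.conj_apply, mul_inv_eq_iff_eq_mul] at this
      exact this
    have hg : IsOfFinOrder g := by
      rw [← finite_powers]
      refine hC.subset ?_
      rintro _ ⟨n, rfl⟩ h hh
      exact (Commute.pow_left (hgC h hh) n)
    exact MonoidHom.isOfFinOrder _ hg
  constructor
  · apply residuallyFinite_of_subgroups
    intro x hx
    by_cases hxO : x ∈ (autFix G H ⊓ (D2 ⊓ D3)).map (outProj G)
    · obtain ⟨a, ha, rfl⟩ := hxO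
      have ha1 : a ≠ 1 := by rintro rfl; exact hx (map_one _)
      obtain ⟨g, hg⟩ : ∃ g, a g ≠ g := by
        by_contra! h
        exact ha1 (MulEquiv.ext h)
      obtain ⟨k, hk⟩ := exists_redMod_ne ρ hρ 2 le_rfl (a g * g⁻¹) (by rwa [Ne, mul_inv_eq_one])
      have : NeZero (2 ^ (k + 1)) := ⟨pow_ne_zero _ (by norm_num)⟩
      have i1 := fixHom_finiteIndex G (Matrix.GeneralLinearGroup (Fin N) (ZMod (2 ^ (k + 1))))
      set C := fixHom G (Matrix.GeneralLinearGroup (Fin N) (ZMod (2 ^ (k + 1)))) with hCdef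
      refine ⟨(autFix G H ⊓ ((D2 ⊓ D3) ⊓ C)).map (outProj G), hidx _ inferInstance, ?_⟩
      rintro ⟨b, ⟨hb1, hb2, hb3⟩, hb⟩
      have hab : b⁻¹ * a = 1 := by
        apply hinj
        · exact mul_mem (inv_mem ⟨hb1, hb2⟩) ha
        · rw [map_mul, map_inv, hb, inv_mul_cancel]
      have : b = a := inv_mul_eq_one.mp hab
      subst this
      apply hk
      rw [map_mul, map_inv, hb3, mul_inv_cancel]
    · exact ⟨_, hidx _ inferInstance, hxO⟩
  · refine ⟨_, hidx (D2 ⊓ D3) inferInstance, ?_⟩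
    rintro ⟨_, a, ha, rfl⟩ hfo
    obtain ⟨n, hn, hn1⟩ := isOfFinOrder_iff_pow_eq_one.mp hfo
    have h2 : outProj G (a ^ n) = 1 := by
      rw [map_pow]
      exact congrArg Subtype.val hn1
    have h3 := hinj _ (pow_mem ha n) h2
    have h4 := htf a ha.2 (isOfFinOrder_iff_pow_eq_one.mpr ⟨n, hn, h3⟩)
    subst h4
    ext
    exact map_one _

end GroupPart2
set_option linter.unusedSectionVars false

section CoxeterPart

open Real

variable {B : Type} [Fintype B] [DecidableEq B] (M : CoxeterMatrix B)

/-- the coefficients `2 cos (π / m)` -/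
noncomputable def cf (i j : B) : ℝ := 2 * cos (π / M i j)

theorem cf_symm (i j : B) : cf M i j = cf M j i := by
  unfold cf
  rw [M.symmetric i j]

theorem cf_self (i : B) : cf M i i = -2 := by
  simp [cf]

/-- simple root -/
def sroot (i : B) : B → ℝ := Pi.single i 1

/-- simple coroot -/
noncomputable def cform (i : B) : Module.Dual ℝ (B → ℝ) :=
  -∑ j, cf M i j • LinearMap.proj j

theorem cform_apply (i : B) (v : B → ℝ) : cform M i v = -∑ j, cf M i j * v j := by
  simp [cform]

theorem cform_sroot (i j : B) : cform M i (sroot j) = - cf M i j := by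
  rw [cform_apply, sroot]
  simp [Pi.single_apply]

theorem cform_self (i : B) : cform M i (sroot i) = 2 := by
  rw [cform_sroot, cf_self]; norm_num

/-- simple reflection -/
noncomputable def sref (i : B) : (B → ℝ) ≃ₗ[ℝ] (B → ℝ) := Module.reflection (cform_self M i)

theorem sref_apply (i : B) (v : B → ℝ) : sref M i v = v - cform M i v • sroot i :=
  Module.reflection_apply v (cform_self M i)

theorem sref_sroot (i j : B) : sref M i (sroot j) = sroot j + cf M i j • sroot i := by
  rw [sref_apply, cform_sroot, neg_smul, sub_neg_eq_add]

theorem sref_liftable : M.IsLiftable (sref M) := by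
  intro i j
  rcases Nat.lt_or_ge (M i j) 3 with h3 | h3
  · have : M i j = 0 ∨ M i j = 1 ∨ M i j = 2 := by omega
    rcases this with h | h | h
    · rw [h, pow_zero]
    · have hij : i = j := by
        by_contra hne
        exact M.off_diagonal i j hne h
      subst hij
      rw [h, pow_one]
      ext1 v
      exact Module.involutive_reflection (cform_self M i) v
    · have h0 : cf M i j = 0 := by simp [cf, h]
      have h0' : cf M j i = 0 := by rw [cf_symm]; exact h0
      rw [h, pow_two]
      refine LinearEquiv.ext fun v => ?_
      simp only [LinearEquiv.mul_apply, sref_apply, map_sub, map_smul, cform_sroot, h0, h0', cf_self,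
        LinearEquiv.coe_one, id]
      simp only [neg_zero]
      module
  · set m := M i j with hm
    have hm0 : (0 : ℝ) < m := by exact_mod_cast (by omega : 0 < m)
    have hm3 : (3 : ℝ) ≤ m := by exact_mod_cast h3
    set θ : ℝ := 2 * (π / m) with hθ
    have hsin : sin θ ≠ 0 := by
      apply ne_of_gt
      apply sin_pos_of_pos_of_lt_pi
      · positivity
      · rw [hθ, ← mul_div_assoc, div_lt_iff₀ hm0]
        nlinarith [pi_pos]
    have ht : 2 * cos θ = cform M i (sroot j) * cform M j (sroot i) - 2 := by
      rw [cform_sroot, cform_sroot, cf_symm M j i, cf, ← hm, hθ, cos_two_mul]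
      ring
    have hS : ∀ n : ℤ, (Polynomial.Chebyshev.S ℝ n).eval (2 * cos θ) = sin ((n + 1) * θ) / sin θ := by
      intro n
      rw [eq_div_iff hsin, Polynomial.Chebyshev.S_two_mul_real_cos]
    have hmθ : (m : ℝ) * θ = 2 * π := by rw [hθ]; field_simp
    refine LinearEquiv.ext fun v => ?_
    have key := Module.reflection_mul_reflection_pow_apply (cform_self M i) (cform_self M j) m v
      (2 * cos θ) ht
    show ((sref M i * sref M j) ^ m) v = v
    refine key.trans ?_
    rcases Nat.even_or_odd' m with ⟨k, hk | hk⟩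
    · have e1 : ((m : ℤ) - 2) / 2 = (k : ℤ) - 1 := by omega
      have e2 : ((m : ℤ) - 1) / 2 = (k : ℤ) - 1 := by omega
      have hz : (Polynomial.Chebyshev.S ℝ ((k : ℤ) - 1)).eval (2 * cos θ) = 0 := by
        rw [hS]
        have : (((k : ℤ) - 1 : ℤ) + 1 : ℝ) * θ = π := by
          push_cast
          have : (m : ℝ) = 2 * k := by exact_mod_cast hk
          rw [this] at hmθ
          linarith
        rw [this, sin_pi, zero_div]
      rw [e1, e2, hz]
      simp
    · have e1 : ((m : ℤ) - 1) / 2 = (k : ℤ) := by omega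
      have e2 : ((m : ℤ) - 3) / 2 = (k : ℤ) - 1 := by omega
      have e3 : ((m : ℤ)) / 2 = (k : ℤ) := by omega
      have e4 : ((m : ℤ) - 2) / 2 = (k : ℤ) - 1 := by omega
      have hz : (Polynomial.Chebyshev.S ℝ (k : ℤ)).eval (2 * cos θ) +
          (Polynomial.Chebyshev.S ℝ ((k : ℤ) - 1)).eval (2 * cos θ) = 0 := by
        rw [hS, hS, ← add_div]
        have h1 : (((k : ℤ) : ℝ) + 1) * θ = 2 * π - k * θ := by
          have : (m : ℝ) = 2 * k + 1 := by exact_mod_cast hk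
          rw [this] at hmθ
          push_cast
          linarith
        have h2 : (((k : ℤ) - 1 : ℤ) + 1 : ℝ) * θ = k * θ := by push_cast; ring
        rw [h1, h2, sin_two_pi_sub, neg_add_cancel, zero_div]
      rw [e1, e2, e3, e4, hz]
      simp

variable {M} {W : Type*} [Group W] (cs : CoxeterSystem M W)

/-- the geometric representation -/
noncomputable def geo : W →* ((B → ℝ) ≃ₗ[ℝ] (B → ℝ)) := cs.lift ⟨sref M, sref_liftable M⟩

theorem geo_simple (i : B) : geo cs (cs.simple i) = sref M i :=
  cs.lift_apply_simple (sref_liftable M) i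

theorem geo_mul (v w : W) (x : B → ℝ) : geo cs (v * w) x = geo cs v (geo cs w x) := by
  rw [map_mul]; rfl

theorem geo_inv_self (w : W) (x : B → ℝ) : geo cs w⁻¹ (geo cs w x) = x := by
  rw [← geo_mul, inv_mul_cancel, map_one]; rfl

theorem geo_self_inv (w : W) (x : B → ℝ) : geo cs w (geo cs w⁻¹ x) = x := by
  rw [← geo_mul, mul_inv_cancel, map_one]; rfl

theorem sroot_nonneg (i : B) : 0 ≤ sroot i := by
  rw [sroot]; simp

theorem sroot_ne (i : B) : sroot i ≠ 0 := by
  rw [sroot]; simp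

/-- sequence `sin (kθ) / sin θ` -/
noncomputable def useq (m : ℕ) (k : ℕ) : ℝ :=
  if m = 0 then k else sin (k * (π / m)) / sin (π / m)

theorem sin_pos_m {m : ℕ} (hm : 2 ≤ m) : 0 < sin (π / m) := by
  have : (2 : ℝ) ≤ m := by exact_mod_cast hm
  apply sin_pos_of_pos_of_lt_pi
  · positivity
  · rw [div_lt_iff₀ (by linarith)]
    nlinarith [pi_pos]

theorem useq_zero (m : ℕ) : useq m 0 = 0 := by simp [useq]

theorem useq_one {m : ℕ} (hm : m ≠ 1) : useq m 1 = 1 := by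
  unfold useq
  split_ifs with h
  · simp
  · have := sin_pos_m (m := m) (by omega)
    rw [Nat.cast_one, one_mul, div_self this.ne']

theorem useq_rec {m : ℕ} (k : ℕ) :
    useq m (k + 2) = 2 * cos (π / m) * useq m (k + 1) - useq m k := by
  unfold useq
  split_ifs with h
  · subst h
    simp
    ring
  · have e1 : (((k + 2 : ℕ) : ℝ)) * (π / m) = ((k + 1 : ℕ) : ℝ) * (π / m) + π / m := by
      push_cast; ring
    have e2 : (k : ℝ) * (π / m) = ((k + 1 : ℕ) : ℝ) * (π / m) - π / m := by
      push_cast; ring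
    rw [e1, e2, sin_add, sin_sub]
    ring

theorem useq_nonneg {m : ℕ} (hm : m ≠ 1) (k : ℕ) (hk : m = 0 ∨ k ≤ m) : 0 ≤ useq m k := by
  unfold useq
  split_ifs with h
  · positivity
  · have h1 := sin_pos_m (m := m) (by omega)
    have hkm : k ≤ m := by omega
    have hm0 : (0 : ℝ) < m := by exact_mod_cast Nat.pos_of_ne_zero h
    apply div_nonneg _ h1.le
    apply sin_nonneg_of_nonneg_of_le_pi
    · positivity
    · have : (k : ℝ) ≤ m := by exact_mod_cast hkm
      calc (k : ℝ) * (π / m) ≤ m * (π / m) := by gcongr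
        _ = π := by field_simp

theorem geo_alternating (s t : B) (hst : s ≠ t) (k : ℕ) :
    geo cs (cs.wordProd (CoxeterSystem.alternatingWord s t k)) (sroot s) =
      if Even k then useq (M s t) (k + 1) • sroot s + useq (M s t) k • sroot t
      else useq (M s t) k • sroot s + useq (M s t) (k + 1) • sroot t := by
  have hm : M s t ≠ 1 := M.off_diagonal s t hst
  induction k with
  | zero =>
    simp [useq_zero, useq_one hm, CoxeterSystem.alternatingWord]
  | succ k ih =>
    rw [CoxeterSystem.alternatingWord_succ', cs.wordProd_cons, geo_mul, ih, geo_simple]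
    by_cases hk : Even k
    · have hk1 : ¬ Even (k + 1) := by
        rw [Nat.even_add_one]; exact not_not.mpr hk
      simp only [if_pos hk, if_neg hk1, map_add, map_smul, sref_sroot, useq_rec, cf_self]
      rw [cf_symm M t s, cf]
      module
    · have hk1 : Even (k + 1) := by
        rw [Nat.even_add_one]; exact hk
      simp only [if_neg hk, if_pos hk1, map_add, map_smul, sref_sroot, useq_rec, cf_self]
      rw [cf]
      module

theorem geo_nonneg_mono (w : W) {a b : ℝ} (ha : 0 ≤ a) (hb : 0 ≤ b) {s t : B}
    (hs : 0 ≤ geo cs w (sroot s)) (ht : 0 ≤ geo cs w (sroot t)) :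
    0 ≤ geo cs w (a • sroot s + b • sroot t) := by
  rw [map_add, map_smul, map_smul]
  exact add_nonneg (smul_nonneg ha hs) (smul_nonneg hb ht)

theorem positivity_aux (n : ℕ) : ∀ (w : W), cs.length w = n → ∀ s : B,
    cs.length w < cs.length (w * cs.simple s) → 0 ≤ geo cs w (sroot s) := by
  induction n using Nat.strong_induction_on with
  | _ n IH =>
    intro w hw s hs
    by_cases hw1 : w = 1
    · subst hw1
      rw [map_one]
      exact sroot_nonneg s
    obtain ⟨t, ht⟩ := cs.exists_rightDescent_of_ne_one hw1
    have hst : s ≠ t := by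
      rintro rfl
      exact absurd ht (by unfold CoxeterSystem.IsRightDescent; omega)
    have hm : M s t ≠ 1 := M.off_diagonal s t hst
    let P : ℕ → Prop := fun k => ∃ v : W,
      w = v * cs.wordProd (CoxeterSystem.alternatingWord s t k) ∧ cs.length w = cs.length v + k
    have hP1 : P 1 := by
      refine ⟨w * cs.simple t, ?_, ?_⟩
      · simp [CoxeterSystem.alternatingWord]
      · have := (cs.isRightDescent_iff).mp ht
        omega
    have hPb : ∀ k, P k → k ≤ cs.length w := by
      rintro k ⟨v, -, h⟩
      omega
    classical
    obtain ⟨k, hPk, hk1, hkmax⟩ : ∃ k, P k ∧ 1 ≤ k ∧ ¬ P (k + 1) := by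
      refine ⟨Nat.findGreatest P (cs.length w), ?_, ?_, ?_⟩
      · exact Nat.findGreatest_spec (hPb 1 hP1) hP1
      · exact Nat.le_findGreatest (hPb 1 hP1) hP1
      · intro h
        have := Nat.le_findGreatest (hPb _ h) h
        omega
    obtain ⟨v, hv, hlv⟩ := hPk
    obtain ⟨j, rfl⟩ : ∃ j, k = j + 1 := ⟨k - 1, by omega⟩
    -- next letter
    have hnext : cs.length v < cs.length (v * cs.simple (if Even (j + 1) then t else s)) := by
      by_contra hcon
      set u := (if Even (j + 1) then t else s) with hu
      have hd : cs.length (v * cs.simple u) + 1 = cs.length v := by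
        rcases cs.length_mul_simple v u with h | h <;> omega
      apply hkmax
      refine ⟨v * cs.simple u, ?_, by omega⟩
      rw [CoxeterSystem.alternatingWord_succ', cs.wordProd_cons, ← hu, hv, ← mul_assoc,
        cs.simple_mul_simple_cancel_right]
    have hprev : cs.length v < cs.length (v * cs.simple (if Even j then t else s)) := by
      by_contra hcon
      set u := (if Even j then t else s) with hu
      have hd : cs.length (v * cs.simple u) + 1 = cs.length v := by
        rcases cs.length_mul_simple v u with h | h <;> omega
      rw [CoxeterSystem.alternatingWord_succ', cs.wordProd_cons, ← hu, ← mul_assoc] at hv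
      have h1 := cs.length_mul_le (v * cs.simple u)
        (cs.wordProd (CoxeterSystem.alternatingWord s t j))
      have h2 := cs.length_wordProd_le (CoxeterSystem.alternatingWord s t j)
      rw [CoxeterSystem.length_alternatingWord] at h2
      rw [← hv] at h1
      omega
    have hboth : 0 ≤ geo cs v (sroot s) ∧ 0 ≤ geo cs v (sroot t) := by
      have hlt : cs.length v < n := by omega
      by_cases hj : Even j
      · have hj1 : ¬ Even (j + 1) := by rw [Nat.even_add_one]; exact not_not.mpr hj
        rw [if_neg hj1] at hnext
        rw [if_pos hj] at hprev
        exact ⟨IH _ hlt v rfl s hnext, IH _ hlt v rfl t hprev⟩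
      · have hj1 : Even (j + 1) := by rw [Nat.even_add_one]; exact hj
        rw [if_pos hj1] at hnext
        rw [if_neg hj] at hprev
        exact ⟨IH _ hlt v rfl s hprev, IH _ hlt v rfl t hnext⟩
    have hkm : M s t = 0 ∨ j + 1 + 1 ≤ M s t := by
      by_contra! hcon
      obtain ⟨hm0, hlt⟩ := hcon
      have hred := cs.not_isReduced_alternatingWord t s (m := j + 1 + 1)
        (by rwa [M.symmetric t s]) (by rw [M.symmetric t s]; omega)
      have h2 := cs.length_wordProd_le (CoxeterSystem.alternatingWord t s (j + 1 + 1))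
      unfold CoxeterSystem.IsReduced at hred
      rw [CoxeterSystem.length_alternatingWord] at h2 hred
      have h3 : w * cs.simple s = v * cs.wordProd (CoxeterSystem.alternatingWord t s (j + 1 + 1)) := by
        rw [CoxeterSystem.alternatingWord_succ t s, List.concat_eq_append, cs.wordProd_append, hv, mul_assoc,
          cs.wordProd_singleton]
      have h4 := cs.length_mul_le v (cs.wordProd (CoxeterSystem.alternatingWord t s (j + 1 + 1)))
      rw [← h3] at h4
      omega
    rw [hv, geo_mul, geo_alternating cs s t hst]
    have n1 : 0 ≤ useq (M s t) (j + 1) := useq_nonneg hm _ (by omega)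
    have n2 : 0 ≤ useq (M s t) (j + 1 + 1) := useq_nonneg hm _ (by omega)
    split_ifs
    · exact geo_nonneg_mono cs v n2 n1 hboth.1 hboth.2
    · exact geo_nonneg_mono cs v n1 n2 hboth.1 hboth.2

theorem geo_pos {w : W} {s : B} (h : cs.length w < cs.length (w * cs.simple s)) :
    0 ≤ geo cs w (sroot s) := positivity_aux cs _ w rfl s h

theorem geo_neg {w : W} {s : B} (h : cs.length (w * cs.simple s) < cs.length w) :
    geo cs w (sroot s) ≤ 0 := by
  have h1 := geo_pos cs (w := w * cs.simple s) (s := s)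
    (by rwa [cs.simple_mul_simple_cancel_right])
  rw [geo_mul, geo_simple, sref_sroot, cf_self] at h1
  have : sroot s + (-2 : ℝ) • sroot s = - sroot s := by module
  rw [this, map_neg] at h1
  exact neg_nonneg.mp h1

theorem geo_injective : Function.Injective (geo cs) := by
  rw [injective_iff_map_eq_one]
  intro w hw
  by_contra hne
  obtain ⟨t, ht⟩ := cs.exists_rightDescent_of_ne_one hne
  have := geo_neg cs ht
  rw [hw] at this
  exact sroot_ne t (le_antisymm this (sroot_nonneg t))

end CoxeterPart
section RootPart

variable {B : Type} [Fintype B] [DecidableEq B] {M : CoxeterMatrix B}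
  {W : Type*} [Group W] (cs : CoxeterSystem M W)

/-- the invariant form -/
noncomputable def bform (M : CoxeterMatrix B) (u v : B → ℝ) : ℝ := ∑ i, u i * cform M i v

theorem bform_sub_left (u u' v : B → ℝ) (c : ℝ) :
    bform M (u - c • u') v = bform M u v - c * bform M u' v := by
  simp only [bform, Pi.sub_apply, Pi.smul_apply, smul_eq_mul, Finset.mul_sum,
    ← Finset.sum_sub_distrib]
  exact Finset.sum_congr rfl fun i _ => by ring

theorem bform_symm (u v : B → ℝ) : bform M u v = bform M v u := by
  simp only [bform, cform_apply, mul_neg, Finset.sum_neg_distrib, Finset.mul_sum]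
  rw [Finset.sum_comm]
  congr 1
  refine Finset.sum_congr rfl fun i _ => Finset.sum_congr rfl fun j _ => ?_
  rw [cf_symm M i j]
  ring

theorem bform_sroot (i : B) (v : B → ℝ) : bform M (sroot i) v = cform M i v := by
  simp [bform, sroot, Pi.single_apply]

theorem bform_sref (i : B) (u v : B → ℝ) : bform M (sref M i u) (sref M i v) = bform M u v := by
  rw [sref_apply, sref_apply, bform_sub_left, bform_symm u, bform_symm (sroot i), bform_sub_left,
    bform_sub_left, bform_symm v u, bform_symm v (sroot i)]
  simp only [bform_sroot, cform_self]
  ring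

theorem bform_geo (w : W) (u v : B → ℝ) : bform M (geo cs w u) (geo cs w v) = bform M u v := by
  induction w using cs.simple_induction_left with
  | one => rw [map_one]; rfl
  | mul_simple_left w i ih => rw [geo_mul, geo_mul, geo_simple, bform_sref, ih]

/-- roots -/
def IsRt (β : B → ℝ) : Prop := ∃ (w : W) (i : B), β = geo cs w (sroot i)

theorem IsRt.geo {β : B → ℝ} (h : IsRt cs β) (w : W) : IsRt cs (geo cs w β) := by
  obtain ⟨v, i, rfl⟩ := h
  exact ⟨w * v, i, (geo_mul cs w v _).symm⟩

theorem isRt_sroot (i : B) : IsRt cs (sroot i) := ⟨1, i, by rw [map_one]; rfl⟩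

theorem IsRt.ne_zero {β : B → ℝ} (h : IsRt cs β) : β ≠ 0 := by
  obtain ⟨v, i, rfl⟩ := h
  intro h0
  exact sroot_ne i ((LinearEquiv.map_eq_zero_iff _).mp h0)

theorem IsRt.bform_self {β : B → ℝ} (h : IsRt cs β) : bform M β β = 2 := by
  obtain ⟨v, i, rfl⟩ := h
  rw [bform_geo, bform_sroot, cform_self]

theorem IsRt.nonneg_or {β : B → ℝ} (h : IsRt cs β) : 0 ≤ β ∨ β ≤ 0 := by
  obtain ⟨v, i, rfl⟩ := h
  rcases cs.length_mul_simple v i with h | h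
  · exact Or.inl (geo_pos cs (by omega))
  · exact Or.inr (geo_neg cs (by omega))

theorem sref_sref (i : B) (v : B → ℝ) : sref M i (sref M i v) = v :=
  Module.involutive_reflection (cform_self M i) v

theorem sref_self (i : B) : sref M i (sroot i) = - sroot i := by
  rw [sref_sroot, cf_self]; module

theorem IsRt.sref {β : B → ℝ} (h : IsRt cs β) (i : B) : IsRt cs (sref M i β) := by
  rw [← geo_simple cs]; exact h.geo cs _

theorem IsRt.neg {β : B → ℝ} (h : IsRt cs β) : IsRt cs (-β) := by
  obtain ⟨v, i, rfl⟩ := h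
  refine ⟨v * cs.simple i, i, ?_⟩
  rw [geo_mul, geo_simple, sref_self, map_neg]

theorem IsRt.sref_nonneg {β : B → ℝ} (h : IsRt cs β) (h0 : 0 ≤ β) (i : B) (hne : β ≠ sroot i) :
    0 ≤ _root_.sref M i β := by
  rcases (h.sref cs i).nonneg_or cs with h1 | h1
  · exact h1
  exfalso
  apply hne
  have hj : ∀ j, j ≠ i → β j = 0 := by
    intro j hj
    have h2 := h1 j
    rw [sref_apply] at h2
    have : (sroot i : B → ℝ) j = 0 := by simp [sroot, hj]
    simp only [Pi.sub_apply, Pi.smul_apply, this, smul_zero, sub_zero, Pi.zero_apply] at h2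
    exact le_antisymm h2 (h0 j)
  have hβ : β = β i • sroot i := by
    ext j
    by_cases hji : j = i
    · subst hji; simp [sroot]
    · rw [hj j hji]; simp [sroot, hji]
  have hb := h.bform_self cs
  have hc : bform M β β = β i * β i * 2 := by
    conv_lhs => rw [hβ]
    have e : ∀ u v : B → ℝ, bform M (β i • u) v = β i * bform M u v := by
      intro u v
      simp [bform, Finset.mul_sum, mul_assoc]
    rw [e, bform_symm, e, bform_sroot, cform_self]
    ring
  rw [hc] at hb
  have hi : β i = 1 := by
    have := h0 i
    simp only [Pi.zero_apply] at this
    nlinarith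
  rw [hβ, hi, one_smul]

/-- positive roots -/
def PosRt : Set (B → ℝ) := {β | IsRt cs β ∧ 0 ≤ β}

/-- inversions -/
def InvRt (w : W) : Set (B → ℝ) := {β | β ∈ PosRt cs ∧ ¬ 0 ≤ geo cs w β}

theorem invRt_finite (w : W) : (InvRt cs w).Finite := by
  induction w using cs.simple_induction_left with
  | one =>
    convert Set.finite_empty
    ext β
    simp only [InvRt, Set.mem_setOf_eq, Set.mem_empty_iff_false, iff_false, not_and, not_not]
    intro h
    rw [map_one]
    exact h.2
  | mul_simple_left w i ih =>
    refine (ih.union (Set.finite_singleton (geo cs w⁻¹ (sroot i)))).subset ?_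
    rintro β ⟨hβ, hn⟩
    by_cases h : 0 ≤ geo cs w β
    · right
      rw [geo_mul, geo_simple] at hn
      by_contra hne
      apply hn
      refine IsRt.sref_nonneg cs (hβ.1.geo cs w) h i ?_
      intro h2
      apply hne
      rw [← h2, geo_inv_self]
      rfl
    · exact Or.inl ⟨hβ, h⟩

theorem length_le_ncard (n : ℕ) : ∀ w : W, cs.length w = n → n ≤ (InvRt cs w).ncard := by
  induction n with
  | zero => intro w _; exact Nat.zero_le _
  | succ n ih =>
    intro w hw
    have hw1 : w ≠ 1 := by
      rintro rfl
      simp at hw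
    obtain ⟨i, hi⟩ := cs.exists_rightDescent_of_ne_one hw1
    have hl : cs.length (w * cs.simple i) = n := by
      have := cs.isRightDescent_iff.mp hi
      omega
    have h1 := ih _ hl
    have hneg := geo_neg cs hi
    have hmem : sroot i ∈ InvRt cs w := by
      refine ⟨⟨isRt_sroot cs i, sroot_nonneg i⟩, fun h => ?_⟩
      exact ((isRt_sroot cs i).geo cs w).ne_zero cs (le_antisymm hneg h)
    have hsub : InvRt cs (w * cs.simple i) ⊆ (sref M i) '' (InvRt cs w \ {sroot i}) := by
      rintro β ⟨hβ, hn⟩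
      rw [geo_mul, geo_simple] at hn
      have hne : β ≠ sroot i := by
        rintro rfl
        apply hn
        rw [sref_self, map_neg]
        exact neg_nonneg.mpr hneg
      refine ⟨sref M i β, ⟨⟨⟨hβ.1.sref cs i, hβ.1.sref_nonneg cs hβ.2 i hne⟩, hn⟩, ?_⟩, sref_sref i β⟩
      intro h
      have h2 : β = - sroot i := by
        rw [← sref_self (M := M), ← (h : sref M i β = sroot i), sref_sref]
      have h3 := hβ.2
      rw [h2] at h3
      exact sroot_ne i (le_antisymm (neg_nonneg.mp h3) (sroot_nonneg i))
    have hfin := invRt_finite cs w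
    have h2 := Set.ncard_le_ncard hsub ((hfin.subset Set.diff_subset).image _)
    have h3 := Set.ncard_image_le (f := sref M i) (hfin.subset (Set.diff_subset (t := {sroot i})))
    have h4 := Set.ncard_diff_singleton_add_one hmem hfin
    omega

theorem finite_length_le (n : ℕ) : {w : W | cs.length w ≤ n}.Finite := by
  refine ((List.finite_length_le B n).image cs.wordProd).subset ?_
  intro w hw
  obtain ⟨ω, hω, rfl⟩ := cs.exists_isReduced w
  refine ⟨ω, ?_, rfl⟩
  have := hω.eq
  simp only [Set.mem_setOf_eq] at hw ⊢
  omega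

/-- positive roots that are nonpositive on `p` -/
def NPos (p : Module.Dual ℝ (B → ℝ)) : Set (B → ℝ) := {β | β ∈ PosRt cs ∧ p β ≤ 0}

theorem length_bound (p : Module.Dual ℝ (B → ℝ)) (hp : (NPos cs p).Finite) (w : W)
    (h : ∀ β, IsRt cs β → 0 < p β → 0 < p (geo cs w β)) :
    cs.length w ≤ (NPos cs p).ncard + (NPos cs p).ncard := by
  refine (length_le_ncard cs _ w rfl).trans ?_
  have hsub : InvRt cs w ⊆ NPos cs p ∪ (fun γ => - geo cs w⁻¹ γ) '' NPos cs p := by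
    rintro β ⟨hβ, hn⟩
    by_cases h0 : p β ≤ 0
    · exact Or.inl ⟨hβ, h0⟩
    · right
      have h1 := h β hβ.1 (not_le.mp h0)
      have hr := hβ.1.geo cs w
      refine ⟨- geo cs w β, ⟨⟨hr.neg cs, ?_⟩, ?_⟩, ?_⟩
      · exact neg_nonneg.mpr ((hr.nonneg_or cs).resolve_left hn)
      · rw [map_neg]; linarith
      · simp only [map_neg, neg_neg]
        exact geo_inv_self cs w β
  calc (InvRt cs w).ncard ≤ (NPos cs p ∪ (fun γ => - geo cs w⁻¹ γ) '' NPos cs p).ncard :=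
        Set.ncard_le_ncard hsub (hp.union (hp.image _))
    _ ≤ _ := Set.ncard_union_le _ _
    _ ≤ _ := Nat.add_le_add_left (Set.ncard_image_le hp) _

theorem finite_of_sign (p : Module.Dual ℝ (B → ℝ)) (hp : (NPos cs p).Finite) :
    {w : W | ∀ β, IsRt cs β → 0 < p β → 0 < p (geo cs w β)}.Finite :=
  (finite_length_le cs ((NPos cs p).ncard + (NPos cs p).ncard)).subset
    fun w hw => length_bound cs p hp w hw

/-- stabilizer of a functional -/
def stab (p : Module.Dual ℝ (B → ℝ)) : Subgroup W where
  carrier := {w | ∀ v, p (geo cs w v) = p v}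
  one_mem' := by intro v; rw [map_one]; rfl
  mul_mem' := by
    intro a b ha hb v
    rw [geo_mul, ha, hb]
  inv_mem' := by
    intro a ha v
    rw [← ha (geo cs a⁻¹ v), geo_self_inv]

theorem mem_stab {p : Module.Dual ℝ (B → ℝ)} {w : W} :
    w ∈ stab cs p ↔ ∀ v, p (geo cs w v) = p v := Iff.rfl

theorem stab_finite (p : Module.Dual ℝ (B → ℝ)) (hp : (NPos cs p).Finite) :
    Finite (stab cs p) := by
  have : ((stab cs p : Subgroup W) : Set W).Finite :=
    (finite_of_sign cs p hp).subset fun w hw β _ h => by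
      rw [hw β]; exact h
  exact this.to_subtype

/-- sum of coordinates -/
noncomputable def ysum : Module.Dual ℝ (B → ℝ) := ∑ j, LinearMap.proj j

theorem ysum_pos {β : B → ℝ} (h : 0 ≤ β) (hne : β ≠ 0) : 0 < ysum β := by
  have : ysum β = ∑ j, β j := by simp [ysum]
  rw [this]
  refine Finset.sum_pos' (fun j _ => h j) ?_
  by_contra! hc
  exact hne (funext fun j => le_antisymm (hc j (Finset.mem_univ j)) (h j))

/-- the averaged functional -/
noncomputable def xavg (F : Subgroup W) [Fintype F] : Module.Dual ℝ (B → ℝ) :=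
  ∑ f : F, (ysum : Module.Dual ℝ (B → ℝ)).comp (geo cs (f : W)).toLinearMap

theorem xavg_apply (F : Subgroup W) [Fintype F] (v : B → ℝ) :
    xavg cs F v = ∑ f : F, ysum (geo cs (f : W) v) := by
  simp [xavg]

theorem xavg_stab (F : Subgroup W) [Fintype F] : F ≤ stab cs (xavg cs F) := by
  intro g hg v
  rw [xavg_apply, xavg_apply]
  refine Fintype.sum_equiv (Equiv.mulRight ⟨g, hg⟩) _ _ ?_
  intro f
  rw [← geo_mul]
  rfl

theorem xavg_npos (F : Subgroup W) [Fintype F] : (NPos cs (xavg cs F)).Finite := by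
  refine (Set.finite_iUnion fun f : F => invRt_finite cs (f : W)).subset ?_
  rintro β ⟨hβ, h0⟩
  rw [Set.mem_iUnion]
  by_contra! hc
  rw [xavg_apply] at h0
  have : 0 < ∑ f : F, ysum (geo cs (f : W) β) := by
    refine Finset.sum_pos (fun f _ => ?_) ⟨1, Finset.mem_univ _⟩
    have h1 : 0 ≤ geo cs (f : W) β := by
      by_contra h2
      exact hc f ⟨hβ, h2⟩
    exact ysum_pos h1 ((hβ.1.geo cs _).ne_zero cs)
  linarith

theorem exists_dominant (n : ℕ) : ∀ p : Module.Dual ℝ (B → ℝ),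
    {β | β ∈ PosRt cs ∧ p β < 0}.Finite → {β | β ∈ PosRt cs ∧ p β < 0}.ncard = n →
    ∃ w : W, ∀ i, 0 ≤ p (geo cs w (sroot i)) := by
  induction n using Nat.strong_induction_on with
  | _ n IH =>
    intro p hp hn
    by_cases h : ∀ i, 0 ≤ p (sroot i)
    · refine ⟨1, fun i => ?_⟩
      rw [map_one]
      exact h i
    push Not at h
    obtain ⟨i, hi⟩ := h
    set q : Module.Dual ℝ (B → ℝ) := p.comp (sref M i).toLinearMap with hq
    have hqa : ∀ v, q v = p (sref M i v) := fun v => rfl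
    have hsub : {β | β ∈ PosRt cs ∧ q β < 0} ⊆
        (sref M i) '' ({β | β ∈ PosRt cs ∧ p β < 0} \ {sroot i}) := by
      rintro β ⟨hβ, hqβ⟩
      rw [hqa] at hqβ
      have hne : β ≠ sroot i := by
        rintro rfl
        rw [sref_self, map_neg] at hqβ
        linarith
      refine ⟨sref M i β, ⟨⟨⟨hβ.1.sref cs i, hβ.1.sref_nonneg cs hβ.2 i hne⟩, hqβ⟩, ?_⟩,
        sref_sref i β⟩
      intro h
      have h2 : β = - sroot i := by
        rw [← sref_self (M := M), ← (h : sref M i β = sroot i), sref_sref]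
      have h3 := hβ.2
      rw [h2] at h3
      exact sroot_ne i (le_antisymm (neg_nonneg.mp h3) (sroot_nonneg i))
    have hmem : sroot i ∈ {β | β ∈ PosRt cs ∧ p β < 0} :=
      ⟨⟨isRt_sroot cs i, sroot_nonneg i⟩, hi⟩
    have hfin2 := (hp.subset (Set.diff_subset (t := {sroot i}))).image (sref M i)
    have h2 := Set.ncard_le_ncard hsub hfin2
    have h3 := Set.ncard_image_le (f := sref M i) (hp.subset (Set.diff_subset (t := {sroot i})))
    have h4 := Set.ncard_diff_singleton_add_one hmem hp
    obtain ⟨w, hw⟩ := IH _ (by omega) q (hfin2.subset hsub) rfl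
    refine ⟨cs.simple i * w, fun j => ?_⟩
    rw [geo_mul, geo_simple]
    exact hw j

/-- standard parabolic subgroup -/
def parab (T : Set B) : Subgroup W := Subgroup.closure (cs.simple '' T)

theorem simple_mem_stab {p : Module.Dual ℝ (B → ℝ)} {i : B} (h : p (sroot i) = 0) :
    cs.simple i ∈ stab cs p := by
  intro v
  rw [geo_simple, sref_apply, map_sub, map_smul, h, smul_zero, sub_zero]

theorem dominant_nonneg {p : Module.Dual ℝ (B → ℝ)} (h : ∀ i, 0 ≤ p (sroot i)) {v : B → ℝ}
    (hv : 0 ≤ v) : 0 ≤ p v := by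
  have : v = ∑ j, v j • sroot j := by
    ext k
    simp [sroot, Pi.single_apply]
  rw [this, map_sum]
  refine Finset.sum_nonneg fun j _ => ?_
  rw [map_smul]
  exact mul_nonneg (hv j) (h j)

theorem stab_eq_parab (p : Module.Dual ℝ (B → ℝ)) (h : ∀ i, 0 ≤ p (sroot i)) :
    stab cs p = parab cs {i | p (sroot i) = 0} := by
  apply le_antisymm
  · have key : ∀ n, ∀ g : W, cs.length g = n → g ∈ stab cs p →
        g ∈ parab cs {i | p (sroot i) = 0} := by
      intro n
      induction n with
      | zero =>
        intro g hg _
        rw [cs.length_eq_zero_iff] at hg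
        rw [hg]
        exact one_mem _
      | succ n ih =>
        intro g hg hgs
        have hg1 : g ≠ 1 := by
          rintro rfl
          simp at hg
        obtain ⟨i, hi⟩ := cs.exists_rightDescent_of_ne_one hg1
        have hneg := geo_neg cs hi
        have h1 : p (sroot i) = 0 := by
          apply le_antisymm _ (h i)
          rw [← hgs (sroot i)]
          have := dominant_nonneg h (neg_nonneg.mpr hneg)
          rw [map_neg] at this
          linarith
        have hl : cs.length (g * cs.simple i) = n := by
          have := cs.isRightDescent_iff.mp hi
          omega
        have h2 := ih _ hl (mul_mem hgs (simple_mem_stab cs h1))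
        have h3 : cs.simple i ∈ parab cs {i | p (sroot i) = 0} :=
          Subgroup.subset_closure ⟨i, h1, rfl⟩
        have := mul_mem h2 h3
        rwa [cs.simple_mul_simple_cancel_right] at this
    exact fun g hg => key _ g rfl hg
  · rw [parab, Subgroup.closure_le]
    rintro _ ⟨i, hi, rfl⟩
    exact simple_mem_stab cs hi

/-- union of the finite standard parabolic subgroups -/
def Efin : Set W := ⋃ T : {T : Set B // Finite (parab cs T)}, (parab cs T.1 : Set W)

theorem efin_finite : (Efin cs).Finite := by
  refine Set.finite_iUnion fun T => ?_
  have := T.2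
  exact Set.toFinite _

theorem conj_into_efin (F : Subgroup W) (hF : Finite F) :
    ∃ g : W, ∀ f ∈ F, g * f * g⁻¹ ∈ Efin cs := by
  have := Fintype.ofFinite F
  set x := xavg cs F with hx
  have hnp := xavg_npos cs F
  have hneg : {β | β ∈ PosRt cs ∧ x β < 0}.Finite :=
    hnp.subset fun β hβ => ⟨hβ.1, hβ.2.le⟩
  obtain ⟨w, hw⟩ := exists_dominant cs _ x hneg rfl
  set p : Module.Dual ℝ (B → ℝ) := x.comp (geo cs w).toLinearMap with hp
  have hpa : ∀ v, p v = x (geo cs w v) := fun v => rfl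
  have hst := stab_eq_parab cs p hw
  have hconj : ∀ g, g ∈ stab cs p ↔ w * g * w⁻¹ ∈ stab cs x := by
    intro g
    rw [mem_stab, mem_stab]
    constructor
    · intro h v
      have := h (geo cs w⁻¹ v)
      rw [hpa, hpa, geo_self_inv] at this
      rw [geo_mul, geo_mul, this]
    · intro h v
      have := h (geo cs w v)
      rw [geo_mul, geo_mul, geo_inv_self] at this
      rw [hpa, hpa, this]
  have hfs := stab_finite cs x hnp
  have hfp : Finite (stab cs p) := by
    refine Finite.of_injective
      (fun g : stab cs p => (⟨w * g * w⁻¹, (hconj g).mp g.2⟩ : stab cs x)) ?_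
    intro a b hab
    have := congrArg Subtype.val hab
    ext
    simpa using this
  refine ⟨w⁻¹, fun f hf => ?_⟩
  rw [hst] at hfp
  refine Set.mem_iUnion.mpr ⟨⟨_, hfp⟩, ?_⟩
  show w⁻¹ * f * w⁻¹⁻¹ ∈ parab cs _
  rw [← hst, hconj]
  have : w * (w⁻¹ * f * w⁻¹⁻¹) * w⁻¹ = f := by group
  rw [this]
  exact xavg_stab cs F hf

theorem card_le_efin (F : Subgroup W) (hF : Finite F) : Nat.card F ≤ (Efin cs).ncard := by
  obtain ⟨g, hg⟩ := conj_into_efin cs F hF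
  have := (efin_finite cs).to_subtype
  rw [← Nat.card_coe_set_eq]
  refine Nat.card_le_card_of_injective
    (fun f : F => (⟨g * f * g⁻¹, hg f f.2⟩ : Efin cs)) ?_
  intro a b hab
  have := congrArg Subtype.val hab
  ext
  simpa using this

theorem exists_max (cs : CoxeterSystem M W) : ∃ H : Subgroup W, Finite H ∧
    ∀ F : Subgroup W, Finite F → H ≤ F → F = H := by
  let S : Set ℕ := {n | ∃ F : Subgroup W, Finite F ∧ Nat.card F = n}
  have hne : S.Nonempty := ⟨_, ⊥, inferInstance, rfl⟩
  have hb : BddAbove S := ⟨(Efin cs).ncard, by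
    rintro _ ⟨F, hF, rfl⟩
    exact card_le_efin cs F hF⟩
  obtain ⟨H, hH, hc⟩ := Nat.sSup_mem hne hb
  refine ⟨H, hH, fun F hF hle => ?_⟩
  have h1 : Nat.card F ≤ Nat.card H := by
    rw [hc]
    exact le_csSup hb ⟨F, hF, rfl⟩
  exact (Subgroup.eq_of_le_of_card_ge hle h1).symm

theorem centralizer_finite (cs : CoxeterSystem M W) (H : Subgroup W) (hH : Finite H)
    (hmax : ∀ F : Subgroup W, Finite F → H ≤ F → F = H) :
    {g : W | ∀ h ∈ H, g * h = h * g}.Finite := by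
  have := Fintype.ofFinite H
  set x := xavg cs H with hx
  have hnp : (NPos cs x).Finite := xavg_npos cs H
  have hHx : H ≤ stab cs x := xavg_stab cs H
  refine (finite_of_sign cs x hnp).subset ?_
  intro c hc β hβ hpos
  by_contra hcon
  rw [not_lt] at hcon
  set b := x β with hb
  set b' := x (geo cs c β) with hb'
  have hd : 0 < b - b' := by linarith
  -- the point on the segment (unnormalised)
  set p : Module.Dual ℝ (B → ℝ) := (-b') • x + b • x.comp (geo cs c).toLinearMap with hp
  have hpa : ∀ v, p v = (-b') * x v + b * x (geo cs c v) := fun v => rfl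
  have hpβ : p β = 0 := by rw [hpa]; ring
  have hnp2 : (NPos cs p).Finite := by
    have hf1 : ((geo cs c) ⁻¹' (NPos cs x)).Finite :=
      hnp.preimage ((geo cs c).injective.injOn)
    refine (hnp.union ((invRt_finite cs c).union hf1)).subset ?_
    rintro γ ⟨hγ, h0⟩
    by_cases h1 : x γ ≤ 0
    · exact Or.inl ⟨hγ, h1⟩
    · right
      by_cases h2 : 0 ≤ geo cs c γ
      · right
        refine ⟨⟨hγ.1.geo cs c, h2⟩, ?_⟩
        rw [hpa] at h0
        by_contra h3
        have h4 : 0 ≤ -b' * x γ := mul_nonneg (by linarith) (by linarith)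
        have h5 : 0 < b * x (geo cs c γ) := mul_pos hpos (not_le.mp h3)
        linarith
      · exact Or.inl ⟨hγ, h2⟩
  have hHp : H ≤ stab cs p := by
    intro h hh v
    have h1 := hHx hh
    rw [hpa, hpa, h1 v, ← geo_mul, hc h hh, geo_mul, h1]
  have hsp := hmax (stab cs p) (stab_finite cs p hnp2) hHp
  obtain ⟨g, i, hgi⟩ := hβ
  have hr : g * cs.simple i * g⁻¹ ∈ stab cs p := by
    intro v
    rw [geo_mul, geo_mul, geo_simple, sref_apply, map_sub, map_smul, geo_self_inv, ← hgi, map_sub,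
      map_smul, hpβ, smul_zero, sub_zero]
  rw [hsp] at hr
  have h1 := hHx hr β
  rw [geo_mul, geo_mul, geo_simple, hgi, geo_inv_self, sref_self, map_neg, ← hgi, map_neg] at h1
  linarith

end RootPart
section IntegralPart

open Real

variable {B : Type} [Fintype B] [DecidableEq B] (M : CoxeterMatrix B)

theorem cf_integral (i j : B) : IsIntegral ℤ (cf M i j) := by
  have h := Real.isIntegral_two_mul_cos_rat_mul_pi (1 / (M i j : ℚ))
  have e : cf M i j = 2 * cos (((1 / (M i j : ℚ) : ℚ) : ℝ) * π) := by
    rw [cf]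
    push_cast
    congr 2
    ring
  rw [e]
  exact h

/-- the ring generated by the coefficients -/
def cring : Subalgebra ℤ ℝ := Algebra.adjoin ℤ (Set.range fun ij : B × B => cf M ij.1 ij.2)

theorem cf_mem (i j : B) : cf M i j ∈ cring M :=
  Algebra.subset_adjoin ⟨(i, j), rfl⟩

theorem cring_fg : (Subalgebra.toSubmodule (cring M)).FG := by
  refine fg_adjoin_of_finite (Set.finite_range _) ?_
  rintro _ ⟨ij, rfl⟩
  exact cf_integral M _ _

/-- the invariant lattice -/
def latt : Submodule ℤ (B → ℝ) :=
  Submodule.pi Set.univ (fun _ => Subalgebra.toSubmodule (cring M))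

theorem mem_latt {v : B → ℝ} : v ∈ latt M ↔ ∀ j, v j ∈ cring M := by
  simp [latt, Submodule.mem_pi]

theorem latt_fg : (latt M).FG := Submodule.fg_pi fun _ => cring_fg M

theorem sroot_mem_latt (i : B) : sroot i ∈ latt M := by
  rw [mem_latt]
  intro j
  by_cases h : j = i
  · subst h; simp [sroot]
  · simp [sroot, h]

theorem sref_mem_latt (i : B) {v : B → ℝ} (hv : v ∈ latt M) : sref M i v ∈ latt M := by
  rw [mem_latt] at hv ⊢
  have h0 := (mem_latt M).mp (sroot_mem_latt M i)
  intro j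
  rw [sref_apply, cform_apply]
  exact sub_mem (hv j) (mul_mem (neg_mem (sum_mem fun k _ => mul_mem (cf_mem M i k) (hv k))) (h0 j))

variable {M} {W : Type*} [Group W] (cs : CoxeterSystem M W)

theorem geo_mem_latt (w : W) {v : B → ℝ} (hv : v ∈ latt M) : geo cs w v ∈ latt M := by
  induction w using cs.simple_induction_left with
  | one => rw [map_one]; exact hv
  | mul_simple_left w i ih =>
    rw [geo_mul, geo_simple]
    exact sref_mem_latt M i ih

/-- the representation on the lattice -/
noncomputable def lattRep : W →* Module.End ℤ (latt M) where
  toFun w := (((geo cs w).toLinearMap.restrictScalars ℤ)).restrict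
    (p := latt M) (q := latt M) (fun _ hv => geo_mem_latt cs w hv)
  map_one' := by
    ext1 v
    apply Subtype.ext
    show geo cs 1 v.1 = v.1
    rw [map_one]; rfl
  map_mul' a b := by
    ext1 v
    apply Subtype.ext
    exact geo_mul cs a b v.1

theorem lattRep_apply (w : W) (v : latt M) : ((lattRep cs w v : latt M) : B → ℝ) = geo cs w v := rfl

theorem lattRep_injective : Function.Injective (lattRep cs) := by
  intro a b hab
  apply geo_injective cs
  have h : ∀ i, geo cs a (sroot i) = geo cs b (sroot i) := by
    intro i
    have := congrArg (fun f => ((f ⟨sroot i, sroot_mem_latt M i⟩ : latt M) : B → ℝ)) hab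
    exact this
  apply LinearEquiv.toLinearMap_injective
  refine (Pi.basisFun ℝ B).ext fun i => ?_
  rw [Pi.basisFun_apply]
  exact h i

theorem exists_int_rep (cs : CoxeterSystem M W) :
    ∃ (N : ℕ) (ρ : W →* Matrix.GeneralLinearGroup (Fin N) ℤ), Function.Injective ρ := by
  have : Module.Finite ℤ (latt M) := Module.Finite.iff_fg.mpr (latt_fg M)
  have : Module.Free ℤ (latt M) := inferInstance
  let e := LinearMap.toMatrixAlgEquiv (Module.finBasis ℤ (latt M))
  let f : W →* Matrix (Fin (Module.finrank ℤ (latt M))) (Fin (Module.finrank ℤ (latt M))) ℤ :=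
    (e : _ →* _).comp (lattRep cs)
  refine ⟨Module.finrank ℤ (latt M), f.toHomUnits, fun a b hab => ?_⟩
  apply lattRep_injective cs
  apply e.injective
  exact congrArg Units.val hab

end IntegralPart

theorem group_fg_of_coxeter {B : Type} [Finite B] {M : CoxeterMatrix B} {W : Type*} [Group W]
    (cs : CoxeterSystem M W) : Group.FG W :=
  Group.fg_iff.mpr ⟨_, cs.subgroup_closure_range_simple, Set.finite_range _⟩

/-- If `G` is a finitely generated Coxeter group, then `Out(G)` is residually
finite and virtually torsion-free. -/
theorem statement4 (G : Type*) [Group G]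
    (hcox : ∃ (B : Type) (_ : Finite B) (M : CoxeterMatrix B), Nonempty (CoxeterSystem M G)) :
    ResiduallyFinite (Out G) ∧
      ∃ O : Subgroup (Out G), O.FiniteIndex ∧ ∀ x : O, IsOfFinOrder x → x = 1 := by
  classical
  obtain ⟨B, hB, M, ⟨cs⟩⟩ := hcox
  have := Fintype.ofFinite B
  have := group_fg_of_coxeter cs
  obtain ⟨N, ρ, hρ⟩ := exists_int_rep cs
  obtain ⟨H, hH, hmax⟩ := exists_max cs
  exact main_of ρ hρ H (centralizer_finite cs H hH hmax) (Efin cs) (efin_finite cs)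
    (conj_into_efin cs)
end

section
/- Let G be a one-relator group with torsion, i.e. G = ⟨x₁, ..., x_k | Rⁿ⟩ where R is a nontrivial element of the free group on x₁, ..., x_k and n > 1. Then the canonical projection f : Aut(G) → Out(G) splits virtually. -/
section SLtwo

/-- upper shear -/
def shear {A : Type*} [CommRing A] (l : A) : Matrix.SpecialLinearGroup (Fin 2) A :=
  ⟨!![1, l; 0, 1], by simp [Matrix.det_fin_two]⟩

theorem shear_coe {A : Type*} [CommRing A] (l : A) :
    (shear l : Matrix (Fin 2) (Fin 2) A) = !![1, l; 0, 1] := rfl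

/-- a word in matrices, with controlled degrees -/
def DegOK {k : Type*} [Field k] (Q : Matrix (Fin 2) (Fin 2) (Polynomial k)) (l : ℕ) : Prop :=
  (∀ a b, (Q a b).natDegree ≤ l) ∧ (Q 1 0).coeff l ≠ 0

theorem degOK_mul {k : Type*} [Field k] {Q₁ Q₂ : Matrix (Fin 2) (Fin 2) (Polynomial k)} {l₁ l₂ : ℕ}
    (h₁ : DegOK Q₁ l₁) (h₂ : DegOK Q₂ l₂) {δ : k} (hδ : δ ≠ 0) :
    DegOK (Q₁ * (shear (Polynomial.C δ * Polynomial.X) : Matrix.SpecialLinearGroup (Fin 2) (Polynomial k)).1 * Q₂)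
      (l₁ + l₂ + 1) := by
  have key : ∀ a b, (Q₁ * (shear (Polynomial.C δ * Polynomial.X) : Matrix.SpecialLinearGroup (Fin 2) (Polynomial k)).1 * Q₂) a b
      = (Q₁ a 0 * Q₂ 0 b + Q₁ a 1 * Q₂ 1 b) + (Polynomial.C δ * (Q₁ a 0 * Q₂ 1 b)) * Polynomial.X := by
    intro a b
    simp [Matrix.mul_apply, Fin.sum_univ_two, shear]
    ring
  have hd : ∀ a b c d, (Q₁ a b * Q₂ c d).natDegree ≤ l₁ + l₂ := fun a b c d =>
    (Polynomial.natDegree_mul_le).trans (add_le_add (h₁.1 _ _) (h₂.1 _ _))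
  have hs : ∀ a b, (Q₁ a 0 * Q₂ 0 b + Q₁ a 1 * Q₂ 1 b).natDegree ≤ l₁ + l₂ := fun a b =>
    Polynomial.natDegree_add_le_of_degree_le (hd _ _ _ _) (hd _ _ _ _)
  constructor
  · intro a b
    rw [key]
    refine Polynomial.natDegree_add_le_of_degree_le ((hs a b).trans (Nat.le_succ _)) ?_
    refine (Polynomial.natDegree_mul_le).trans (add_le_add ?_ (Polynomial.natDegree_X_le))
    exact (Polynomial.natDegree_C_mul_le _ _).trans (hd _ _ _ _)
  · rw [key, Polynomial.coeff_add, Polynomial.coeff_mul_X, Polynomial.coeff_C_mul,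
      Polynomial.coeff_eq_zero_of_natDegree_lt (lt_of_le_of_lt (hs 1 0) (Nat.lt_succ_self _)), zero_add,
      Polynomial.coeff_mul_add_eq_of_natDegree_le (h₁.1 _ _) (h₂.1 _ _)]
    exact mul_ne_zero hδ (mul_ne_zero h₁.2 h₂.2)

theorem shear_add {A : Type*} [CommRing A] (a b : A) : shear (a + b) = shear a * shear b := by
  apply Subtype.ext
  ext i j
  fin_cases i <;> fin_cases j <;> simp [shear_coe, Matrix.mul_apply, Fin.sum_univ_two, add_comm]

theorem shear_zero {A : Type*} [CommRing A] : shear (0 : A) = 1 := by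
  apply Subtype.ext
  ext i j
  fin_cases i <;> fin_cases j <;> simp [shear]

theorem shear_neg {A : Type*} [CommRing A] (a : A) : shear (-a) = (shear a)⁻¹ := by
  rw [eq_inv_iff_mul_eq_one, ← shear_add, neg_add_cancel, shear_zero]

/-- the generic amalgamated representation -/
noncomputable def polyRep {k : Type*} [Field k] {ι : Type*} {M : ι → Type*} [∀ i, Group (M i)]
    (ρ : ∀ i, M i →* Matrix.SpecialLinearGroup (Fin 2) k) (a : ι → k) :
    Monoid.CoprodI M →* Matrix.SpecialLinearGroup (Fin 2) (Polynomial k) :=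
  Monoid.CoprodI.lift fun i =>
    ((MulAut.conj (shear (Polynomial.C (a i) * Polynomial.X))).toMonoidHom.comp
      (Matrix.SpecialLinearGroup.map Polynomial.C)).comp (ρ i)

theorem polyRep_of {k : Type*} [Field k] {ι : Type*} {M : ι → Type*} [∀ i, Group (M i)]
    (ρ : ∀ i, M i →* Matrix.SpecialLinearGroup (Fin 2) k) (a : ι → k) (i : ι) (m : M i) :
    polyRep ρ a (Monoid.CoprodI.of m) = shear (Polynomial.C (a i) * Polynomial.X) *
      Matrix.SpecialLinearGroup.map Polynomial.C (ρ i m) * (shear (Polynomial.C (a i) * Polynomial.X))⁻¹ := by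
  simp [polyRep]

theorem polyRep_word {k : Type*} [Field k] {ι : Type*} {M : ι → Type*} [∀ i, Group (M i)]
    (ρ : ∀ i, M i →* Matrix.SpecialLinearGroup (Fin 2) k) (a : ι → k) (ha : Function.Injective a)
    {i j : ι} (w : Monoid.CoprodI.NeWord M i j)
    (hw : ∀ s ∈ w.toList, (ρ s.1 s.2).1 1 0 ≠ 0) :
    ∃ (Q : Matrix.SpecialLinearGroup (Fin 2) (Polynomial k)) (l : ℕ), DegOK Q.1 l ∧
      polyRep ρ a w.prod = shear (Polynomial.C (a i) * Polynomial.X) * Q *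
        (shear (Polynomial.C (a j) * Polynomial.X))⁻¹ := by
  induction w with
  | singleton x hne =>
    refine ⟨Matrix.SpecialLinearGroup.map Polynomial.C (ρ _ x), 0, ⟨?_, ?_⟩, ?_⟩
    · intro a b; simp
    · have := hw ⟨_, x⟩ (by simp [Monoid.CoprodI.NeWord.toList])
      simpa using this
    · rw [Monoid.CoprodI.NeWord.prod_singleton, polyRep_of]
  | @append i j k' l' w₁ hne w₂ ih₁ ih₂ =>
    obtain ⟨Q₁, l₁, h₁, e₁⟩ := ih₁ (fun s hs => hw s (by simp [Monoid.CoprodI.NeWord.toList, hs]))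
    obtain ⟨Q₂, l₂, h₂, e₂⟩ := ih₂ (fun s hs => hw s (by simp [Monoid.CoprodI.NeWord.toList, hs]))
    have hδ : a k' - a j ≠ 0 := sub_ne_zero.mpr (fun h => hne (ha h).symm)
    refine ⟨Q₁ * shear (Polynomial.C (a k' - a j) * Polynomial.X) * Q₂, l₁ + l₂ + 1, ?_, ?_⟩
    · simpa using degOK_mul h₁ h₂ hδ
    · rw [Monoid.CoprodI.NeWord.append_prod, map_mul, e₁, e₂, Polynomial.C_sub, sub_mul, sub_eq_neg_add,
        shear_add, shear_neg]
      group

theorem polyRep_word_c {k : Type*} [Field k] {ι : Type*} {M : ι → Type*} [∀ i, Group (M i)]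
    (ρ : ∀ i, M i →* Matrix.SpecialLinearGroup (Fin 2) k) (a : ι → k) (ha : Function.Injective a)
    {i j : ι} (w : Monoid.CoprodI.NeWord M i j)
    (hw : ∀ s ∈ w.toList, (ρ s.1 s.2).1 1 0 ≠ 0) :
    (polyRep ρ a w.prod).1 1 0 ≠ 0 := by
  obtain ⟨Q, l, h, e⟩ := polyRep_word ρ a ha w hw
  have : (polyRep ρ a w.prod).1 1 0 = Q.1 1 0 := by
    rw [e, ← shear_neg]
    simp [shear_coe, Matrix.mul_apply, Matrix.vecMul, dotProduct, Fin.sum_univ_two]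
  rw [this]
  intro h0
  exact h.2 (by simp [h0])

theorem polyRep_word_tr {k : Type*} [Field k] {ι : Type*} {M : ι → Type*} [∀ i, Group (M i)]
    (ρ : ∀ i, M i →* Matrix.SpecialLinearGroup (Fin 2) k) (a : ι → k) (ha : Function.Injective a)
    {i j : ι} (hij : i ≠ j) (w : Monoid.CoprodI.NeWord M i j)
    (hw : ∀ s ∈ w.toList, (ρ s.1 s.2).1 1 0 ≠ 0) :
    ∃ l, (Matrix.trace (polyRep ρ a w.prod).1).coeff (l + 1) ≠ 0 := by
  obtain ⟨Q, l, h, e⟩ := polyRep_word ρ a ha w hw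
  refine ⟨l, ?_⟩
  have : Matrix.trace (polyRep ρ a w.prod).1 = (Q.1 0 0 + Q.1 1 1) +
      (Polynomial.C (a i - a j) * Q.1 1 0) * Polynomial.X := by
    rw [e, ← shear_neg]
    simp [shear_coe, Matrix.mul_apply, Matrix.vecMul, dotProduct, Fin.sum_univ_two, Matrix.trace_fin_two]
    ring
  rw [this, Polynomial.coeff_add, Polynomial.coeff_mul_X, Polynomial.coeff_C_mul,
    Polynomial.coeff_eq_zero_of_natDegree_lt, zero_add]
  · exact mul_ne_zero (sub_ne_zero.mpr fun h => hij (ha h)) h.2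
  · exact Nat.lt_succ_of_le (Polynomial.natDegree_add_le_of_degree_le (h.1 _ _) (h.1 _ _))

/-- specialised representation with prescribed trace -/
theorem exists_rep_trace {k : Type*} [Field k] [IsAlgClosed k] {ι : Type*} {M : ι → Type*}
    [∀ i, Group (M i)]
    (ρ : ∀ i, M i →* Matrix.SpecialLinearGroup (Fin 2) k) (a : ι → k) (ha : Function.Injective a)
    {i j : ι} (hij : i ≠ j) (w : Monoid.CoprodI.NeWord M i j)
    (hw : ∀ s ∈ w.toList, (ρ s.1 s.2).1 1 0 ≠ 0) (τ : k) :
    ∃ σ : Monoid.CoprodI M →* Matrix.SpecialLinearGroup (Fin 2) k,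
      Matrix.trace (σ w.prod).1 = τ ∧
      ∀ i, ∃ u : k, ∀ m : M i, σ (Monoid.CoprodI.of m) = shear u * ρ i m * (shear u)⁻¹ := by
  obtain ⟨l, hl⟩ := polyRep_word_tr ρ a ha hij w hw
  set T := Matrix.trace (polyRep ρ a w.prod).1 with hT
  have hdeg : (T - Polynomial.C τ).degree ≠ 0 := by
    intro h0
    have h1 := Polynomial.eq_C_of_degree_eq_zero h0
    apply hl
    have h2 : T = Polynomial.C ((T - Polynomial.C τ).coeff 0) + Polynomial.C τ := by
      rw [← h1]; ring
    rw [h2]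
    simp [Polynomial.coeff_C_succ]
  obtain ⟨x, hx⟩ := IsAlgClosed.exists_root _ hdeg
  refine ⟨(Matrix.SpecialLinearGroup.map (Polynomial.evalRingHom x)).comp (polyRep ρ a), ?_, ?_⟩
  · have : Matrix.trace ((Matrix.SpecialLinearGroup.map (Polynomial.evalRingHom x)).comp (polyRep ρ a) w.prod).1
      = T.eval x := by
      rw [hT]
      simp [Matrix.trace_fin_two]
    rw [this]
    have := hx
    simpa [Polynomial.IsRoot, sub_eq_zero] using this
  · intro i
    refine ⟨a i * x, fun m => ?_⟩
    have hs : Matrix.SpecialLinearGroup.map (Polynomial.evalRingHom x) (shear (Polynomial.C (a i) * Polynomial.X))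
        = shear (a i * x) := by
      apply Subtype.ext
      ext p q
      fin_cases p <;> fin_cases q <;> simp [shear_coe]
    have hm : Matrix.SpecialLinearGroup.map (Polynomial.evalRingHom x)
        (Matrix.SpecialLinearGroup.map Polynomial.C (ρ i m)) = ρ i m := by
      apply Subtype.ext
      ext p q
      simp
    rw [MonoidHom.comp_apply, polyRep_of, map_mul, map_mul, map_inv, hs, hm]

/-- conjugation to cyclically reduced form in a free product -/
theorem coprodI_cyc {ι : Type*} {M : ι → Type*} [∀ i, Group (M i)] (g : Monoid.CoprodI M) :
    g = 1 ∨ (∃ u i, ∃ m : M i, g = u * Monoid.CoprodI.of m * u⁻¹) ∨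
    (∃ u i j, i ≠ j ∧ ∃ w : Monoid.CoprodI.NeWord M i j, g = u * w.prod * u⁻¹) := by
  classical
  let pr : List (Σ i, M i) → Monoid.CoprodI M := fun L => (L.map fun l => Monoid.CoprodI.of l.2).prod
  have hex : ∃ N : ℕ, ∃ (L : List (Σ i, M i)) (u : Monoid.CoprodI M), L.length = N ∧ g = u * pr L * u⁻¹ := by
    refine ⟨_, (Monoid.CoprodI.Word.equiv g).toList, 1, rfl, ?_⟩
    have : pr (Monoid.CoprodI.Word.equiv g).toList = g := Monoid.CoprodI.Word.equiv.symm_apply_apply g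
    simp [this]
  obtain ⟨L, u, hL, hg⟩ := Nat.find_spec hex
  have hmin : ∀ (L' : List (Σ i, M i)) (v : Monoid.CoprodI M), g = v * pr L' * v⁻¹ → L.length ≤ L'.length := by
    intro L' v h
    rw [hL]
    exact Nat.find_min' hex ⟨L', v, rfl, h⟩
  have h1 : ∀ l ∈ L, l.2 ≠ 1 := by
    intro l hl h1
    obtain ⟨A, B, rfl⟩ := List.append_of_mem hl
    have := hmin (A ++ B) u (by rw [hg]; simp [pr, h1])
    simp at this
  have h2 : L.IsChain (fun l l' => l.1 ≠ l'.1) := by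
    rw [List.isChain_iff_forall_rel_of_append_cons_cons]
    rintro ⟨i, x⟩ ⟨j, y⟩ A B hAB hne
    obtain rfl : i = j := hne
    have := hmin (A ++ ⟨i, x * y⟩ :: B) u (by rw [hg, hAB]; simp [pr, mul_assoc])
    simp [hAB] at this
  by_cases hnil : L = []
  · left; simp [hg, hnil, pr]
  · right
    let W : Monoid.CoprodI.Word M := ⟨L, h1, h2⟩
    obtain ⟨i, j, w, hw⟩ := Monoid.CoprodI.NeWord.of_word W (by
      intro h; exact hnil (congrArg Monoid.CoprodI.Word.toList h))
    have hwL : w.toList = L := congrArg Monoid.CoprodI.Word.toList hw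
    have hprod : w.prod = pr L := by
      rw [Monoid.CoprodI.NeWord.prod, hw]; rfl
    by_cases hij : i = j
    · left
      subst hij
      have hh := w.toList_head?
      have hl := w.toList_getLast?
      rw [hwL] at hh hl
      obtain ⟨A, rfl⟩ : ∃ A, L = ⟨i, w.head⟩ :: A := by
        cases L with
        | nil => simp at hnil
        | cons a A => simp at hh; exact ⟨A, by rw [hh]⟩
      rcases List.eq_nil_or_concat A with rfl | ⟨A', b, rfl⟩
      · exact ⟨u, i, w.head, by rw [hg]; simp [pr]⟩
      · exfalso
        have hb : b = ⟨i, w.last⟩ := by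
          rw [List.concat_eq_append, ← List.cons_append, List.getLast?_append] at hl
          simpa using hl
        subst hb
        have := hmin (⟨i, w.last * w.head⟩ :: A') (u * (Monoid.CoprodI.of w.last)⁻¹) (by
          rw [hg]; simp [pr, mul_assoc])
        simp at this
    · right
      exact ⟨u, i, j, hij, w, by rw [hg, hprod]⟩

end SLtwo



section Elliptic

theorem sl_sq {K : Type*} [Field K] (M : Matrix.SpecialLinearGroup (Fin 2) K) :
    M.1 * M.1 = Matrix.trace M.1 • M.1 - 1 := by
  have hdet := M.2
  rw [Matrix.det_fin_two] at hdet
  ext i j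
  fin_cases i <;> fin_cases j <;>
    simp [Matrix.mul_apply, Fin.sum_univ_two, Matrix.trace_fin_two] <;> first | ring1 | linear_combination -hdet | linear_combination hdet

theorem sl_pow {K : Type*} [Field K] (M : Matrix.SpecialLinearGroup (Fin 2) K) {ζ η : K}
    (h1 : ζ * η = 1) (ht : Matrix.trace M.1 = ζ + η) (j : ℕ) :
    (ζ - η) • M.1 ^ (j + 1) = (ζ ^ (j + 1) - η ^ (j + 1)) • M.1 - (ζ ^ j - η ^ j) • 1 := by
  induction j with
  | zero => simp
  | succ j ih =>
    rw [pow_succ (M.1), ← Matrix.smul_mul, ih, Matrix.sub_mul, Matrix.smul_mul, Matrix.smul_mul, sl_sq, ht,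
      one_mul, smul_sub, smul_smul, sub_right_comm, ← sub_smul]
    congr 2
    linear_combination (ζ ^ j - η ^ j) * h1

theorem prim_sq_ne {K : Type*} [Field K] {n : ℕ} (hn : n ≠ 0) {ζ : K}
    (hζ : IsPrimitiveRoot ζ (2 * n)) {j : ℕ}
    (hj : ¬ n ∣ j) : ζ ^ j - ζ⁻¹ ^ j ≠ 0 := by
  intro h
  have h0 : ζ ≠ 0 := hζ.ne_zero (by omega)
  have : ζ ^ (2 * j) = 1 := by
    have h3 : ζ ^ j * ζ⁻¹ ^ j = 1 := by rw [← mul_pow, mul_inv_cancel₀ h0, one_pow]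
    rw [two_mul, pow_add]
    linear_combination ζ ^ j * h + h3
  have := hζ.dvd_of_pow_eq_one _ this
  exact hj ((Nat.mul_dvd_mul_iff_left (by norm_num)).mp this)

theorem sl_pow_n {K : Type*} [Field K] {n : ℕ} (hn : 1 < n) {ζ : K} (hζ : IsPrimitiveRoot ζ (2 * n))
    (M : Matrix.SpecialLinearGroup (Fin 2) K) (ht : Matrix.trace M.1 = ζ + ζ⁻¹) :
    M ^ n ∈ Subgroup.center (Matrix.SpecialLinearGroup (Fin 2) K) := by
  have h0 : ζ ≠ 0 := hζ.ne_zero (by omega)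
  have h1 : ζ * ζ⁻¹ = 1 := mul_inv_cancel₀ h0
  have hne : ζ - ζ⁻¹ ≠ 0 := by
    simpa using prim_sq_ne (by omega) hζ (j := 1) (by simpa using by omega)
  have hzn : ζ ^ n = -1 := by
    have h2 : ζ ^ n * ζ ^ n = 1 := by rw [← pow_add, ← two_mul]; exact hζ.pow_eq_one
    rcases mul_self_eq_one_iff.mp h2 with h | h
    · have := hζ.dvd_of_pow_eq_one _ h
      have := Nat.le_of_dvd (by omega) this
      omega
    · exact h
  obtain ⟨j, rfl⟩ : ∃ j, n = j + 1 := ⟨n - 1, by omega⟩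
  have key := sl_pow M h1 ht j
  have hηn : ζ⁻¹ ^ (j + 1) = -1 := by rw [inv_pow, hzn]; norm_num
  have e1 : ζ ^ j = - ζ⁻¹ := by
    have : ζ ^ (j + 1) * ζ⁻¹ = ζ ^ j := by rw [pow_succ, mul_assoc, h1, mul_one]
    rw [← this, hzn]; ring
  have e2 : ζ⁻¹ ^ j = - ζ := by
    have : ζ⁻¹ ^ (j + 1) * ζ = ζ⁻¹ ^ j := by rw [pow_succ, mul_assoc, mul_comm ζ⁻¹ ζ, h1, mul_one]
    rw [← this, hηn]; ring
  rw [hzn, hηn, e1, e2, sub_self, zero_smul, zero_sub, ← neg_smul] at key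
  have key2 : M.1 ^ (j + 1) = (-1 : K) • 1 := by
    have : (ζ - ζ⁻¹) • M.1 ^ (j + 1) = (ζ - ζ⁻¹) • ((-1 : K) • (1 : Matrix (Fin 2) (Fin 2) K)) := by
      rw [key, smul_smul]; congr 1; ring
    exact smul_right_injective _ hne this
  rw [Subgroup.mem_center_iff]
  intro g
  apply Subtype.ext
  simp [key2]

theorem center_c {K : Type*} [Field K] {M : Matrix.SpecialLinearGroup (Fin 2) K}
    (h : M ∈ Subgroup.center (Matrix.SpecialLinearGroup (Fin 2) K)) :
    M.1 1 0 = 0 := by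
  obtain ⟨r, -, hr⟩ := Matrix.SpecialLinearGroup.mem_center_iff.mp h
  rw [← hr]; simp

/-- lower shear -/
def lower {A : Type*} [CommRing A] (l : A) : Matrix.SpecialLinearGroup (Fin 2) A :=
  ⟨!![1, 0; l, 1], by simp [Matrix.det_fin_two]⟩

theorem lower_coe {A : Type*} [CommRing A] (l : A) :
    (lower l : Matrix (Fin 2) (Fin 2) A) = !![1, 0; l, 1] := rfl

theorem lower_add {A : Type*} [CommRing A] (a b : A) : lower (a + b) = lower a * lower b := by
  apply Subtype.ext
  ext i j
  fin_cases i <;> fin_cases j <;> simp [lower_coe, Matrix.mul_apply, Fin.sum_univ_two]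

/-- lower shears as a homomorphism -/
def lowerHom (A : Type*) [CommRing A] : Multiplicative A →* Matrix.SpecialLinearGroup (Fin 2) A :=
  MonoidHom.mk' (fun a => lower a.toAdd) (fun a b => lower_add _ _)

theorem lower_zpow {A : Type*} [CommRing A] (a : A) (z : ℤ) : lower a ^ z = lower (z * a) := by
  have := map_zpow (lowerHom A) (Multiplicative.ofAdd a) z
  rw [← ofAdd_zsmul] at this
  simpa [lowerHom] using this.symm

theorem freeGroupUnit_eq (m : FreeGroup Unit) : ∃ z : ℤ, m = FreeGroup.of () ^ z :=
  ⟨_, (FreeGroup.freeGroupUnitEquivInt.left_inv m).symm⟩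

/-- the unipotent representation of the infinite cyclic group -/
noncomputable def uniRep (K : Type*) [Field K] : FreeGroup Unit →* Matrix.SpecialLinearGroup (Fin 2) K :=
  FreeGroup.lift fun _ => lower 1

theorem uniRep_c (K : Type*) [Field K] (z : ℤ) : (uniRep K (FreeGroup.of () ^ z)).1 1 0 = z := by
  rw [map_zpow, uniRep, FreeGroup.lift_apply_of, lower_zpow]
  simp [lower_coe]

/-- field used for the Freiheitssatz -/
abbrev BigK := AlgebraicClosure (RatFunc ℚ)

theorem exists_free_rep (X : Type*) [Countable X] :
    ∃ ρ : FreeGroup X →* Matrix.SpecialLinearGroup (Fin 2) BigK, ∀ w, w ≠ 1 → (ρ w).1 1 0 ≠ 0 := by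
  obtain ⟨f, hf⟩ := Countable.exists_injective_nat X
  let a : X → ℚ := fun x => f x
  have ha : Function.Injective a := fun x y h => hf (Nat.cast_injective (R := ℚ) h)
  let e : Polynomial ℚ →+* BigK := (algebraMap (RatFunc ℚ) BigK).comp (algebraMap (Polynomial ℚ) (RatFunc ℚ))
  have he : Function.Injective e := (algebraMap (RatFunc ℚ) BigK).injective.comp (RatFunc.algebraMap_injective ℚ)
  refine ⟨((Matrix.SpecialLinearGroup.map e).comp (polyRep (fun _ => uniRep ℚ) a)).comp
    (freeGroupEquivCoprodI (ι := X)).toMonoidHom, fun w hw => ?_⟩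
  set g := freeGroupEquivCoprodI w with hg
  have hg1 : g ≠ 1 := (map_ne_one_iff _ freeGroupEquivCoprodI.injective).mpr hw
  classical
  obtain ⟨i, j, W, hW⟩ := Monoid.CoprodI.NeWord.of_word (Monoid.CoprodI.Word.equiv g) (by
    intro h
    apply hg1
    rw [← Monoid.CoprodI.Word.equiv.symm_apply_apply g, h]; rfl)
  have hWg : W.prod = g := by
    rw [Monoid.CoprodI.NeWord.prod, hW]; exact Monoid.CoprodI.Word.equiv.symm_apply_apply g
  have := polyRep_word_c (fun _ => uniRep ℚ) a ha W (by
    rintro ⟨s, m⟩ hs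
    have hm : m ≠ 1 := W.toWord.ne_one _ hs
    obtain ⟨z, rfl⟩ := freeGroupUnit_eq m
    simp only [uniRep_c]
    rintro h
    apply hm
    rw [Int.cast_eq_zero.mp h, zpow_zero])
  rw [hWg] at this
  simpa [← hg] using (map_ne_zero_iff e he).mpr this

theorem freiheitssatz {Z : Type*} [Countable Z] (q : Z → Bool) (b : Bool) (R : FreeGroup Z) {n : ℕ} (hn : 1 < n)
    (hR : ∀ (v : FreeGroup {z // q z = b}) (u : FreeGroup Z), R ≠ u * FreeGroup.map Subtype.val v * u⁻¹)
    (w : FreeGroup {z // q z = b})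
    (hw : FreeGroup.map Subtype.val w ∈ Subgroup.normalClosure {R ^ n}) : w = 1 := by
  let M : Bool → Type _ := fun b => FreeGroup {z // q z = b}
  let Φ : FreeGroup Z →* Monoid.CoprodI M := FreeGroup.lift fun z =>
    Monoid.CoprodI.of (M := M) (i := q z) (FreeGroup.of ⟨z, rfl⟩)
  let Ψ : Monoid.CoprodI M →* FreeGroup Z := Monoid.CoprodI.lift fun b => FreeGroup.map Subtype.val
  have hΦ : ∀ (b : Bool) (v : M b), Φ (FreeGroup.map Subtype.val v) = Monoid.CoprodI.of v := by
    intro b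
    have : Φ.comp (FreeGroup.map Subtype.val) = (Monoid.CoprodI.of : M b →* _) := by
      apply FreeGroup.ext_hom
      rintro ⟨z, rfl⟩
      simp [Φ]
    exact fun v => DFunLike.congr_fun this v
  have hΨΦ : ∀ g, Ψ (Φ g) = g := by
    have : Ψ.comp Φ = MonoidHom.id _ := by
      apply FreeGroup.ext_hom
      intro z
      simp only [Φ, Ψ, MonoidHom.comp_apply, FreeGroup.lift_apply_of, Monoid.CoprodI.lift_of]
      rfl
    exact fun v => DFunLike.congr_fun this v
  have hΨof : ∀ (b : Bool) (v : M b), Ψ (Monoid.CoprodI.of v) = FreeGroup.map Subtype.val v := by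
    intro b v
    simp [Ψ]
  rcases coprodI_cyc (Φ R) with h1 | ⟨u, i, m, h⟩ | ⟨u, i, j, hij, W, h⟩
  · exfalso
    apply hR 1 1
    rw [← hΨΦ R, h1]; simp
  · by_cases hi : i = b
    · subst hi
      exfalso
      apply hR m (Ψ u)
      rw [← hΨΦ R, h]; simp [hΨof]
    · -- kill the other factor
      let κ : FreeGroup Z →* FreeGroup {z // q z = b} := FreeGroup.lift fun z =>
        if hz : q z = b then FreeGroup.of ⟨z, hz⟩ else 1
      have hκ1 : ∀ v, κ (FreeGroup.map Subtype.val v) = v := by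
        have : κ.comp (FreeGroup.map Subtype.val) = MonoidHom.id _ := by
          apply FreeGroup.ext_hom
          rintro ⟨z, hz⟩
          simp [κ, hz]
        exact fun v => DFunLike.congr_fun this v
      have hκ2 : ∀ v : M i, κ (FreeGroup.map Subtype.val v) = 1 := by
        have : κ.comp (FreeGroup.map (Subtype.val : {z // q z = i} → Z)) = 1 := by
          apply FreeGroup.ext_hom
          rintro ⟨z, hz⟩
          have : ¬ q z = b := by rw [hz]; exact hi
          simp [κ, this]
        exact fun v => DFunLike.congr_fun this v
      have hκR : κ R = 1 := by
        rw [← hΨΦ R, h]; simp [hΨof, hκ2]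
      have hle : Subgroup.normalClosure {R ^ n} ≤ κ.ker := by
        apply Subgroup.normalClosure_le_normal
        simp [MonoidHom.mem_ker, hκR]
      rw [← hκ1 w]
      exact hle hw
  · choose ρ hρ using fun b : Bool => exists_free_rep {z // q z = b}
    haveI : NeZero n := ⟨by omega⟩
    haveI : NeZero ((2 * n : ℕ) : BigK) := ⟨by exact_mod_cast (by omega : 2 * n ≠ 0)⟩
    obtain ⟨ζ, hζ⟩ := HasEnoughRootsOfUnity.exists_primitiveRoot BigK (2 * n)
    obtain ⟨σ, hσ1, hσ2⟩ := exists_rep_trace (M := M) ρ (fun b : Bool => if b then (0 : BigK) else 1)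
      (by intro x y; cases x <;> cases y <;> simp) hij W (by
        rintro ⟨s, m⟩ hs
        exact hρ s m (W.toWord.ne_one _ hs)) (ζ + ζ⁻¹)
    have hle : Subgroup.normalClosure {R ^ n} ≤
        (Subgroup.center (Matrix.SpecialLinearGroup (Fin 2) BigK)).comap (σ.comp Φ) := by
      apply Subgroup.normalClosure_le_normal
      simp only [Set.singleton_subset_iff, SetLike.mem_coe, Subgroup.mem_comap, map_pow,
        MonoidHom.comp_apply, h, map_mul, map_inv, conj_pow]
      exact Subgroup.Normal.conj_mem inferInstance _ (sl_pow_n hn hζ _ hσ1) _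
    have hc := hle hw
    rw [Subgroup.mem_comap, MonoidHom.comp_apply, hΦ] at hc
    obtain ⟨x, hx⟩ := hσ2 b
    rw [hx] at hc
    by_contra hw1
    apply hρ b w hw1
    have h5 := center_c hc
    rw [← shear_neg] at h5
    simpa [shear_coe, Matrix.mul_apply, Matrix.vecMul, dotProduct, Fin.sum_univ_two] using h5

end Elliptic



/-- torsion is conjugate into the powers of `s`, with finite centralizers. -/
def TorsGood (G : Type*) [Group G] (s : G) : Prop :=
  ∀ g : G, IsOfFinOrder g → (∃ (u : G) (j : ℤ), g = u * s ^ j * u⁻¹) ∧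
    (g ≠ 1 → {v : G | v * g = g * v}.Finite)

section HNN
open HNNExtension HNNExtension.NormalWord

variable {H : Type*} [Group H] {A B : Subgroup H} {φ : A ≃* B}

/-- product of a list of syllables -/
def hP (φ : A ≃* B) (l : List (ℤˣ × H)) : HNNExtension H A B φ :=
  (l.map (fun x => t ^ (x.1 : ℤ) * of x.2)).prod

/-- reduced lists -/
def hRed (A B : Subgroup H) (l : List (ℤˣ × H)) : Prop :=
  l.IsChain (fun a b => a.2 ∈ toSubgroup A B a.1 → a.1 = b.1)

theorem hP_append (l m : List (ℤˣ × H)) : hP φ (l ++ m) = hP φ l * hP φ m := by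
  simp [hP]

theorem hP_cons (a : ℤˣ × H) (m : List (ℤˣ × H)) :
    hP φ (a :: m) = t ^ (a.1 : ℤ) * of a.2 * hP φ m := by
  simp [hP]

theorem hP_nil : hP φ [] = 1 := by simp [hP]

theorem exists_red (g : HNNExtension H A B φ) : ∃ h l, hRed A B l ∧ g = of h * hP φ l := by
  obtain ⟨d⟩ := TransversalPair.nonempty H A B
  classical
  let w := NormalWord.equiv φ d g
  refine ⟨w.head, w.toList, w.chain, ?_⟩
  exact ((NormalWord.equiv φ d).symm_apply_apply g).symm

theorem red_eq {h h' : H} {l l' : List (ℤˣ × H)} (hl : hRed A B l) (hl' : hRed A B l')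
    (he : of h * hP φ l = of h' * hP φ l') :
    l.map Prod.fst = l'.map Prod.fst ∧ ∀ u ∈ l.head?.map Prod.fst, h⁻¹ * h' ∈ toSubgroup A B (-u) :=
  ReducedWord.map_fst_eq_and_of_prod_eq (w₁ := ⟨h, l, hl⟩) (w₂ := ⟨h', l', hl'⟩) φ he

theorem red_last {m : List (ℤˣ × H)} {e : ℤˣ} {g g' : H} (h : hRed A B (m ++ [(e, g)])) :
    hRed A B (m ++ [(e, g')]) := by
  unfold hRed at *
  rw [List.isChain_append] at *
  refine ⟨h.1, by simp, ?_⟩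
  intro x hx y hy
  have := h.2.2 x hx (e, g) (by simp)
  simp at hy
  subst hy
  exact this

theorem red_pow {l : List (ℤˣ × H)} (h : hRed A B (l ++ l)) (hne : l ≠ []) (m : ℕ) :
    ∃ L, hRed A B L ∧ L.head? = l.head? ∧ hP φ L = hP φ l ^ (m + 1) := by
  have h' := h
  unfold hRed at h'
  rw [List.isChain_append] at h'
  induction m with
  | zero => exact ⟨l, h'.1, rfl, by simp⟩
  | succ m ih =>
    obtain ⟨L, h1, h2, h3⟩ := ih
    refine ⟨l ++ L, ?_, ?_, ?_⟩
    · unfold hRed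
      rw [List.isChain_append]
      refine ⟨h'.1, h1, ?_⟩
      rw [h2]
      exact h'.2.2
    · cases l with
      | nil => exact absurd rfl hne
      | cons a l => simp
    · rw [hP_append, h3, ← pow_succ']

theorem t_conj (e : ℤˣ) {g : H} (hg : g ∈ toSubgroup A B e) :
    ∃ g' : H, (t : HNNExtension H A B φ) ^ (e : ℤ) * of g * t ^ (-(e : ℤ)) = of g' := by
  rcases Int.units_eq_one_or e with rfl | rfl
  · refine ⟨φ ⟨g, hg⟩, ?_⟩
    rw [equiv_eq_conj]; simp
  · refine ⟨φ.symm ⟨g, hg⟩, ?_⟩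
    rw [equiv_symm_eq_conj]; simp

theorem tors_conj (g : HNNExtension H A B φ) (hg : IsOfFinOrder g) :
    ∃ u h, g = u * of h * u⁻¹ := by
  have hex : ∃ N : ℕ, ∃ u h l, hRed A B l ∧ g = u * (of h * hP φ l) * u⁻¹ ∧ l.length = N := by
    obtain ⟨h, l, h1, h2⟩ := exists_red g
    exact ⟨_, 1, h, l, h1, by simpa using h2, rfl⟩
  classical
  obtain ⟨u, h, l, hl, hgl, hlen⟩ := Nat.find_spec hex
  have hmin : ∀ u h l, hRed A B l → g = u * (of h * hP φ l) * u⁻¹ → Nat.find hex ≤ l.length :=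
    fun u h l h1 h2 => Nat.find_min' hex ⟨u, h, l, h1, h2, rfl⟩
  rw [← hlen] at hmin
  clear hlen
  rcases List.eq_nil_or_concat l with rfl | ⟨m, ⟨e, k⟩, rfl⟩
  · exact ⟨u, h, by rw [hgl, hP_nil, mul_one]⟩
  exfalso
  rw [List.concat_eq_append] at *
  have hl2 := red_last (g' := k * h) hl
  set l := m ++ [(e, k * h)] with hldef
  have hgl2 : g = (u * of h) * hP φ l * (u * of h)⁻¹ := by
    rw [hgl, hldef, hP_append, hP_append, hP_cons, hP_cons]
    simp only [hP_nil, map_mul, mul_inv_rev, mul_assoc, mul_one, mul_inv_cancel_left]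
  have hlen : (m ++ [(e, k)]).length = l.length := by simp [hldef]
  rw [hlen] at hmin
  have hred : hRed A B (l ++ l) := by
    unfold hRed
    rw [List.isChain_append]
    refine ⟨hl2, hl2, ?_⟩
    intro x hx y hy hmem
    have hx' : x = (e, k * h) := by simpa [hldef, eq_comm] using hx
    subst hx'
    cases m with
    | nil => 
      simp only [hldef, List.nil_append, List.head?_cons, Option.mem_some_iff] at hy
      rw [← hy]
    | cons a m =>
      simp only [hldef, List.cons_append, List.head?_cons, Option.mem_some_iff] at hy
      subst hy
      by_contra hne
      have hae : (a.1 : ℤ) = - (e : ℤ) := by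
        rcases Int.units_eq_one_or e with rfl | rfl <;> rcases Int.units_eq_one_or a.1 with h1 | h1 <;>
          simp_all
      obtain ⟨g', hg'⟩ := t_conj (φ := φ) e hmem
      have hm : hRed A B m := by
        have : hRed A B (a :: (m ++ [(e, k * h)])) := hl2
        unfold hRed at this
        rw [List.isChain_cons, List.isChain_append] at this
        exact this.2.1
      have := hmin (u * of h * (t ^ (e : ℤ) * of (k * h))⁻¹) (g' * a.2) m hm (by
        rw [hgl2, hldef, List.cons_append, hP_cons, hP_append, hP_cons, hP_nil, hae, map_mul of g', ← hg']
        simp only [mul_inv_rev, inv_inv, mul_assoc, mul_one, inv_mul_cancel_left, mul_inv_cancel_left])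
      simp [hldef] at this
  obtain ⟨N, hN, hpow⟩ := isOfFinOrder_iff_pow_eq_one.mp hg
  obtain ⟨L, hL1, hL2, hL3⟩ := red_pow (φ := φ) hred (by simp [hldef]) (N - 1)
  rw [Nat.sub_add_cancel hN] at hL3
  rw [hgl2, conj_pow, conj_eq_one_iff] at hpow
  rw [hpow] at hL3
  have := (red_eq (φ := φ) (h := 1) (h' := 1) (l' := []) hL1 (List.isChain_nil) (by rw [hL3, hP_nil])).1
  simp at this
  subst this
  simp [hldef] at hL2

theorem britton_conj (hA : ∀ a ∈ A, IsOfFinOrder a → a = 1) (hB : ∀ a ∈ B, IsOfFinOrder a → a = 1)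
    {h h' : H} (hfin : IsOfFinOrder h) (h1 : h ≠ 1) {u : HNNExtension H A B φ}
    (hu : u * of h = of h' * u) : ∃ v, u = of v := by
  obtain ⟨h0, l, hl, rfl⟩ := exists_red u
  rcases List.eq_nil_or_concat l with rfl | ⟨m, ⟨e, k⟩, rfl⟩
  · exact ⟨h0, by rw [hP_nil, mul_one]⟩
  exfalso
  rw [List.concat_eq_append] at *
  have hinj : Function.Injective (of : H → HNNExtension H A B φ) := HNNExtension.of_injective φ
  have hconj : of h' = (of h0 * hP φ (m ++ [(e, k)])) * of h * (of h0 * hP φ (m ++ [(e, k)]))⁻¹ := by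
    rw [hu, mul_inv_cancel_right]
  have h'1 : h' ≠ 1 := by
    rintro rfl
    rw [map_one, eq_comm, conj_eq_one_iff] at hconj
    exact h1 (hinj (by rw [hconj, map_one]))
  have h'fin : IsOfFinOrder h' := by
    obtain ⟨N, hN, hpow⟩ := isOfFinOrder_iff_pow_eq_one.mp hfin
    refine isOfFinOrder_iff_pow_eq_one.mpr ⟨N, hN, hinj ?_⟩
    rw [map_pow, hconj, conj_pow, ← map_pow, hpow]; simp
  have := (red_eq (φ := φ) (h := h0) (h' := h' * h0) (red_last (g' := k * h) hl) hl (by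
    rw [map_mul, mul_assoc, ← hu, hP_append, hP_append, hP_cons, hP_cons]
    simp [mul_assoc, hP_nil])).2
  have key : ∀ u : ℤˣ, h0⁻¹ * (h' * h0) ∈ toSubgroup A B u → False := by
    intro u hu
    have e1 : h0⁻¹ * (h' * h0) = h0⁻¹ * h' * h0⁻¹⁻¹ := by simp [mul_assoc]
    have hf : IsOfFinOrder (h0⁻¹ * (h' * h0)) := by
      obtain ⟨N, hN, hpow⟩ := isOfFinOrder_iff_pow_eq_one.mp h'fin
      refine isOfFinOrder_iff_pow_eq_one.mpr ⟨N, hN, ?_⟩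
      rw [e1, conj_pow, hpow]; simp
    have : h0⁻¹ * (h' * h0) = 1 := by
      rcases Int.units_eq_one_or u with rfl | rfl
      · exact hA _ hu hf
      · exact hB _ hu hf
    rw [e1, conj_eq_one_iff] at this
    exact h'1 this
  cases m with
  | nil => exact key _ (this e (by simp))
  | cons a m => exact key _ (this a.1 (by simp))

theorem torsGood_hnn (hA : ∀ a ∈ A, IsOfFinOrder a → a = 1) (hB : ∀ a ∈ B, IsOfFinOrder a → a = 1)
    {s : H} (hs : TorsGood H s) : TorsGood (HNNExtension H A B φ) (of s) := by
  intro g hg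
  have hinj : Function.Injective (of : H → HNNExtension H A B φ) := HNNExtension.of_injective φ
  obtain ⟨u, h, rfl⟩ := tors_conj g hg
  have hfin : IsOfFinOrder h := by
    obtain ⟨N, hN, hpow⟩ := isOfFinOrder_iff_pow_eq_one.mp hg
    refine isOfFinOrder_iff_pow_eq_one.mpr ⟨N, hN, hinj ?_⟩
    rw [conj_pow, conj_eq_one_iff] at hpow
    rw [map_pow, hpow, map_one]
  obtain ⟨⟨v, j, hv⟩, hc⟩ := hs h hfin
  refine ⟨⟨u * of v, j, by rw [hv]; simp [mul_assoc]⟩, fun hne => ?_⟩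
  have h1 : h ≠ 1 := by rintro rfl; simp at hne
  refine ((hc h1).image (fun x => u * of x * u⁻¹)).subset ?_
  intro w hw
  have hw' : (u⁻¹ * w * u) * of h = of h * (u⁻¹ * w * u) := by
    have : u⁻¹ * (w * (u * of h * u⁻¹)) * u = u⁻¹ * (u * of h * u⁻¹ * w) * u := by
      rw [show w * (u * of h * u⁻¹) = _ from hw]
    simpa [mul_assoc] using this
  obtain ⟨x, hx⟩ := britton_conj hA hB hfin h1 hw'
  refine ⟨x, ?_, by simp only [← hx]; simp [mul_assoc]⟩
  rw [hx, ← map_mul, ← map_mul] at hw'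
  exact hinj hw'

end HNN



section Good

/-- the structure of torsion in `F / R^n` -/
def Good (F : Type*) [Group F] (R : F) (n : ℕ) : Prop :=
  ∃ (S : F) (m : ℕ), R = S ^ m ∧ R ∉ Subgroup.normalClosure {R ^ n} ∧
    TorsGood (F ⧸ Subgroup.normalClosure {R ^ n}) (QuotientGroup.mk S)

theorem torsGood_retract {G G' : Type*} [Group G] [Group G'] (i : G →* G') (r : G' →* G)
    (h : ∀ g, r (i g) = g) {s : G'} (hs : TorsGood G' s) : TorsGood G (r s) := by
  have hinj : Function.Injective i := Function.LeftInverse.injective h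
  intro g hg
  obtain ⟨⟨u, j, hu⟩, hc⟩ := hs (i g) (i.isOfFinOrder hg)
  refine ⟨⟨r u, j, ?_⟩, fun hne => ?_⟩
  · rw [← h g, hu]; simp
  · have := hc (by rwa [Ne, map_eq_one_iff i hinj])
    refine (this.preimage (f := i) hinj.injOn).subset ?_
    intro v hv
    simp only [Set.mem_preimage, Set.mem_setOf_eq, ← map_mul]
    rw [show v * g = g * v from hv]

theorem good_retract {F F' : Type*} [Group F] [Group F'] (i : F →* F') (r : F' →* F)
    (h : ∀ g, r (i g) = g) {R : F} {n : ℕ} (hG : Good F' (i R) n) : Good F R n := by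
  obtain ⟨S, m, h1, h2, h3⟩ := hG
  have hi : Subgroup.normalClosure {R ^ n} ≤ (Subgroup.normalClosure {(i R) ^ n}).comap i := by
    apply Subgroup.normalClosure_le_normal
    simp only [Set.singleton_subset_iff, SetLike.mem_coe, Subgroup.mem_comap, map_pow]
    exact Subgroup.subset_normalClosure rfl
  have hr : Subgroup.normalClosure {(i R) ^ n} ≤ (Subgroup.normalClosure {R ^ n}).comap r := by
    apply Subgroup.normalClosure_le_normal
    simp only [Set.singleton_subset_iff, SetLike.mem_coe, Subgroup.mem_comap, map_pow, h]
    exact Subgroup.subset_normalClosure rfl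
  refine ⟨r S, m, by rw [← map_pow, ← h1, h], fun hh => h2 (hi hh), ?_⟩
  have := torsGood_retract (QuotientGroup.map _ _ i hi) (QuotientGroup.map _ _ r hr) (by
    intro g
    induction g using QuotientGroup.induction_on with
    | H g => simp [h]) h3
  exact this

theorem good_of {F G : Type*} [Group F] [Group G] (p : F →* G) (hp : Function.Surjective p) {R : F} {n : ℕ}
    (hk1 : p R ^ n = 1) (hk : ∀ g, p g = 1 → g ∈ Subgroup.normalClosure {R ^ n}) {S : F} {m : ℕ}
    (hS : R = S ^ m) (hR : p R ≠ 1) (hG : TorsGood G (p S)) : Good F R n := by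
  have hle : Subgroup.normalClosure {R ^ n} ≤ p.ker := by
    apply Subgroup.normalClosure_le_normal
    simpa [MonoidHom.mem_ker] using hk1
  refine ⟨S, m, hS, fun h => hR (hle h), ?_⟩
  let q : F ⧸ Subgroup.normalClosure {R ^ n} →* G := QuotientGroup.lift _ p hle
  have hq : Function.Bijective q := by
    constructor
    · rw [injective_iff_map_eq_one]
      intro g
      induction g using QuotientGroup.induction_on with
      | H g => 
        intro hg
        exact (QuotientGroup.eq_one_iff _).mpr (hk g hg)
    · intro g
      obtain ⟨x, rfl⟩ := hp g
      exact ⟨x, rfl⟩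
  let e := MulEquiv.ofBijective q hq
  have := torsGood_retract e.toMonoidHom e.symm.toMonoidHom (fun g => e.symm_apply_apply g) hG
  have h2 : e.symm.toMonoidHom (p S) = QuotientGroup.mk S := e.symm_apply_apply (QuotientGroup.mk S)
  rwa [h2] at this

theorem good_conj {F : Type*} [Group F] {R : F} {n : ℕ} (u : F) (h : Good F R n) :
    Good F (u * R * u⁻¹) n := by
  apply good_retract (MulAut.conj u⁻¹).toMonoidHom (MulAut.conj u).toMonoidHom
  · intro g; simp [mul_assoc]
  · simpa [mul_assoc] using h

theorem good_of_conj {F : Type*} [Group F] {R : F} {n : ℕ} (u : F) (h : Good F (u * R * u⁻¹) n) :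
    Good F R n := by
  simpa [mul_assoc] using good_conj u⁻¹ h

theorem free_retract {Y Z : Type*} (f : Y → Z) (hf : Function.Injective f) :
    ∃ r : FreeGroup Z →* FreeGroup Y, ∀ g, r (FreeGroup.map f g) = g := by
  classical
  let r : FreeGroup Z →* FreeGroup Y := FreeGroup.lift fun z =>
    if h : ∃ y, f y = z then FreeGroup.of h.choose else 1
  have : r.comp (FreeGroup.map f) = MonoidHom.id _ := by
    apply FreeGroup.ext_hom
    intro y
    have h : ∃ y', f y' = f y := ⟨y, rfl⟩
    simp only [r, MonoidHom.comp_apply, FreeGroup.map.of, FreeGroup.lift_apply_of, dif_pos h, MonoidHom.id_apply]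
    rw [hf h.choose_spec]
  exact ⟨r, fun g => DFunLike.congr_fun this g⟩

theorem good_of_map {Y Z : Type*} (f : Y → Z) (hf : Function.Injective f) {R : FreeGroup Y} {n : ℕ}
    (h : Good (FreeGroup Z) (FreeGroup.map f R) n) : Good (FreeGroup Y) R n := by
  obtain ⟨r, hr⟩ := free_retract f hf
  exact good_retract _ r hr h

theorem freiheitssatz' {Y Z : Type*} [Countable Z] (f : Y → Z) (hf : Function.Injective f)
    (R : FreeGroup Z) {n : ℕ} (hn : 1 < n)
    (hR : ∀ (v : FreeGroup Y) (u : FreeGroup Z), R ≠ u * FreeGroup.map f v * u⁻¹)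
    (w : FreeGroup Y)
    (hw : FreeGroup.map f w ∈ Subgroup.normalClosure {R ^ n}) : w = 1 := by
  classical
  let q : Z → Bool := fun z => decide (∃ y, f y = z)
  let a : Y → {z // q z = true} := fun y => ⟨f y, by simp [q]⟩
  let b : {z // q z = true} → Y := fun z => (of_decide_eq_true z.2).choose
  have hb : ∀ z, f (b z) = z.1 := fun z => (of_decide_eq_true z.2).choose_spec
  have ha : Function.Injective a := by
    intro x y hxy
    exact hf (congrArg Subtype.val hxy)
  have key : FreeGroup.map a w = 1 := by
    apply freiheitssatz q true R hn
    · intro v u h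
      apply hR (FreeGroup.map b v) u
      rw [h, FreeGroup.map.comp]
      congr 3
      exact congrArg FreeGroup.map (funext fun z => (hb z).symm)
    · rw [FreeGroup.map.comp]
      exact hw
  exact (map_eq_one_iff _ (FreeGroup.map_injective ha)).mp key

end Good

section Window

/-- the map `x_{e,j} ↦ t^j x_e t^{-j}` -/
def kap (E : Type*) (M : ℕ) : FreeGroup (E × Fin M) →* FreeGroup (Option E) :=
  FreeGroup.lift fun z => FreeGroup.of none ^ (z.2 : ℕ) * FreeGroup.of (some z.1) * (FreeGroup.of none ^ (z.2 : ℕ))⁻¹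

theorem kap_of {E : Type*} {M : ℕ} (e : E) (j : Fin M) : kap E M (FreeGroup.of (e, j)) =
    FreeGroup.of none ^ (j : ℕ) * FreeGroup.of (some e) * (FreeGroup.of none ^ (j : ℕ))⁻¹ := by
  simp [kap]

theorem kap_low {E : Type*} {M : ℕ} (v : FreeGroup (E × Fin M)) :
    kap E (M + 1) (FreeGroup.map (Prod.map id Fin.castSucc) v) = kap E M v := by
  have : (kap E (M + 1)).comp (FreeGroup.map (Prod.map id Fin.castSucc)) = kap E M := by
    apply FreeGroup.ext_hom
    rintro ⟨e, j⟩
    simp [kap_of]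
  exact DFunLike.congr_fun this v

theorem kap_up {E : Type*} {M : ℕ} (v : FreeGroup (E × Fin M)) :
    kap E (M + 1) (FreeGroup.map (Prod.map id Fin.succ) v) =
      FreeGroup.of none * kap E M v * (FreeGroup.of none)⁻¹ := by
  have : (kap E (M + 1)).comp (FreeGroup.map (Prod.map id Fin.succ)) =
      (MulAut.conj (FreeGroup.of none)).toMonoidHom.comp (kap E M) := by
    apply FreeGroup.ext_hom
    rintro ⟨e, j⟩
    simp [kap_of, pow_succ', mul_assoc]
  exact DFunLike.congr_fun this v

theorem freeGroup_tf {Y : Type*} {y : FreeGroup Y} (h : IsOfFinOrder y) : y = 1 := by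
  by_contra hne
  exact not_isOfFinOrder_of_isMulTorsionFree hne h

theorem low_inj (E : Type*) (M : ℕ) :
    Function.Injective (Prod.map id Fin.castSucc : E × Fin M → E × Fin (M + 1)) :=
  Function.Injective.prodMap Function.injective_id (Fin.castSucc_injective M)

theorem up_inj (E : Type*) (M : ℕ) :
    Function.Injective (Prod.map id Fin.succ : E × Fin M → E × Fin (M + 1)) :=
  Function.Injective.prodMap Function.injective_id (Fin.succ_injective M)

theorem good_hnn {E : Type*} [Countable E] {M n : ℕ} (hn : 1 < n) {R : FreeGroup (E × Fin (M + 1))}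
    (h0 : ∀ (v : FreeGroup (E × Fin M)) u, R ≠ u * FreeGroup.map (Prod.map id Fin.castSucc) v * u⁻¹)
    (h1 : ∀ (v : FreeGroup (E × Fin M)) u, R ≠ u * FreeGroup.map (Prod.map id Fin.succ) v * u⁻¹)
    (hG : Good _ R n) : Good (FreeGroup (Option E)) (kap E (M + 1) R) n := by
  obtain ⟨S, m, hS, hR, hT⟩ := hG
  let N := Subgroup.normalClosure {R ^ n}
  let ψ0 : FreeGroup (E × Fin M) →* FreeGroup (E × Fin (M + 1)) ⧸ N :=
    (QuotientGroup.mk' N).comp (FreeGroup.map (Prod.map id Fin.castSucc))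
  let ψ1 : FreeGroup (E × Fin M) →* FreeGroup (E × Fin (M + 1)) ⧸ N :=
    (QuotientGroup.mk' N).comp (FreeGroup.map (Prod.map id Fin.succ))
  have i0 : Function.Injective ψ0 := by
    rw [injective_iff_map_eq_one]
    intro w hw
    exact freiheitssatz' _ (low_inj E M) R hn h0 w ((QuotientGroup.eq_one_iff _).mp hw)
  have i1 : Function.Injective ψ1 := by
    rw [injective_iff_map_eq_one]
    intro w hw
    exact freiheitssatz' _ (up_inj E M) R hn h1 w ((QuotientGroup.eq_one_iff _).mp hw)
  let e0 := MonoidHom.ofInjective i0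
  let e1 := MonoidHom.ofInjective i1
  let φ : ψ0.range ≃* ψ1.range := e0.symm.trans e1
  have hφ : ∀ y, (φ ⟨ψ0 y, ⟨y, rfl⟩⟩ : FreeGroup (E × Fin (M + 1)) ⧸ N) = ψ1 y := by
    intro y
    have : e0.symm ⟨ψ0 y, ⟨y, rfl⟩⟩ = y := e0.symm_apply_apply y
    simp only [φ, MulEquiv.trans_apply, this]
    rfl
  have tf0 : ∀ a ∈ ψ0.range, IsOfFinOrder a → a = 1 := by
    rintro _ ⟨y, rfl⟩ hy
    rw [freeGroup_tf ((i0.isOfFinOrder_iff (f := ψ0)).mp hy), map_one]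
  have tf1 : ∀ a ∈ ψ1.range, IsOfFinOrder a → a = 1 := by
    rintro _ ⟨y, rfl⟩ hy
    rw [freeGroup_tf ((i1.isOfFinOrder_iff (f := ψ1)).mp hy), map_one]
  have hT' := torsGood_hnn (φ := φ) tf0 tf1 hT
  let X := HNNExtension (FreeGroup (E × Fin (M + 1)) ⧸ N) ψ0.range ψ1.range φ
  let o : FreeGroup (E × Fin (M + 1)) →* X := HNNExtension.of.comp (QuotientGroup.mk' N)
  let p : FreeGroup (Option E) →* X := FreeGroup.lift fun x =>
    match x with
    | none => HNNExtension.t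
    | some e => o (FreeGroup.of (e, 0))
  have htt : ∀ y : FreeGroup (E × Fin M), o (FreeGroup.map (Prod.map id Fin.succ) y) =
      HNNExtension.t * o (FreeGroup.map (Prod.map id Fin.castSucc) y) * HNNExtension.t⁻¹ := by
    intro y
    have := HNNExtension.equiv_eq_conj (φ := φ) ⟨ψ0 y, ⟨y, rfl⟩⟩
    rw [hφ] at this
    exact this
  have hpk : ∀ g, p (kap E (M + 1) g) = o g := by
    have : p.comp (kap E (M + 1)) = o := by
      apply FreeGroup.ext_hom
      rintro ⟨e, j⟩
      simp only [MonoidHom.comp_apply, kap_of, map_mul, map_inv, map_pow]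
      have p0 : p (FreeGroup.of none) = HNNExtension.t := by simp [p]
      have p1 : p (FreeGroup.of (some e)) = o (FreeGroup.of (e, 0)) := by simp [p]
      rw [p0, p1]
      induction j using Fin.induction with
      | zero => simp
      | succ i ih =>
        have := htt (FreeGroup.of (e, i))
        simp only [FreeGroup.map.of, Prod.map, id] at this
        rw [this, ← ih]
        simp [pow_succ', mul_assoc]
    exact fun g => DFunLike.congr_fun this g
  let N' := Subgroup.normalClosure {kap E (M + 1) R ^ n}
  have hle : N ≤ N'.comap (kap E (M + 1)) := by
    apply Subgroup.normalClosure_le_normal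
    simp only [Set.singleton_subset_iff, SetLike.mem_coe, Subgroup.mem_comap, map_pow]
    exact Subgroup.subset_normalClosure rfl
  let θ : X →* FreeGroup (Option E) ⧸ N' := HNNExtension.lift (QuotientGroup.map N N' (kap E (M + 1)) hle)
    (QuotientGroup.mk (FreeGroup.of none)) (by
      rintro ⟨_, ⟨y, rfl⟩⟩
      rw [hφ]
      change (QuotientGroup.mk (FreeGroup.of none * kap E (M + 1) (FreeGroup.map (Prod.map id Fin.castSucc) y)) : 
        FreeGroup (Option E) ⧸ N') =
        QuotientGroup.mk (kap E (M + 1) (FreeGroup.map (Prod.map id Fin.succ) y) * FreeGroup.of none)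
      rw [kap_low, kap_up, inv_mul_cancel_right])
  have hθp : ∀ g, θ (p g) = QuotientGroup.mk g := by
    have : θ.comp p = QuotientGroup.mk' N' := by
      apply FreeGroup.ext_hom
      rintro (_ | e)
      · have p0 : p (FreeGroup.of none) = HNNExtension.t := by simp [p]
        rw [MonoidHom.comp_apply, p0]
        exact HNNExtension.lift_t _ _ _
      · have p1 : p (FreeGroup.of (some e)) = o (FreeGroup.of (e, 0)) := by simp [p]
        rw [MonoidHom.comp_apply, p1]
        refine (HNNExtension.lift_of _ _ _ _).trans ?_
        simp [kap_of]
    exact fun g => DFunLike.congr_fun this g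
  refine good_of p ?_ ?_ ?_ (S := kap E (M + 1) S) (m := m) ?_ ?_ ?_
  · intro x
    change x ∈ p.range
    induction x using HNNExtension.induction_on with
    | of g =>
      induction g using QuotientGroup.induction_on with
      | H g => exact ⟨_, hpk g⟩
    | t => exact ⟨FreeGroup.of none, by simp [p]⟩
    | mul x y hx hy => exact mul_mem hx hy
    | inv x hx => exact inv_mem hx
  · rw [hpk, ← map_pow]
    have h9 : (QuotientGroup.mk (R ^ n) : FreeGroup (E × Fin (M + 1)) ⧸ N) = 1 :=
      (QuotientGroup.eq_one_iff _).mpr (Subgroup.subset_normalClosure rfl)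
    change HNNExtension.of (QuotientGroup.mk (R ^ n) : FreeGroup (E × Fin (M + 1)) ⧸ N) = 1
    rw [h9, map_one]
  · intro g hg
    rw [← QuotientGroup.eq_one_iff]
    exact (hθp g).symm.trans (by rw [hg, map_one])
  · rw [← map_pow, ← hS]
  · rw [hpk]
    intro h
    apply hR
    rw [← QuotientGroup.eq_one_iff]
    exact HNNExtension.of_injective φ (h.trans (map_one _).symm)
  · rw [hpk]
    exact hT'

theorem good_window {E : Type*} [Countable E] {n : ℕ} (hn : 1 < n) (M : ℕ)
    (R : FreeGroup (E × Fin (M + 1))) (hR : R ≠ 1)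
    (hG : Good _ R n) : Good (FreeGroup (Option E)) (kap E (M + 1) R) n := by
  induction M with
  | zero =>
    apply good_hnn hn _ _ hG
    · intro v u h
      rw [Subsingleton.elim v 1] at h
      simp at h
      exact hR h
    · intro v u h
      rw [Subsingleton.elim v 1] at h
      simp at h
      exact hR h
  | succ M ih =>
    by_cases h0 : ∃ (v : FreeGroup (E × Fin (M + 1))) (u : _), R = u * FreeGroup.map (Prod.map id Fin.castSucc) v * u⁻¹
    · obtain ⟨v, u, rfl⟩ := h0
      have hv : v ≠ 1 := by rintro rfl; simp at hR
      have := ih v hv (good_of_map _ (low_inj E _) (good_of_conj u hG))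
      simp only [map_mul, map_inv, kap_low]
      exact good_conj _ this
    by_cases h1 : ∃ (v : FreeGroup (E × Fin (M + 1))) (u : _), R = u * FreeGroup.map (Prod.map id Fin.succ) v * u⁻¹
    · obtain ⟨v, u, rfl⟩ := h1
      have hv : v ≠ 1 := by rintro rfl; simp at hR
      have := ih v hv (good_of_map _ (up_inj E _) (good_of_conj u hG))
      simp only [map_mul, map_inv, kap_up]
      exact good_conj _ (good_conj _ this)
    · push Not at h0 h1
      exact good_hnn hn h0 h1 hG

theorem good_some {E : Type*} [Countable E] {n : ℕ} (hn : 1 < n) (R : FreeGroup E) (hR : R ≠ 1)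
    (hG : Good _ R n) : Good (FreeGroup (Option E)) (FreeGroup.map some R) n := by
  let f : E → E × Fin 1 := fun e => (e, 0)
  have hf : Function.Injective f := fun x y h => congrArg Prod.fst h
  have h1 : kap E 1 (FreeGroup.map f R) = FreeGroup.map some R := by
    have : (kap E 1).comp (FreeGroup.map f) = FreeGroup.map some := by
      apply FreeGroup.ext_hom
      intro e
      simp [kap_of, f]
    exact DFunLike.congr_fun this R
  rw [← h1]
  apply good_window hn 0
  · rwa [Ne, map_eq_one_iff _ (FreeGroup.map_injective hf)]
  · apply good_of_map Prod.fst
    · rintro ⟨a, b⟩ ⟨c, d⟩ h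
      exact Prod.ext h (by apply Subsingleton.elim (α := Fin 1))
    · rw [FreeGroup.map.comp]
      have : (Prod.fst ∘ f) = id := rfl
      rw [this, FreeGroup.map.id]
      exact hG

end Window



section Base

theorem torsGood_of_finite {G : Type*} [Group G] [Finite G] {s : G} (h : ∀ g : G, ∃ j : ℤ, g = s ^ j) :
    TorsGood G s := by
  intro g _
  obtain ⟨j, hj⟩ := h g
  exact ⟨⟨1, j, by simpa using hj⟩, fun _ => Set.toFinite _⟩

theorem good_unit {n : ℕ} (hn : 1 < n) {z : ℤ} (hz : z ≠ 0) :
    Good (FreeGroup Unit) (FreeGroup.of () ^ z) n := by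
  obtain ⟨m, hm⟩ : ∃ m : ℕ, m = z.natAbs := ⟨_, rfl⟩
  have hm0 : m ≠ 0 := by omega
  obtain ⟨ε, hε, hεm⟩ : ∃ ε : ℤ, (ε = 1 ∨ ε = -1) ∧ z = ε * m := by
    rcases Int.natAbs_eq z with h | h
    · exact ⟨1, Or.inl rfl, by omega⟩
    · exact ⟨-1, Or.inr rfl, by omega⟩
  have hNZ : NeZero (m * n) := ⟨by positivity⟩
  let p : FreeGroup Unit →* Multiplicative (ZMod (m * n)) := FreeGroup.lift fun _ => Multiplicative.ofAdd 1
  have hp : ∀ j : ℤ, p (FreeGroup.of () ^ j) = Multiplicative.ofAdd (j : ZMod (m * n)) := by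
    intro j
    rw [map_zpow]
    simp [p, ← ofAdd_zsmul]
  have hp1 : ∀ j : ℤ, p (FreeGroup.of () ^ j) = 1 ↔ ((m * n : ℕ) : ℤ) ∣ j := by
    intro j
    rw [hp, ofAdd_eq_one, ZMod.intCast_zmod_eq_zero_iff_dvd]
  have hR : (FreeGroup.of () : FreeGroup Unit) ^ z = (FreeGroup.of () ^ ε) ^ m := by
    rw [← zpow_natCast, ← zpow_mul, ← hεm]
  refine good_of p ?_ ?_ ?_ hR ?_ ?_
  · intro g
    obtain ⟨j, hj⟩ := ZMod.intCast_surjective g.toAdd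
    exact ⟨FreeGroup.of () ^ j, by rw [hp, hj]; rfl⟩
  · rw [← map_pow, ← zpow_natCast, ← zpow_mul, hp1, hεm]
    exact ⟨ε, by push_cast; ring⟩
  · intro g hg
    obtain ⟨j, rfl⟩ := freeGroupUnit_eq g
    obtain ⟨q, rfl⟩ := (hp1 j).mp hg
    have : (FreeGroup.of () : FreeGroup Unit) ^ (((m * n : ℕ) : ℤ) * q) =
        ((FreeGroup.of () ^ z) ^ n) ^ (ε * q) := by
      rw [← zpow_natCast, ← zpow_mul, ← zpow_mul, hεm]
      congr 1
      push_cast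
      rcases hε with rfl | rfl <;> ring
    rw [this]
    apply zpow_mem
    apply Subgroup.subset_normalClosure
    exact Set.mem_singleton _
  · intro h
    rw [hp1] at h
    have h1 := Int.natAbs_dvd_natAbs.mpr h
    rw [← hm, Int.natAbs_natCast] at h1
    have := Nat.le_of_dvd (by omega) h1
    nlinarith [Nat.pos_of_ne_zero hm0]
  · apply torsGood_of_finite
    intro g
    obtain ⟨j, hj⟩ := ZMod.intCast_surjective g.toAdd
    refine ⟨ε * j, ?_⟩
    rw [← map_zpow, ← zpow_mul, hp, ← mul_assoc]
    have : ε * ε = 1 := by rcases hε with rfl | rfl <;> rfl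
    rw [this, one_mul, hj]
    rfl

theorem good_gen {n : ℕ} (hn : 1 < n) {z : ℤ} (hz : z ≠ 0) (E : Type) [Finite E] :
    ∀ x : E, Good (FreeGroup E) (FreeGroup.of x ^ z) n := by
  induction E using Finite.induction_empty_option with
  | of_equiv e h =>
    intro x
    apply good_of_map e.symm e.symm.injective
    rw [map_zpow, FreeGroup.map.of]
    exact h _
  | h_empty => intro x; exact x.elim
  | h_option ih =>
    rename_i α _
    have hs : ∀ e : α, Good (FreeGroup (Option α)) (FreeGroup.of (some e) ^ z) n := by
      intro e
      have := good_some hn _ (by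
        intro h
        have h1 := congrArg (FreeGroup.lift (fun _ : α => Multiplicative.ofAdd (1 : ℤ))) h
        rw [map_zpow, FreeGroup.lift_apply_of, ← ofAdd_zsmul, map_one, ofAdd_eq_one] at h1
        simp at h1
        exact hz h1) (ih e)
      rwa [map_zpow, FreeGroup.map.of] at this
    rintro (_ | e)
    · rcases isEmpty_or_nonempty α with hα | ⟨⟨e⟩⟩
      · apply good_of_map (fun _ => ()) (fun x y _ => Subsingleton.elim x y)
        rw [map_zpow, FreeGroup.map.of]
        exact good_unit hn hz
      · classical
        apply good_of_map (Equiv.swap none (some e)) (Equiv.injective _)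
        rw [map_zpow, FreeGroup.map.of, Equiv.swap_apply_left]
        exact hs e
    · exact hs e

end Base

section Path

variable {E : Type}

/-- weight of a word -/
def wt (d : E → ℤ) (L : List (E × Bool)) : ℤ :=
  (L.map fun p => if p.2 then d p.1 else - d p.1).sum

/-- total variation of a word -/
def bd (d : E → ℤ) (L : List (E × Bool)) : ℤ := (L.map fun p => |d p.1|).sum

theorem bd_nonneg (d : E → ℤ) (L : List (E × Bool)) : 0 ≤ bd d L := by
  apply List.sum_nonneg
  simp only [List.mem_map]
  rintro x ⟨a, -, rfl⟩
  positivity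

/-- clamp -/
def cl (M : ℕ) (z : ℤ) : Fin (M + 1) := ⟨min z.toNat M, by omega⟩

theorem cl_coe {M : ℕ} {z : ℤ} (h0 : 0 ≤ z) (h1 : z ≤ M) : ((cl M z : ℕ) : ℤ) = z := by
  simp only [cl]; omega

/-- read a word from height `h` -/
def path (d : E → ℤ) (M : ℕ) : List (E × Bool) → ℤ → List ((E × Fin (M + 1)) × Bool)
  | [], _ => []
  | (i, true) :: L, h => ((i, cl M h), true) :: path d M L (h + d i)
  | (i, false) :: L, h => ((i, cl M (h - d i)), false) :: path d M L (h - d i)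

theorem path_fst (d : E → ℤ) (M : ℕ) (L : List (E × Bool)) (h : ℤ) :
    (path d M L h).map (fun p => (p.1.1, p.2)) = L := by
  induction L generalizing h with
  | nil => rfl
  | cons a L ih =>
    obtain ⟨i, _ | _⟩ := a <;> simp [path, ih]

theorem mk_cons {X : Type*} (i : X) (b : Bool) (L : List (X × Bool)) :
    FreeGroup.mk ((i, b) :: L) = (if b then FreeGroup.of i else (FreeGroup.of i)⁻¹) * FreeGroup.mk L := by
  cases b <;> simp [FreeGroup.of, FreeGroup.invRev]

theorem path_conj {G : Type*} [Group G] (d : E → ℤ) (M : ℕ) (f g : FreeGroup (E × Fin (M + 1)) →* G)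
    (W : ℤ → G) (hfg : ∀ i (j : Fin (M + 1)), f (FreeGroup.of (i, j)) =
      (W (j : ℕ))⁻¹ * g (FreeGroup.of (i, j)) * W ((j : ℕ) + d i))
    (L : List (E × Bool)) (h : ℤ) (h1 : bd d L ≤ h) (h2 : h + bd d L ≤ M) :
    f (FreeGroup.mk (path d M L h)) = (W h)⁻¹ * g (FreeGroup.mk (path d M L h)) * W (h + wt d L) := by
  induction L generalizing h with
  | nil =>
    simp only [path, wt, ← FreeGroup.one_eq_mk, map_one, List.map_nil, List.sum_nil]
    simp
  | cons a L ih =>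
    have hb := bd_nonneg d L
    obtain ⟨i, b⟩ := a
    have hbd : bd d ((i, b) :: L) = |d i| + bd d L := by simp [bd]
    rw [hbd] at h1 h2
    have hd1 := le_abs_self (d i)
    have hd2 := neg_abs_le (d i)
    cases b
    · have hwt : h + wt d ((i, false) :: L) = h - d i + wt d L := by simp [wt]; ring
      rw [hwt]
      simp only [path, mk_cons, map_mul, Bool.false_eq_true, if_false, map_inv]
      rw [ih (h - d i) (by omega) (by omega), hfg, cl_coe (by omega) (by omega)]
      simp [mul_assoc]
    · have hwt : h + wt d ((i, true) :: L) = h + d i + wt d L := by simp [wt]; ring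
      rw [hwt]
      simp only [path, mk_cons, map_mul, if_true]
      rw [ih (h + d i) (by omega) (by omega), hfg, cl_coe (by omega) (by omega)]
      simp [mul_assoc]

theorem wt_add (d d' : E → ℤ) (L : List (E × Bool)) : wt (d + d') L = wt d L + wt d' L := by
  induction L with
  | nil => rfl
  | cons a L ih =>
    obtain ⟨i, _ | _⟩ := a <;> simp [wt] at ih ⊢ <;> linarith

theorem wt_smul (c : ℤ) (d : E → ℤ) (L : List (E × Bool)) : wt (c • d) L = c * wt d L := by
  induction L with
  | nil => simp [wt]
  | cons a L ih =>
    obtain ⟨i, _ | _⟩ := a <;> simp [wt] at ih ⊢ <;> linarith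

theorem exists_weight [DecidableEq E] (L : List (E × Bool)) {x y : E} (hxy : x ≠ y) (hx : x ∈ L.map Prod.fst)
    (hy : y ∈ L.map Prod.fst) : ∃ d : E → ℤ, wt d L = 0 ∧ ∃ i ∈ L.map Prod.fst, 0 < d i := by
  have key : ∃ d : E → ℤ, wt d L = 0 ∧ ∃ i ∈ L.map Prod.fst, d i ≠ 0 := by
    by_cases h : wt (Pi.single x 1) L = 0
    · exact ⟨_, h, x, hx, by simp⟩
    · refine ⟨(wt (Pi.single y 1) L) • Pi.single x 1 + (-wt (Pi.single x 1) L) • Pi.single y 1, ?_, y, hy, ?_⟩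
      · rw [wt_add, wt_smul, wt_smul]; ring
      · simpa [hxy.symm] using h
  obtain ⟨d, hd, i, hi, hne⟩ := key
  rcases lt_or_gt_of_ne hne with h | h
  · refine ⟨(-1 : ℤ) • d, by rw [wt_smul, hd]; rfl, i, hi, by simpa using h⟩
  · exact ⟨d, hd, i, hi, h⟩

end Path

section Main

variable {E : Type}

theorem good_step [Finite E] {n : ℕ} (hn : 1 < n) (L : List (E × Bool)) (hL : FreeGroup.mk L ≠ 1)
    (d : E → ℤ) (hd : wt d L = 0) (i0 : E) (hi0 : i0 ∈ L.map Prod.fst) (hpos : 0 < d i0)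
    (ih : ∀ (E' : Type) [Finite E'] (L' : List (E' × Bool)), L'.length < L.length →
      FreeGroup.mk L' ≠ 1 → Good (FreeGroup E') (FreeGroup.mk L') n) :
    Good (FreeGroup E) (FreeGroup.mk L) n := by
  classical
  obtain ⟨B, hB⟩ : ∃ B : ℕ, (B : ℤ) = bd d L := ⟨(bd d L).toNat, Int.toNat_of_nonneg (bd_nonneg d L)⟩
  let M := 2 * B
  have hb1 : bd d L ≤ (B : ℤ) := hB.ge
  have hb2 : (B : ℤ) + bd d L ≤ (M : ℕ) := by rw [← hB]; simp only [M]; push_cast; omega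
  let P := path d M L B
  let R1 : FreeGroup (E × Fin (M + 1)) := FreeGroup.mk P
  let t : FreeGroup (Option E) := FreeGroup.of none
  -- the shearing automorphism
  let al : (E → ℤ) → FreeGroup (Option E) →* FreeGroup (Option E) := fun d => FreeGroup.lift fun x =>
    match x with
    | none => t
    | some i => FreeGroup.of (some i) * t ^ (d i)
  have al_none : ∀ d, al d t = t := fun d => by simp [al, t]
  have al_some : ∀ d i, al d (FreeGroup.of (some i)) = FreeGroup.of (some i) * t ^ (d i) :=
    fun d i => by simp [al]
  have hal : ∀ g, al (-d) (al d g) = g := by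
    have : (al (-d)).comp (al d) = MonoidHom.id _ := by
      apply FreeGroup.ext_hom
      rintro (_ | i)
      · exact (congrArg _ (al_none d)).trans (al_none _)
      · rw [MonoidHom.comp_apply, al_some, map_mul, map_zpow, al_none, al_some]
        simp
    exact fun g => DFunLike.congr_fun this g
  have hkap : kap E (M + 1) R1 = t ^ B * al d (FreeGroup.map some (FreeGroup.mk L)) * (t ^ B)⁻¹ := by
    have := path_conj d M (kap E (M + 1)) ((al d).comp (FreeGroup.map (fun z => some z.1)))
      (fun j => t ^ (-j)) (by
        intro i j
        rw [kap_of, MonoidHom.comp_apply, FreeGroup.map.of, al_some]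
        simp only [zpow_neg, inv_inv, zpow_natCast, mul_assoc]
        rw [← zpow_neg, ← zpow_add, ← zpow_natCast, ← zpow_neg]
        congr 3
        ring) L B hb1 hb2
    rw [hd, add_zero] at this
    have h3 : FreeGroup.map (fun z : E × Fin (M + 1) => some z.1) (FreeGroup.mk (path d M L B)) =
        FreeGroup.map some (FreeGroup.mk L) := by
      conv_rhs => rw [← path_fst d M L B]
      simp [Function.comp_def]
    rw [MonoidHom.comp_apply, h3] at this
    simpa using this
  have halinj : Function.Injective (al d) := Function.LeftInverse.injective hal
  have hR1 : R1 ≠ 1 := by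
    intro h
    rw [h, map_one, eq_comm, conj_eq_one_iff, map_eq_one_iff _ halinj,
      map_eq_one_iff _ (FreeGroup.map_injective (Option.some_injective E))] at hkap
    exact hL hkap
  -- reduce to R1
  suffices hG : Good _ R1 n by
    have h1 := good_window hn M R1 hR1 hG
    rw [hkap] at h1
    exact good_of_map some (Option.some_injective E) (good_retract (al d) (al (-d)) hal (good_of_conj _ h1))
  -- the edge to remove
  obtain ⟨j0, b0, he0⟩ : ∃ j0 b0, ((i0, j0), b0) ∈ P := by
    rw [← path_fst d M L B] at hi0
    simp only [List.map_map, List.mem_map] at hi0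
    obtain ⟨⟨⟨i, j⟩, b⟩, h, rfl⟩ := hi0
    exact ⟨j, b, h⟩
  let e0 : E × Fin (M + 1) := (i0, j0)
  let y : FreeGroup (E × Fin (M + 1)) := FreeGroup.of e0
  let c : ℤ := (j0 : ℕ) + d i0
  let W : ℤ → FreeGroup (E × Fin (M + 1)) := fun j => if c ≤ j then y else 1
  let g : FreeGroup (E × Fin (M + 1)) →* FreeGroup (E × Fin (M + 1)) := FreeGroup.lift fun e =>
    if e = e0 then 1 else FreeGroup.of e
  let Th : FreeGroup (E × Fin (M + 1)) →* FreeGroup (E × Fin (M + 1)) := FreeGroup.lift fun e =>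
    (W (e.2 : ℕ))⁻¹ * g (FreeGroup.of e) * W ((e.2 : ℕ) + d e.1)
  let Th' : FreeGroup (E × Fin (M + 1)) →* FreeGroup (E × Fin (M + 1)) := FreeGroup.lift fun e =>
    if e = e0 then y else W (e.2 : ℕ) * FreeGroup.of e * (W ((e.2 : ℕ) + d e.1))⁻¹
  have hTh : ∀ e, Th (FreeGroup.of e) = (W (e.2 : ℕ))⁻¹ * g (FreeGroup.of e) * W ((e.2 : ℕ) + d e.1) :=
    fun e => by simp [Th]
  have hy' : Th' y = y := by simp [Th', y]
  have hW' : ∀ j, Th' (W j) = W j := by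
    intro j
    simp only [W]
    split_ifs
    · exact hy'
    · exact map_one _
  have hTT : ∀ x, Th' (Th x) = x := by
    have : Th'.comp Th = MonoidHom.id _ := by
      apply FreeGroup.ext_hom
      intro e
      rw [MonoidHom.comp_apply, hTh, map_mul, map_mul, map_inv, hW', hW', MonoidHom.id_apply]
      by_cases he : e = e0
      · subst he
        have w1 : W ((e0.2 : ℕ) : ℤ) = 1 := by
          simp only [W, c, e0]
          rw [if_neg (by omega)]
        have w2 : W (((e0.2 : ℕ) : ℤ) + d e0.1) = y := by
          simp only [W, c, e0]
          rw [if_pos (by omega)]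
        rw [w1, w2]
        simp [g, y]
      · simp [g, Th', he, mul_assoc]
    exact fun x => DFunLike.congr_fun this x
  apply good_retract Th Th' hTT
  let P' := P.filter (fun p => p.1 ≠ e0)
  have hgP : ∀ Q : List ((E × Fin (M + 1)) × Bool), g (FreeGroup.mk Q) =
      FreeGroup.mk (Q.filter (fun p => p.1 ≠ e0)) := by
    intro Q
    induction Q with
    | nil => simp [← FreeGroup.one_eq_mk]
    | cons a Q ih =>
      obtain ⟨e, b⟩ := a
      by_cases he : e = e0
      · subst he
        rw [mk_cons, map_mul, ih]
        cases b <;> simp [g]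
      · rw [mk_cons, map_mul, ih, List.filter_cons_of_pos (by simpa using he), mk_cons]
        cases b <;> simp [g, he]
  have hThP : Th R1 = (W B)⁻¹ * FreeGroup.mk P' * (W B)⁻¹⁻¹ := by
    have := path_conj d M Th g W (fun i j => hTh (i, j)) L B hb1 hb2
    rw [hd, add_zero, hgP] at this
    rw [inv_inv]
    exact this
  rw [hThP]
  apply good_conj
  apply ih
  · have : P'.length < P.length := by
      apply List.length_filter_lt_length_iff_exists.mpr
      exact ⟨_, he0, by simp [e0]⟩
    have h2 : P.length = L.length := by
      conv_rhs => rw [← path_fst d M L B]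
      simp [P]
    omega
  · intro h
    rw [h] at hThP
    apply hR1
    apply Function.LeftInverse.injective hTT
    rw [hThP, map_one]; simp

theorem mk_single {x : E} (L : List (E × Bool)) (h : ∀ y ∈ L.map Prod.fst, y = x) :
    ∃ z : ℤ, FreeGroup.mk L = FreeGroup.of x ^ z := by
  induction L with
  | nil => exact ⟨0, by simp [← FreeGroup.one_eq_mk]⟩
  | cons a L ih =>
    obtain ⟨z, hz⟩ := ih (fun y hy => h y (by simp at hy ⊢; tauto))
    obtain ⟨i, b⟩ := a
    obtain rfl : i = x := h i (by simp)
    rw [mk_cons, hz]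
    cases b
    · exact ⟨-1 + z, by simp [zpow_add]⟩
    · exact ⟨1 + z, by simp [zpow_add]⟩

theorem good_main {n : ℕ} (hn : 1 < n) (l : ℕ) : ∀ (E : Type) [Finite E] (L : List (E × Bool)), L.length ≤ l →
      FreeGroup.mk L ≠ 1 → Good (FreeGroup E) (FreeGroup.mk L) n := by
  induction l with
  | zero =>
    intro E _ L hL h
    rw [List.length_eq_zero_iff.mp (Nat.le_zero.mp hL)] at h
    exact absurd rfl h
  | succ l ih =>
    intro E _ L hL h
    classical
    cases L with
    | nil => exact absurd rfl h
    | cons a L' =>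
      by_cases hx : ∀ y ∈ (a :: L').map Prod.fst, y = a.1
      · obtain ⟨z, hz⟩ := mk_single _ hx
        rw [hz] at h ⊢
        apply good_gen hn
        rintro rfl
        simp at h
      · push Not at hx
        obtain ⟨y, hy, hne⟩ := hx
        obtain ⟨d, hd, i, hi, hpos⟩ := exists_weight (a :: L') hne.symm (by simp) hy
        exact good_step hn _ h d hd i hi hpos (fun E' _ L' hlt h' => ih E' L' (by omega) h')

theorem good_free {n : ℕ} (hn : 1 < n) [Finite E] (R : FreeGroup E) (hR : R ≠ 1) : Good (FreeGroup E) R n := by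
  classical
  rw [← FreeGroup.mk_toWord (x := R)] at hR ⊢
  exact good_main hn _ E _ le_rfl hR

end Main



section FinQuot

theorem finite_range_rep {p : ℕ} [Fact p.Prime] {E : Type} [Finite E]
    (r : FreeGroup E →* Matrix.SpecialLinearGroup (Fin 2) (AlgebraicClosure (ZMod p))) : Finite r.range := by
  let T : Set (AlgebraicClosure (ZMod p)) :=
    Set.range (fun q : E × Fin 2 × Fin 2 => (r (FreeGroup.of q.1)).1 q.2.1 q.2.2)
  have hT : T.Finite := Set.finite_range _
  let L := IntermediateField.adjoin (ZMod p) T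
  have : Finite T := hT
  have hfd : FiniteDimensional (ZMod p) L :=
    IntermediateField.finiteDimensional_adjoin (fun x _ => Algebra.IsIntegral.isIntegral x)
  have hL : Finite L := Module.finite_of_finite (ZMod p)
  let f := Matrix.SpecialLinearGroup.map (n := Fin 2) (algebraMap L (AlgebraicClosure (ZMod p)))
  have hf : Finite f.range := by
    have : Finite (Matrix.SpecialLinearGroup (Fin 2) L) := Subtype.finite
    exact Finite.of_surjective f.rangeRestrict f.rangeRestrict_surjective
  have hle : r.range ≤ f.range := by
    rintro _ ⟨g, rfl⟩
    induction g using FreeGroup.induction_on with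
    | C1 => rw [map_one]; exact one_mem _
    | of x =>
      have hmem : ∀ a b, (r (FreeGroup.of x)).1 a b ∈ L :=
        fun a b => IntermediateField.subset_adjoin _ _ ⟨(x, a, b), rfl⟩
      let X : Matrix (Fin 2) (Fin 2) L := fun a b => ⟨_, hmem a b⟩
      have hX : X.det = 1 := by
        apply (algebraMap L (AlgebraicClosure (ZMod p))).injective
        rw [map_one, RingHom.map_det]
        exact (r (FreeGroup.of x)).2
      exact ⟨⟨X, hX⟩, by ext a b; rfl⟩
    | inv_of x h => rw [map_inv]; exact inv_mem h
    | mul x y hx hy => rw [map_mul]; exact mul_mem hx hy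
  exact Finite.of_injective _ (Subgroup.inclusion_injective hle)

theorem trace_conj {K : Type*} [Field K] (T M : Matrix.SpecialLinearGroup (Fin 2) K) :
    Matrix.trace (T * M * T⁻¹).1 = Matrix.trace M.1 := by
  rw [Matrix.SpecialLinearGroup.coe_mul, Matrix.trace_mul_comm, ← Matrix.SpecialLinearGroup.coe_mul]
  simp

theorem noncomm {K : Type*} [Field K] (h2 : (2 : K) ≠ 0) {N : ℕ} (hN : 1 < N) {ζ : K}
    (hζ : IsPrimitiveRoot ζ (2 * N))
    (M T : Matrix.SpecialLinearGroup (Fin 2) K) (ht : Matrix.trace M.1 = ζ + ζ⁻¹) {j : ℕ} (hj : ¬ N ∣ j)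
    (hc : M ^ j * (T * lower 1 * T⁻¹) * (M ^ j)⁻¹ * (T * lower 1 * T⁻¹)⁻¹ ∈
      Subgroup.center (Matrix.SpecialLinearGroup (Fin 2) K)) : False := by
  have h0 : ζ ≠ 0 := hζ.ne_zero (by omega)
  have h1 : ζ * ζ⁻¹ = 1 := mul_inv_cancel₀ h0
  set V := T * lower 1 * T⁻¹ with hV
  have htV : Matrix.trace V.1 = 2 := by
    rw [hV, trace_conj]; simp [lower_coe, Matrix.trace_fin_two]; norm_num
  clear_value V
  have hcomm : M ^ j * V = V * M ^ j := by
    obtain ⟨r, -, hr⟩ := Matrix.SpecialLinearGroup.mem_center_iff.mp hc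
    set C := M ^ j * V * (M ^ j)⁻¹ * V⁻¹ with hC
    have e1 : M ^ j * V * (M ^ j)⁻¹ = C * V := by rw [hC]; group
    have e2 : r = 1 := by
      have := trace_conj (M ^ j) V
      rw [e1, Matrix.SpecialLinearGroup.coe_mul, ← hr, htV] at this
      simp only [Matrix.scalar_apply, ← Matrix.smul_eq_diagonal_mul, Matrix.trace_smul, htV] at this
      have h3 : (2 : K) * 1 = 2 * r := by
        rw [mul_one]
        simpa [mul_comm] using this.symm
      exact (mul_left_cancel₀ h2 h3).symm
    have e3 : C = 1 := by
      apply Subtype.ext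
      rw [← hr, e2]; simp
    rw [e3, one_mul] at e1
    exact mul_inv_eq_iff_eq_mul.mp e1
  obtain ⟨i, rfl⟩ : ∃ i, j = i + 1 := ⟨j - 1, by
    have : j ≠ 0 := by rintro rfl; simp at hj
    omega⟩
  have hs := prim_sq_ne (by omega) hζ hj
  have hcomm2 : M.1 * V.1 = V.1 * M.1 := by
    have k1 := sl_pow M h1 ht i
    have k2 : (ζ - ζ⁻¹) • (M.1 ^ (i + 1) * V.1) = (ζ - ζ⁻¹) • (V.1 * M.1 ^ (i + 1)) := by
      congr 1
      have := congrArg Subtype.val hcomm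
      simpa using this
    rw [← Matrix.smul_mul, ← Matrix.mul_smul, k1, Matrix.sub_mul, Matrix.mul_sub, Matrix.smul_mul, Matrix.mul_smul,
      Matrix.smul_mul, Matrix.mul_smul, one_mul, mul_one, sub_left_inj] at k2
    exact smul_right_injective _ hs k2
  have hcomm3 : M * V = V * M := Subtype.ext (by simpa using hcomm2)
  set M' := T⁻¹ * M * T with hM'
  have ht' : Matrix.trace M'.1 = ζ + ζ⁻¹ := by
    rw [← ht, hM']
    conv_lhs => rw [← inv_inv T, inv_inv T⁻¹]
    simpa using trace_conj T⁻¹ M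
  have hcomm4 : M' * lower 1 = lower 1 * M' := by
    have : T⁻¹ * (M * V) * T = T⁻¹ * (V * M) * T := by rw [hcomm3]
    simpa [hV, hM', mul_assoc] using this
  have hmat := congrArg Subtype.val hcomm4
  have a01 := congrFun (congrFun hmat 0) 0
  have a10 := congrFun (congrFun hmat 1) 0
  simp [Matrix.mul_apply, Fin.sum_univ_two, lower_coe] at a01 a10
  have hdet := M'.2
  rw [Matrix.det_fin_two, a01] at hdet
  rw [Matrix.trace_fin_two] at ht'
  have haa : M'.1 0 0 = M'.1 1 1 := by
    first | exact a10 | exact a10.symm | linear_combination a10 | linear_combination -a10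
  rw [← haa] at hdet ht'
  have hz : (ζ - M'.1 0 0) ^ 2 = 0 := by
    linear_combination hdet - ζ * ht' - h1
  have hz2 : ζ = M'.1 0 0 := sub_eq_zero.mp (pow_eq_zero_iff (two_ne_zero) |>.mp hz)
  have : ζ ^ 2 = 1 := by rw [hz2]; linear_combination hdet
  have := Nat.le_of_dvd (by norm_num) (hζ.dvd_of_pow_eq_one _ this)
  omega

/-- diagonal matrix -/
def dg (K : Type*) [Field K] (a : Kˣ) : Matrix.SpecialLinearGroup (Fin 2) K :=
  ⟨!![(a : K), 0; 0, ((a⁻¹ : Kˣ) : K)], by simp [Matrix.det_fin_two]⟩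

theorem dg_coe (K : Type*) [Field K] (a : Kˣ) :
    (dg K a).1 = !![(a : K), 0; 0, ((a⁻¹ : Kˣ) : K)] := rfl

/-- diagonal matrices -/
def dgHom (K : Type*) [Field K] : Kˣ →* Matrix.SpecialLinearGroup (Fin 2) K :=
  MonoidHom.mk' (dg K) (by
    intro a b
    apply Subtype.ext
    rw [Matrix.SpecialLinearGroup.coe_mul, dg_coe, dg_coe, dg_coe]
    simp [mul_comm])

theorem dgHom_trace (K : Type*) [Field K] (a : Kˣ) :
    Matrix.trace (dgHom K a).1 = (a : K) + ((a⁻¹ : Kˣ) : K) := by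
  change Matrix.trace (dg K a).1 = _
  rw [dg_coe, Matrix.trace_fin_two]
  simp

theorem exists_rep {E : Type} [Finite E] [Nontrivial E] (S : FreeGroup E) (hS : S ≠ 1) {N : ℕ} (hN : 1 < N) :
    ∃ (p : ℕ) (_ : Fact p.Prime) (ζ : AlgebraicClosure (ZMod p))
      (r : FreeGroup E →* Matrix.SpecialLinearGroup (Fin 2) (AlgebraicClosure (ZMod p))) (e : E)
      (T : Matrix.SpecialLinearGroup (Fin 2) (AlgebraicClosure (ZMod p))), 2 < p ∧
      IsPrimitiveRoot ζ (2 * N) ∧ Matrix.trace (r S).1 = ζ + ζ⁻¹ ∧ r (FreeGroup.of e) = T * lower 1 * T⁻¹ := by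
  classical
  have hprim : ∀ p : ℕ, p.Prime → 2 * N < p → ∀ (_ : Fact p.Prime),
      ∃ ζ : AlgebraicClosure (ZMod p), IsPrimitiveRoot ζ (2 * N) := by
    intro p hp hlt _
    haveI : NeZero N := ⟨by omega⟩
    haveI : NeZero ((2 * N : ℕ) : AlgebraicClosure (ZMod p)) := ⟨by
      rw [Ne, CharP.cast_eq_zero_iff (AlgebraicClosure (ZMod p)) p]
      intro h
      have := Nat.le_of_dvd (by omega) h
      omega⟩
    exact HasEnoughRootsOfUnity.exists_primitiveRoot (AlgebraicClosure (ZMod p)) (2 * N)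
  set g := freeGroupEquivCoprodI S with hg
  have hg1 : g ≠ 1 := (map_ne_one_iff _ freeGroupEquivCoprodI.injective).mpr hS
  rcases coprodI_cyc g with h1 | ⟨u, i, m, h⟩ | ⟨u, i, j, hij, W, h⟩
  · exact absurd h1 hg1
  · obtain ⟨p, hlt, hp⟩ := Nat.exists_infinite_primes (2 * N + 1)
    haveI : Fact p.Prime := ⟨hp⟩
    obtain ⟨ζ, hζ⟩ := hprim p hp (by omega) ⟨hp⟩
    obtain ⟨z, rfl⟩ := freeGroupUnit_eq m
    obtain ⟨e, he⟩ := exists_ne i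
    have hz : z ≠ 0 := by
      rintro rfl
      apply hg1; rw [h]; simp
    obtain ⟨η, hη⟩ := IsAlgClosed.exists_pow_nat_eq ζ (n := z.natAbs) (by omega)
    have hη0 : η ≠ 0 := by
      rintro rfl
      rw [zero_pow (by omega)] at hη
      exact hζ.ne_zero (by omega) hη.symm
    let r : FreeGroup E →* Matrix.SpecialLinearGroup (Fin 2) (AlgebraicClosure (ZMod p)) :=
      FreeGroup.lift fun x => if x = i then dgHom _ (Units.mk0 η hη0) else lower 1
    refine ⟨p, ⟨hp⟩, ζ, r, e, 1, by omega, hζ, ?_, by simp [r, he]⟩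
    have hS' : S = freeGroupEquivCoprodI.symm u * FreeGroup.of i ^ z * (freeGroupEquivCoprodI.symm u)⁻¹ := by
      apply freeGroupEquivCoprodI.injective
      have hof : freeGroupEquivCoprodI (FreeGroup.of i) =
          Monoid.CoprodI.of (M := fun _ : E => FreeGroup Unit) (i := i) (FreeGroup.of ()) := by
        simp [freeGroupEquivCoprodI]
      rw [← hg, h, map_mul, map_mul, map_inv, map_zpow, MulEquiv.apply_symm_apply, map_zpow, hof]
    rw [hS', map_mul, map_mul, map_inv, trace_conj, map_zpow]
    simp only [r, FreeGroup.lift_apply_of, if_true]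
    rw [← map_zpow, dgHom_trace]
    rcases Int.natAbs_eq z with hz' | hz'
    · rw [hz', zpow_natCast]
      simp [hη]
    · rw [hz', zpow_neg, zpow_natCast]
      simp [hη, add_comm]
  · obtain ⟨f, hf⟩ := Countable.exists_injective_nat E
    have hbdd : ∃ b : ℕ, (∀ e, f e < b) ∧ ∀ s ∈ W.toList, (FreeGroup.freeGroupUnitEquivInt s.2).natAbs < b := by
      obtain ⟨b1, hb1⟩ := (Set.finite_range f).bddAbove
      refine ⟨b1 + (W.toList.map fun s => (FreeGroup.freeGroupUnitEquivInt s.2).natAbs).sum + 1, ?_, ?_⟩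
      · intro e
        have := hb1 ⟨e, rfl⟩
        omega
      · intro s hs
        have := List.single_le_sum (l := W.toList.map fun s => (FreeGroup.freeGroupUnitEquivInt s.2).natAbs)
          (by simp) _ (List.mem_map_of_mem hs)
        omega
    obtain ⟨b, hb1, hb2⟩ := hbdd
    obtain ⟨p, hlt, hp⟩ := Nat.exists_infinite_primes (2 * N + 1 + b)
    haveI : Fact p.Prime := ⟨hp⟩
    obtain ⟨ζ, hζ⟩ := hprim p hp (by omega) ⟨hp⟩
    let K := AlgebraicClosure (ZMod p)
    obtain ⟨σ, hσ1, hσ2⟩ := exists_rep_trace (M := fun _ : E => FreeGroup Unit) (fun _ => uniRep K)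
      (fun e : E => (f e : K)) (by
        intro x y hxy
        apply hf
        have := (CharP.natCast_eq_natCast K p).mp hxy
        exact Nat.ModEq.eq_of_lt_of_lt this (by have := hb1 x; omega) (by have := hb1 y; omega)) hij W (by
        rintro ⟨s, m⟩ hs
        have hm : m ≠ 1 := W.toWord.ne_one _ hs
        have hlt2 := hb2 _ hs
        obtain ⟨z, hz⟩ : ∃ z, z = FreeGroup.freeGroupUnitEquivInt m := ⟨_, rfl⟩
        have hmz : m = FreeGroup.of () ^ z := by
          rw [hz]; exact (FreeGroup.freeGroupUnitEquivInt.left_inv m).symm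
        simp only at hlt2
        rw [← hz] at hlt2
        simp only [hmz, uniRep_c]
        rw [Ne, CharP.intCast_eq_zero_iff K p]
        intro hd
        have hz0 : z ≠ 0 := by
          rintro rfl
          apply hm; rw [hmz, zpow_zero]
        have := Int.natAbs_dvd_natAbs.mpr hd
        have := Nat.le_of_dvd (by omega) this
        simp at this
        omega) (ζ + ζ⁻¹)
    obtain ⟨e, -⟩ := exists_ne i
    obtain ⟨x, hx⟩ := hσ2 e
    refine ⟨p, ⟨hp⟩, ζ, σ.comp freeGroupEquivCoprodI.toMonoidHom, e, shear x, by omega, hζ, ?_, ?_⟩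
    · change Matrix.trace (σ (freeGroupEquivCoprodI S)).1 = _
      rw [← hg, h, map_mul, map_mul, map_inv, trace_conj, hσ1]
    · have := hx (FreeGroup.of ())
      have h2 : uniRep K (FreeGroup.of ()) = lower 1 := by simp [uniRep]
      rw [h2] at this
      rw [← this]
      simp [freeGroupEquivCoprodI]

theorem exists_finite_quot {E : Type} [Finite E] [Nontrivial E] (S : FreeGroup E) (hS : S ≠ 1) {N : ℕ}
    (hN : 1 < N) : ∃ (Q : Type) (_ : Group Q) (_ : Finite Q) (q : FreeGroup E →* Q), q (S ^ N) = 1 ∧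
      ∀ j : ℕ, ¬ N ∣ j → ∃ h, q (S ^ j) * q h ≠ q h * q (S ^ j) := by
  obtain ⟨p, hp, ζ, r, e, T, hp2, hζ, ht, he⟩ := exists_rep S hS hN
  let K := AlgebraicClosure (ZMod p)
  let C := Subgroup.center (Matrix.SpecialLinearGroup (Fin 2) K)
  haveI := finite_range_rep r
  let q := ((QuotientGroup.mk' C).comp r).rangeRestrict
  have hfin : Finite ((QuotientGroup.mk' C).comp r).range := by
    refine Finite.of_surjective (fun x : r.range => (⟨QuotientGroup.mk' C x.1, by
      obtain ⟨y, hy⟩ := x.2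
      exact ⟨y, by rw [← hy]; rfl⟩⟩ : ((QuotientGroup.mk' C).comp r).range)) ?_
    rintro ⟨_, y, rfl⟩
    exact ⟨⟨r y, y, rfl⟩, rfl⟩
  refine ⟨_, inferInstance, hfin, q, ?_, ?_⟩
  · apply Subtype.ext
    change QuotientGroup.mk (r (S ^ N)) = (1 : _ ⧸ C)
    rw [QuotientGroup.eq_one_iff, map_pow]
    exact sl_pow_n hN hζ _ ht
  · intro j hj
    refine ⟨FreeGroup.of e, fun h => ?_⟩
    have h2 := congrArg Subtype.val h
    have h3 : (QuotientGroup.mk (r (S ^ j) * r (FreeGroup.of e) * (r (S ^ j))⁻¹ * (r (FreeGroup.of e))⁻¹) : _ ⧸ C) = 1 := by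
      have h4 : (QuotientGroup.mk (r (S ^ j)) : _ ⧸ C) * QuotientGroup.mk (r (FreeGroup.of e)) =
        QuotientGroup.mk (r (FreeGroup.of e)) * QuotientGroup.mk (r (S ^ j)) := h2
      rw [QuotientGroup.mk_mul, QuotientGroup.mk_mul, QuotientGroup.mk_mul, h4]
      simp
    rw [QuotientGroup.eq_one_iff, map_pow, he] at h3
    have h20 : (2 : K) ≠ 0 := by
      have : ((2 : ℕ) : K) ≠ 0 := by
        rw [Ne, CharP.cast_eq_zero_iff K p]
        intro h
        have := Nat.le_of_dvd (by omega) h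
        omega
      exact_mod_cast this
    exact noncomm h20 hN hζ _ _ ht hj h3

end FinQuot

section FinalStep

theorem finiteIndex_of_inv {B X : Type*} [Group B] [Finite X] (H : Subgroup B) (Φ : B → X)
    (h : ∀ a b, Φ a = Φ b → a⁻¹ * b ∈ H) : H.FiniteIndex := by
  have : Finite (B ⧸ H) := by
    refine Finite.of_injective (fun q : B ⧸ H => Φ q.out) ?_
    intro x y hxy
    have := h _ _ hxy
    rw [← QuotientGroup.eq] at this
    simpa using this
  exact Subgroup.finiteIndex_of_finite_quotient

theorem outProj_conj {G : Type} [Group G] (c : G) : outProj G (MulAut.conj c) = 1 :=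
  (QuotientGroup.eq_one_iff (N := Inn G) (MulAut.conj c)).mpr ⟨c, rfl⟩

theorem splits_core {G : Type} [Group G] {sb s : G} (hs : s ≠ 1) (hsf : IsOfFinOrder s)
    (hsb : IsOfFinOrder sb) (hT : TorsGood G sb) {Q : Type} [Group Q] [Finite (G →* Q)] (π : G →* Q)
    (hπ : ∀ g : G, IsOfFinOrder g → g ≠ 1 → ∃ h, π g * π h ≠ π h * π g) :
    SplitsVirtually (outProj G) := by
  let A' : Subgroup (MulAut G) :=
    { carrier := {α | α s = s ∧ ∀ (ψ : G →* Q) (x : G), ψ (α x) = ψ x}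
      one_mem' := ⟨rfl, fun _ _ => rfl⟩
      mul_mem' := by
        rintro a b ⟨ha, ha'⟩ ⟨hb, hb'⟩
        refine ⟨?_, fun ψ x => ?_⟩
        · rw [MulAut.mul_apply, hb, ha]
        · rw [MulAut.mul_apply, ha', hb']
      inv_mem' := by
        rintro a ⟨ha, ha'⟩
        refine ⟨?_, fun ψ x => ?_⟩
        · conv_lhs => rw [← ha]
          exact MulAut.inv_apply_self _ a s
        · rw [← ha' ψ (a⁻¹ x), MulAut.apply_inv_self] }
  have hsurj : Function.Surjective (outProj G) := QuotientGroup.mk'_surjective _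
  have ht : ∀ b : Out G, ∃ α : MulAut G, outProj G α = b ∧ α s ∈ Subgroup.zpowers sb := by
    intro b
    obtain ⟨α, rfl⟩ := hsurj b
    have hf : IsOfFinOrder (α s) := by
      have := hsf
      rw [isOfFinOrder_iff_pow_eq_one] at this ⊢
      obtain ⟨m, hm, h⟩ := this
      exact ⟨m, hm, by rw [← map_pow, h, map_one]⟩
    obtain ⟨u, j, h⟩ := (hT _ hf).1
    refine ⟨MulAut.conj u⁻¹ * α, ?_, ?_⟩
    · rw [map_mul, outProj_conj, one_mul]
    · rw [MulAut.mul_apply, h, MulAut.conj_apply]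
      exact ⟨j, by group⟩
  choose t ht1 ht2 using ht
  have hfz : Finite (Subgroup.zpowers sb) := by
    rwa [← finite_zpowers] at hsb
  have hfi : (A'.map (outProj G)).FiniteIndex := by
    apply finiteIndex_of_inv (A'.map (outProj G))
      (fun b : Out G => ((⟨t b s, ht2 b⟩ : Subgroup.zpowers sb),
        fun ψ : G →* Q => ψ.comp (t b).toMonoidHom))
    intro a b hab
    simp only [Prod.mk.injEq, Subtype.mk.injEq] at hab
    obtain ⟨h1, h2⟩ := hab
    refine ⟨(t a)⁻¹ * t b, ⟨?_, fun ψ x => ?_⟩, ?_⟩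
    · rw [MulAut.mul_apply, ← h1, MulAut.inv_apply_self]
    · have h3 := DFunLike.congr_fun (congrFun h2 (ψ.comp ((t a)⁻¹ : MulAut G).toMonoidHom)) x
      have h4 : ψ ((t a)⁻¹ (t a x)) = ψ ((t a)⁻¹ (t b x)) := h3
      rw [MulAut.inv_apply_self] at h4
      exact h4.symm
    · rw [map_mul, map_inv, ht1, ht1]
  have hker : ∀ α ∈ A', outProj G α = 1 → α = 1 := by
    intro α hα h1
    obtain ⟨c, rfl⟩ := (QuotientGroup.eq_one_iff (N := Inn G) α).mp h1
    obtain ⟨h2, h3⟩ := hα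
    have hcs : c * s = s * c := by
      rw [MulAut.conj_apply] at h2
      exact mul_inv_eq_iff_eq_mul.mp h2
    have hfin := (hT s hsf).2 hs
    have hcf : IsOfFinOrder c := by
      rw [← finite_powers]
      refine hfin.subset ?_
      rintro _ ⟨m, rfl⟩
      exact (show Commute c s from hcs).pow_left m
    have hc1 : c = 1 := by
      by_contra hne
      obtain ⟨h, hh⟩ := hπ c hcf hne
      apply hh
      have := h3 π h
      rw [MulAut.conj_apply, map_mul, map_mul, map_inv] at this
      exact mul_inv_eq_iff_eq_mul.mp this
    rw [hc1, map_one]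
  let f' : A' →* Out G := (outProj G).comp A'.subtype
  have hinj : Function.Injective f' := by
    rw [injective_iff_map_eq_one]
    intro a ha
    exact Subtype.ext (hker a.1 a.2 ha)
  have hrange : f'.range = A'.map (outProj G) := by
    rw [MonoidHom.range_comp, Subgroup.range_subtype]
  refine ⟨f'.range, hrange ▸ hfi, A'.subtype.comp (MonoidHom.ofInjective hinj).symm.toMonoidHom, ?_⟩
  intro x
  have := congrArg Subtype.val ((MonoidHom.ofInjective hinj).apply_symm_apply x)
  exact this

theorem splits_finite {G : Type} [Group G] [Finite G] : SplitsVirtually (outProj G) := by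
  have : Finite (MulAut G) := Finite.of_injective (fun a : MulAut G => (a : G → G)) DFunLike.coe_injective
  have : Finite (Out G) := Finite.of_surjective (outProj G) (QuotientGroup.mk'_surjective _)
  refine ⟨⊥, inferInstance, 1, ?_⟩
  rintro ⟨x, hx⟩
  rw [Subgroup.mem_bot] at hx
  simp [hx]

theorem zpow_eq_natpow {G : Type*} [Group G] {x : G} {M : ℕ} (h : x ^ M = 1) (hM : M ≠ 0) (j : ℤ) :
    ∃ i : ℕ, x ^ j = x ^ i := by
  have h0 : (0 : ℤ) ≤ j % (M : ℤ) := Int.emod_nonneg _ (by omega)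
  refine ⟨(j % (M : ℤ)).toNat, ?_⟩
  rw [← zpow_natCast, Int.toNat_of_nonneg h0]
  conv_lhs => rw [← Int.emod_add_mul_ediv j (M : ℤ), zpow_add, zpow_mul, zpow_natCast, h]
  simp

theorem final_two {E : Type} [Finite E] [Nontrivial E] {n : ℕ} (R : FreeGroup E) (hR : R ≠ 1)
    (hn : 1 < n) :
    SplitsVirtually (outProj (FreeGroup E ⧸ Subgroup.normalClosure {R ^ n})) := by
  obtain ⟨S, m, hRS, hRN, hT⟩ := good_free hn R hR
  have hm : m ≠ 0 := by
    rintro rfl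
    exact hR (by rw [hRS, pow_zero])
  have hS : S ≠ 1 := by
    rintro rfl
    exact hR (by rw [hRS, one_pow])
  have hN : 1 < m * n := by
    have : 1 * n ≤ m * n := Nat.mul_le_mul_right n (by omega)
    omega
  obtain ⟨Q, _, _, q, hq1, hq2⟩ := exists_finite_quot S hS hN
  have hqR : q (R ^ n) = 1 := by rw [hRS, ← pow_mul]; exact hq1
  let Nn := Subgroup.normalClosure {R ^ n}
  have hle : Nn ≤ q.ker := Subgroup.normalClosure_le_normal (by
    rintro _ rfl
    exact hqR)
  let π : FreeGroup E ⧸ Nn →* Q := QuotientGroup.lift Nn q hle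
  have hmkR : (QuotientGroup.mk (R ^ n) : FreeGroup E ⧸ Nn) = 1 :=
    (QuotientGroup.eq_one_iff _).mpr (Subgroup.subset_normalClosure rfl)
  have hsbN : (QuotientGroup.mk S : FreeGroup E ⧸ Nn) ^ (m * n) = 1 := by
    rw [← QuotientGroup.mk_pow, pow_mul, ← hRS]; exact hmkR
  have hHom : Finite ((FreeGroup E ⧸ Nn) →* Q) := by
    refine Finite.of_injective
      (fun (ψ : (FreeGroup E ⧸ Nn) →* Q) (e : E) => ψ (QuotientGroup.mk (FreeGroup.of e))) ?_
    intro ψ φ h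
    apply QuotientGroup.monoidHom_ext
    apply FreeGroup.ext_hom
    intro e
    exact congrFun h e
  refine splits_core (sb := QuotientGroup.mk S) (s := QuotientGroup.mk R) ?_ ?_ ?_ hT π ?_
  · rwa [Ne, QuotientGroup.eq_one_iff]
  · rw [isOfFinOrder_iff_pow_eq_one]
    exact ⟨n, by omega, by rw [← QuotientGroup.mk_pow]; exact hmkR⟩
  · rw [isOfFinOrder_iff_pow_eq_one]
    exact ⟨m * n, by omega, hsbN⟩
  · intro g hg hg1
    obtain ⟨u, j, rfl⟩ := (hT g hg).1
    have hj : ∃ i : ℕ, (QuotientGroup.mk S : FreeGroup E ⧸ Nn) ^ j = QuotientGroup.mk S ^ i := by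
      exact zpow_eq_natpow hsbN (by omega) j
    obtain ⟨i, hi⟩ := hj
    have hdvd : ¬ m * n ∣ i := by
      rintro ⟨c, rfl⟩
      apply hg1
      rw [hi, pow_mul, hsbN]; simp
    obtain ⟨h, hh⟩ := hq2 i hdvd
    refine ⟨u * QuotientGroup.mk h * u⁻¹, fun hc => hh ?_⟩
    rw [hi] at hc
    simp only [map_mul, map_inv, map_pow] at hc
    have hc' : π u * (π (QuotientGroup.mk S) ^ i * π (QuotientGroup.mk h)) * (π u)⁻¹ =
        π u * (π (QuotientGroup.mk h) * π (QuotientGroup.mk S) ^ i) * (π u)⁻¹ := by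
      simpa [mul_assoc] using hc
    have := mul_left_cancel (mul_right_cancel hc')
    rw [map_pow]
    exact this

theorem final_one {E : Type} [Subsingleton E] {n : ℕ} (R : FreeGroup E) (hR : R ≠ 1) (hn : 1 < n) :
    Finite (FreeGroup E ⧸ Subgroup.normalClosure {R ^ n}) := by
  have hne : Nonempty E := by
    by_contra h
    rw [not_nonempty_iff] at h
    exact hR (Subsingleton.elim _ _)
  obtain ⟨e⟩ := hne
  have hz : ∀ x : FreeGroup E, ∃ z : ℤ, x = FreeGroup.of e ^ z := by
    intro x
    induction x using FreeGroup.induction_on with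
    | C1 => exact ⟨0, by simp⟩
    | of x => exact ⟨1, by rw [zpow_one, Subsingleton.elim x e]⟩
    | inv_of x h => exact ⟨-1, by rw [zpow_neg_one, Subsingleton.elim x e]⟩
    | mul x y hx hy =>
      obtain ⟨a, rfl⟩ := hx
      obtain ⟨b, rfl⟩ := hy
      exact ⟨a + b, (zpow_add _ _ _).symm⟩
  obtain ⟨z, hz1⟩ := hz R
  have hz0 : z ≠ 0 := by
    rintro rfl
    exact hR (by rw [hz1, zpow_zero])
  have hfo : IsOfFinOrder (QuotientGroup.mk (FreeGroup.of e) :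
      FreeGroup E ⧸ Subgroup.normalClosure {R ^ n}) := by
    rw [isOfFinOrder_iff_zpow_eq_one]
    refine ⟨z * n, mul_ne_zero hz0 (by omega), ?_⟩
    rw [zpow_mul, ← QuotientGroup.mk_zpow, ← hz1, zpow_natCast, ← QuotientGroup.mk_pow,
      QuotientGroup.eq_one_iff]
    exact Subgroup.subset_normalClosure rfl
  have hf := finite_zpowers.mpr hfo
  have htop : (Subgroup.zpowers (QuotientGroup.mk (FreeGroup.of e) :
      FreeGroup E ⧸ Subgroup.normalClosure {R ^ n}) : Set (FreeGroup E ⧸ Subgroup.normalClosure {R ^ n})) = Set.univ := by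
    rw [Set.eq_univ_iff_forall]
    intro x
    obtain ⟨y, rfl⟩ := QuotientGroup.mk_surjective x
    obtain ⟨a, rfl⟩ := hz y
    exact ⟨a, (QuotientGroup.mk_zpow _ _ _).symm⟩
  rw [htop] at hf
  exact Set.finite_univ_iff.mp hf

end FinalStep

/-- For a one-relator group with torsion
`G = ⟨x₁, …, x_k ∣ Rⁿ⟩` (with `R ≠ 1` and `n > 1`), the map `Aut(G) → Out(G)` splits
virtually. -/
theorem statement18 (k n : ℕ) (R : FreeGroup (Fin k)) (hR : R ≠ 1) (hn : 1 < n) :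
    SplitsVirtually (outProj (FreeGroup (Fin k) ⧸ Subgroup.normalClosure {R ^ n})) := by
  rcases subsingleton_or_nontrivial (Fin k) with h | h
  · have := final_one R hR hn
    exact splits_finite
  · exact final_two R hR hn
end
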